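/- arXiv:2410.04767 — 7 statements merged into one kernel-verified Lean document; each statement's English description precedes it below -/
import Mathlib

section
/- For every real number q with 0 < q < 1, ∑_{k∈ℤ} (-1)^k q^{(2k² + k)/3} = ∏_{n=1}^∞ (1 - q^{4n/3})(1 - q^{(4n-1)/3})(1 - q^{(4n-3)/3}). -/
/-- The finite product `(Q; Q)_n`. -/
noncomputable def pochQ (Q : ℝ) (n : ℕ) : ℝ := ∏ i ∈ Finset.range n, (1 - Q ^ (i + 1))

/-- The reciprocal of `(Q; Q)_m`, extended by zero to negative `m`. -/
noncomputable def invQ (Q : ℝ) : ℤ → ℝ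
  | Int.ofNat n => (pochQ Q n)⁻¹
  | Int.negSucc _ => 0

lemma pochQ_pos {Q : ℝ} (h0 : 0 < Q) (h1 : Q < 1) (n : ℕ) : 0 < pochQ Q n :=
  Finset.prod_pos fun i _ => by
    have := pow_lt_one₀ h0.le h1 (Nat.succ_ne_zero i)
    simpa using this

lemma pochQ_le_one {Q : ℝ} (h0 : 0 < Q) (h1 : Q < 1) (n : ℕ) : pochQ Q n ≤ 1 :=
  Finset.prod_le_one
    (fun i _ => by
      have := pow_lt_one₀ h0.le h1 (Nat.succ_ne_zero i)
      simpa using this.le)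
    (fun i _ => by
      have := pow_pos h0 (i + 1)
      linarith)

lemma pochQ_succ (Q : ℝ) (n : ℕ) : pochQ Q (n + 1) = pochQ Q n * (1 - Q ^ (n + 1)) := by
  simp [pochQ, Finset.prod_range_succ]

lemma invQ_sub_one {Q : ℝ} (h0 : 0 < Q) (h1 : Q < 1) (m : ℤ) :
    invQ Q (m - 1) = (1 - Q ^ m) * invQ Q m := by
  rcases m with (_ | n) | n
  · have : (Int.ofNat 0 - 1 : ℤ) = Int.negSucc 0 := rfl
    rw [this]
    simp [invQ]
  · have : (Int.ofNat (n + 1) - 1 : ℤ) = Int.ofNat n := by simp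
    rw [this]
    simp only [invQ, pochQ_succ]
    have h2 : (1 - Q ^ (n + 1)) ≠ 0 := by
      have := pow_lt_one₀ h0.le h1 (Nat.succ_ne_zero n)
      simp only [Nat.succ_eq_add_one] at this
      linarith
    have h3 := (pochQ_pos h0 h1 n).ne'
    have h4 : Q ^ (Int.ofNat (n + 1)) = Q ^ (n + 1) := zpow_natCast Q (n + 1)
    rw [h4]
    field_simp
  · have : (Int.negSucc n - 1 : ℤ) = Int.negSucc (n + 1) := by omega
    rw [this]
    simp [invQ]

lemma pochQ_tendsto {Q : ℝ} (h0 : 0 < Q) (h1 : Q < 1) :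
    ∃ P : ℝ, P ≠ 0 ∧ Filter.Tendsto (pochQ Q) Filter.atTop (nhds P) := by
  have hs : Summable fun i : ℕ => ‖-Q ^ (i + 1)‖ := by
    simp only [norm_neg, norm_pow, Real.norm_of_nonneg h0.le]
    exact (summable_nat_add_iff 1).2 (summable_geometric_of_lt_one h0.le h1)
  refine ⟨∏' i : ℕ, (1 + -Q ^ (i + 1)), ?_, ?_⟩
  · refine tprod_one_add_ne_zero_of_summable (fun i => ?_) hs
    have := pow_lt_one₀ h0.le h1 (Nat.succ_ne_zero i)
    simp only [Nat.succ_eq_add_one] at this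
    linarith
  · have := (multipliable_one_add_of_summable hs).hasProd.tendsto_prod_nat
    exact this.congr fun n => (by simp only [pochQ, sub_eq_add_neg] : _ = pochQ Q n)

lemma invQ_tendsto {Q P : ℝ} (hP : P ≠ 0)
    (hT : Filter.Tendsto (pochQ Q) Filter.atTop (nhds P)) :
    Filter.Tendsto (invQ Q) Filter.atTop (nhds P⁻¹) := by
  have ht : Filter.Tendsto Int.toNat Filter.atTop Filter.atTop := by
    refine Filter.tendsto_atTop.2 fun b => ?_
    filter_upwards [Filter.eventually_ge_atTop (b : ℤ)] with m hm
    omega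
  have h := (hT.inv₀ hP).comp ht
  refine h.congr' ?_
  filter_upwards [Filter.eventually_ge_atTop (0 : ℤ)] with m hm
  lift m to ℕ using hm
  rfl

lemma invQ_bound {Q : ℝ} (h0 : 0 < Q) (h1 : Q < 1) :
    ∃ C : ℝ, ∀ m, 0 ≤ invQ Q m ∧ invQ Q m ≤ C := by
  obtain ⟨P, hP, hT⟩ := pochQ_tendsto h0 h1
  obtain ⟨C, hC⟩ := (hT.inv₀ hP).bddAbove_range
  have hC' : ∀ n, (pochQ Q n)⁻¹ ≤ C := fun n => hC ⟨n, rfl⟩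
  refine ⟨C, fun m => ?_⟩
  rcases m with n | n
  · exact ⟨(inv_pos.2 (pochQ_pos h0 h1 n)).le, hC' n⟩
  · exact ⟨le_rfl, (inv_pos.2 (pochQ_pos h0 h1 0)).le.trans (hC' 0)⟩

/-- Summand of the theta series. -/
noncomputable def thetaTerm (x : ℝ) (k : ℤ) : ℝ := (-1 : ℝ) ^ k * x ^ (2 * k ^ 2 + k)

lemma hasSum_change {f g : ℤ → ℝ} {a b : ℝ} (h : HasSum f a) (hf : ∀ k, g k = f k)
    (hab : b = a) : HasSum g b := by
  rw [funext hf, hab]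
  exact h

/-- Finite form of the triple product. -/
lemma finite_triple {x : ℝ} (h0 : 0 < x) (h1 : x < 1) (N : ℕ) :
    HasSum (fun k : ℤ => thetaTerm x k *
        (pochQ (x ^ 4) (2 * N) * (invQ (x ^ 4) (N - k) * invQ (x ^ 4) (N + k))))
      (∏ n ∈ Finset.range N, ((1 - x ^ (4 * n + 3)) * (1 - x ^ (4 * n + 1)))) := by
  have hQ0 : 0 < x ^ 4 := by positivity
  have hQ1 : x ^ 4 < 1 := pow_lt_one₀ h0.le h1 (by norm_num)
  have hx : x ≠ 0 := h0.ne'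
  induction N with
  | zero =>
    have := hasSum_single (f := fun k : ℤ => thetaTerm x k *
        (pochQ (x ^ 4) (2 * 0) * (invQ (x ^ 4) ((0 : ℕ) - k) * invQ (x ^ 4) ((0 : ℕ) + k)))) 0
      (by
        intro k hk
        rcases k with (_ | n) | n
        · exact absurd rfl hk
        · have : ((0 : ℕ) - Int.ofNat (n + 1) : ℤ) = Int.negSucc n := by simp; omega
          simp only [this]
          simp [invQ]
        · have : ((0 : ℕ) + Int.negSucc n : ℤ) = Int.negSucc n := by simp
          simp only [this]
          simp [invQ])
    have e : invQ (x ^ 4) 0 = 1 := by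
      change (pochQ (x ^ 4) 0)⁻¹ = 1
      simp [pochQ]
    simpa [thetaTerm, e, pochQ] using this
  | succ N ih =>
    have hp := (Equiv.addRight (1 : ℤ)).hasSum_iff.2 ih
    have hm := (Equiv.subRight (1 : ℤ)).hasSum_iff.2 ih
    have key := ((ih.mul_left (1 + x ^ (8 * N + 4))).sub (hm.mul_left (x ^ (4 * N + 3)))).sub
      (hp.mul_left (x ^ (4 * N + 1)))
    rw [Finset.prod_range_succ]
    refine hasSum_change key ?_ ?_
    · intro k
      simp only [Function.comp, Equiv.coe_addRight, Equiv.subRight_apply]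
      set a := invQ (x ^ 4) ((N : ℤ) + 1 - k) with ha
      set b := invQ (x ^ 4) ((N : ℤ) + 1 + k) with hb
      have e1 : invQ (x ^ 4) ((N : ℤ) - k) = (1 - (x ^ 4) ^ ((N : ℤ) + 1 - k)) * a := by
        rw [ha, ← invQ_sub_one hQ0 hQ1]; congr 1; ring
      have e2 : invQ (x ^ 4) ((N : ℤ) + k) = (1 - (x ^ 4) ^ ((N : ℤ) + 1 + k)) * b := by
        rw [hb, ← invQ_sub_one hQ0 hQ1]; congr 1; ring
      have e3 : invQ (x ^ 4) ((N : ℤ) - (k + 1)) = (1 - (x ^ 4) ^ ((N : ℤ) - k)) *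
          ((1 - (x ^ 4) ^ ((N : ℤ) + 1 - k)) * a) := by
        rw [← e1, ← invQ_sub_one hQ0 hQ1]; congr 1; ring
      have e4 : invQ (x ^ 4) ((N : ℤ) + (k - 1)) = (1 - (x ^ 4) ^ ((N : ℤ) + k)) *
          ((1 - (x ^ 4) ^ ((N : ℤ) + 1 + k)) * b) := by
        rw [← e2, ← invQ_sub_one hQ0 hQ1]; congr 1; ring
      have e5 : invQ (x ^ 4) ((N : ℤ) - (k - 1)) = a := by rw [ha]; congr 1; ring
      have e6 : invQ (x ^ 4) ((N : ℤ) + (k + 1)) = b := by rw [hb]; congr 1; ring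
      have e7 : invQ (x ^ 4) (((N + 1 : ℕ) : ℤ) - k) = a := by rw [ha]; congr 1
      have e8 : invQ (x ^ 4) (((N + 1 : ℕ) : ℤ) + k) = b := by rw [hb]; congr 1
      have hz : x ^ 4 ≠ 0 := hQ0.ne'
      have t1 : thetaTerm x (k + 1) = - thetaTerm x k * (x ^ 3 * (x ^ 4) ^ k) := by
        have : 2 * (k + 1) ^ 2 + (k + 1) = (2 * k ^ 2 + k) + 3 + 4 * k := by ring
        simp only [thetaTerm, this]
        rw [zpow_add₀ (by norm_num : (-1 : ℝ) ≠ 0), zpow_add₀ hx, zpow_add₀ hx, zpow_mul]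
        norm_cast
        simp; ring
      have t2 : thetaTerm x (k - 1) = - thetaTerm x k * (x * ((x ^ 4) ^ k)⁻¹) := by
        have : 2 * (k - 1) ^ 2 + (k - 1) = (2 * k ^ 2 + k) + 1 - 4 * k := by ring
        simp only [thetaTerm, this]
        rw [zpow_sub₀ (by norm_num : (-1 : ℝ) ≠ 0), zpow_sub₀ hx, zpow_add₀ hx, zpow_mul]
        norm_cast
        simp; ring
      have p1 : pochQ (x ^ 4) (2 * (N + 1)) = pochQ (x ^ 4) (2 * N) *
          (1 - (x ^ 4) ^ (2 * N + 1)) * (1 - (x ^ 4) ^ (2 * N + 2)) := by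
        rw [show 2 * (N + 1) = 2 * N + 1 + 1 by ring, pochQ_succ, pochQ_succ]
      rw [e3, e4, e5, e6, e7, e8, e1, e2, t1, t2, p1]
      have z1 : (x ^ 4) ^ ((N : ℤ) + 1 - k) = x ^ (4 * N) * x ^ 4 * ((x ^ 4) ^ k)⁻¹ := by
        rw [zpow_sub₀ hz, zpow_add₀ hz, zpow_natCast, zpow_one, ← pow_mul]; rfl
      have z2 : (x ^ 4) ^ ((N : ℤ) + 1 + k) = x ^ (4 * N) * x ^ 4 * ((x ^ 4) ^ k) := by
        rw [zpow_add₀ hz, zpow_add₀ hz, zpow_natCast, zpow_one, ← pow_mul]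
      have z3 : (x ^ 4) ^ ((N : ℤ) - k) = x ^ (4 * N) * ((x ^ 4) ^ k)⁻¹ := by
        rw [zpow_sub₀ hz, zpow_natCast, ← pow_mul]; rfl
      have z4 : (x ^ 4) ^ ((N : ℤ) + k) = x ^ (4 * N) * ((x ^ 4) ^ k) := by
        rw [zpow_add₀ hz, zpow_natCast, ← pow_mul]
      have z5 : (x ^ 4) ^ (2 * N + 1) = (x ^ (4 * N)) ^ 2 * x ^ 4 := by ring
      have z6 : (x ^ 4) ^ (2 * N + 2) = (x ^ (4 * N)) ^ 2 * x ^ 8 := by ring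
      have z7 : x ^ (8 * N + 4) = (x ^ (4 * N)) ^ 2 * x ^ 4 := by ring
      have z8 : x ^ (4 * N + 3) = x ^ (4 * N) * x ^ 3 := by ring
      have z9 : x ^ (4 * N + 1) = x ^ (4 * N) * x := by ring
      rw [z1, z2, z3, z4, z5, z6, z7, z8, z9]
      have hw : (x ^ 4) ^ k ≠ 0 := zpow_ne_zero _ hz
      generalize (x ^ 4) ^ k = w at hw
      generalize x ^ (4 * N) = y
      field_simp
      ring
    · ring

lemma summable_pow_natAbs' {x : ℝ} (h0 : 0 < x) (h1 : x < 1) :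
    Summable fun k : ℤ => x ^ k.natAbs := by
  have := summable_geometric_of_lt_one h0.le h1
  refine Summable.of_nat_of_neg ?_ ?_ <;> simpa using this

lemma theta_bound {x : ℝ} (h0 : 0 < x) (h1 : x < 1) (k : ℤ) :
    |thetaTerm x k| ≤ x ^ k.natAbs := by
  rw [thetaTerm, abs_mul, abs_zpow, abs_neg, abs_one, one_zpow, one_mul,
    abs_of_pos (zpow_pos h0 _), ← zpow_natCast]
  refine zpow_le_zpow_right_of_le_one₀ h0 h1.le ?_
  rw [Int.natCast_natAbs]
  rcases abs_cases k with ⟨h, h'⟩ | ⟨h, h'⟩ <;> rw [h] <;> nlinarith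

lemma triple {x : ℝ} (h0 : 0 < x) (h1 : x < 1) :
    ∑' k : ℤ, thetaTerm x k =
      ∏' n : ℕ, ((1 - x ^ (4 * n + 4)) * (1 - x ^ (4 * n + 3)) * (1 - x ^ (4 * n + 1))) := by
  have hQ0 : 0 < x ^ 4 := by positivity
  have hQ1 : x ^ 4 < 1 := pow_lt_one₀ h0.le h1 (by norm_num)
  obtain ⟨P, hP, hT⟩ := pochQ_tendsto hQ0 hQ1
  obtain ⟨C, hC⟩ := invQ_bound hQ0 hQ1
  have hI := invQ_tendsto hP hT
  have hmul : ∀ j : ℕ, Multipliable fun n : ℕ => (1 - x ^ (4 * n + (j + 1))) := by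
    intro j
    have hs : Summable fun n : ℕ => ‖-x ^ (4 * n + (j + 1))‖ := by
      simp only [norm_neg, norm_pow, Real.norm_of_nonneg h0.le]
      simp only [pow_add _ (4 * _), pow_mul]
      exact (summable_geometric_of_lt_one hQ0.le hQ1).mul_right _
    simpa [sub_eq_add_neg] using multipliable_one_add_of_summable hs
  have hprod := (((hmul 3).mul (hmul 2)).mul (hmul 0)).hasProd.tendsto_prod_nat
  have hfin : ∀ N : ℕ, ∑' k : ℤ, thetaTerm x k * (pochQ (x ^ 4) N * (pochQ (x ^ 4) (2 * N) *
      (invQ (x ^ 4) (N - k) * invQ (x ^ 4) (N + k)))) =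
      ∏ n ∈ Finset.range N,
        ((1 - x ^ (4 * n + 4)) * (1 - x ^ (4 * n + 3)) * (1 - x ^ (4 * n + 1))) := by
    intro N
    have := (finite_triple h0 h1 N).mul_left (pochQ (x ^ 4) N)
    have e : pochQ (x ^ 4) N * (∏ n ∈ Finset.range N,
        ((1 - x ^ (4 * n + 3)) * (1 - x ^ (4 * n + 1)))) = ∏ n ∈ Finset.range N,
        ((1 - x ^ (4 * n + 4)) * (1 - x ^ (4 * n + 3)) * (1 - x ^ (4 * n + 1))) := by
      rw [pochQ, ← Finset.prod_mul_distrib]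
      refine Finset.prod_congr rfl fun n _ => ?_
      ring
    rw [← e, ← this.tsum_eq]
    refine tsum_congr fun k => ?_
    ring
  have hlim : Filter.Tendsto (fun N : ℕ => ∑' k : ℤ, thetaTerm x k * (pochQ (x ^ 4) N *
      (pochQ (x ^ 4) (2 * N) * (invQ (x ^ 4) (N - k) * invQ (x ^ 4) (N + k)))))
      Filter.atTop (nhds (∑' k : ℤ, thetaTerm x k)) := by
    refine tendsto_tsum_of_dominated_convergence (bound := fun k : ℤ => x ^ k.natAbs * (C * C))
      ((summable_pow_natAbs' h0 h1).mul_right _) ?_ ?_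
    · intro k
      have h2 : Filter.Tendsto (fun N : ℕ => 2 * N) Filter.atTop Filter.atTop :=
        Filter.tendsto_id.const_mul_atTop' (by norm_num)
      have hN : Filter.Tendsto (fun N : ℕ => (N : ℤ)) Filter.atTop Filter.atTop :=
        tendsto_natCast_atTop_atTop
      have l1 := hI.comp (Filter.tendsto_atTop_add_const_right _ (-k) hN)
      have l2 := hI.comp (Filter.tendsto_atTop_add_const_right _ k hN)
      have := (hT.mul ((hT.comp h2).mul (l1.mul l2))).const_mul (thetaTerm x k)
      have e : thetaTerm x k * (P * (P * (P⁻¹ * P⁻¹))) = thetaTerm x k := by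
        field_simp
      rw [e] at this
      exact this
    · refine Filter.Eventually.of_forall fun N k => ?_
      have a1 := hC (N - k)
      have a2 := hC (N + k)
      have b1 := pochQ_le_one hQ0 hQ1 N
      have b2 := pochQ_le_one hQ0 hQ1 (2 * N)
      have b3 := (pochQ_pos hQ0 hQ1 N).le
      have b4 := (pochQ_pos hQ0 hQ1 (2 * N)).le
      have hc : invQ (x ^ 4) (N - k) * invQ (x ^ 4) (N + k) ≤ C * C :=
        mul_le_mul a1.2 a2.2 a2.1 (a1.1.trans a1.2)
      have hc0 := mul_nonneg a1.1 a2.1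
      rw [Real.norm_eq_abs, abs_mul]
      refine mul_le_mul (theta_bound h0 h1 k) ?_ (abs_nonneg _) (by positivity)
      rw [abs_of_nonneg (by positivity)]
      calc _ ≤ 1 * (1 * (C * C)) := by gcongr
        _ = C * C := by ring
  simp only [hfin] at hlim
  exact tendsto_nhds_unique hlim hprod

theorem sum_eq_prod_of_jacobi (q : ℝ) (hq0 : 0 < q) (hq1 : q < 1) :
    (∑' k : ℤ, (-1 : ℝ) ^ k * q ^ ((2 * (k : ℝ) ^ 2 + (k : ℝ)) / 3)) =
      ∏' n : ℕ, ((1 - q ^ ((4 * ((n : ℝ) + 1)) / 3)) *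
        (1 - q ^ ((4 * ((n : ℝ) + 1) - 1) / 3)) *
        (1 - q ^ ((4 * ((n : ℝ) + 1) - 3) / 3))) := by
  have h0 : 0 < q ^ (1 / 3 : ℝ) := Real.rpow_pos_of_pos hq0 _
  have h1 : q ^ (1 / 3 : ℝ) < 1 := Real.rpow_lt_one hq0.le hq1 (by norm_num)
  have key := triple h0 h1
  have hn : ∀ m : ℕ, (q ^ (1 / 3 : ℝ)) ^ m = q ^ ((m : ℝ) / 3) := by
    intro m
    rw [← Real.rpow_natCast, ← Real.rpow_mul hq0.le]; congr 1; ring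
  have hz : ∀ m : ℤ, (q ^ (1 / 3 : ℝ)) ^ m = q ^ ((m : ℝ) / 3) := by
    intro m
    rw [← Real.rpow_intCast, ← Real.rpow_mul hq0.le]; congr 1; ring
  simp only [thetaTerm, hn, hz] at key
  push_cast at key
  rw [key]
  refine tprod_congr fun n => ?_
  rw [show (4 * ((n : ℝ) + 1)) / 3 = (4 * (n : ℝ) + 4) / 3 by ring,
    show (4 * ((n : ℝ) + 1) - 1) / 3 = (4 * (n : ℝ) + 3) / 3 by ring,
    show (4 * ((n : ℝ) + 1) - 3) / 3 = (4 * (n : ℝ) + 1) / 3 by ring]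
end

section
/- For every real τ > 0, the Dedekind eta function satisfies η(i/τ) = √τ · η(iτ). -/
open scoped Real

noncomputable def eta (z : ℂ) : ℂ :=
  Complex.exp (Real.pi * Complex.I * z / 12) *
    ∏' n : ℕ, (1 - Complex.exp (2 * Real.pi * Complex.I * ((n : ℂ) + 1) * z))

theorem eta_eq_modularForm_eta (z : ℂ) : eta z = ModularForm.eta z := by
  unfold eta ModularForm.eta
  congr 1
  · simp only [Function.Periodic.qParam]
    congr 1
    push_cast
    ring
  · exact tprod_congr fun n => by rw [ModularForm.eta_q_eq_cexp]

theorem eta_modular (τ : ℝ) (hτ : 0 < τ) :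
    eta (Complex.I / (τ : ℂ)) = (Real.sqrt τ : ℂ) * eta (Complex.I * (τ : ℂ)) := by
  have hτ' : (τ : ℂ) ≠ 0 := by exact_mod_cast hτ.ne'
  have hmem : Complex.I * (τ : ℂ) ∈ UpperHalfPlane.upperHalfPlaneSet := by
    simpa [UpperHalfPlane.upperHalfPlaneSet] using hτ
  have h := ModularForm.eta_comp_eq_csqrt_I_inv hmem
  simp only [Function.comp_apply, Pi.smul_apply, Pi.mul_apply, smul_eq_mul] at h
  have h1 : -1 / (Complex.I * (τ : ℂ)) = Complex.I / τ := by
    field_simp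
    simp
  have h2 : Complex.sqrt (Complex.I * τ) = Complex.sqrt Complex.I * (Real.sqrt τ : ℂ) := by
    have h4 : (Real.sqrt τ : ℂ) = (τ : ℂ) ^ (2⁻¹ : ℂ) := by
      rw [Real.sqrt_eq_rpow, Complex.ofReal_cpow hτ.le]
      simp
    rw [Complex.sqrt, Complex.sqrt, h4, mul_comm Complex.I,
      Complex.cpow_def_of_ne_zero (mul_ne_zero hτ' Complex.I_ne_zero),
      Complex.cpow_def_of_ne_zero hτ', Complex.cpow_def_of_ne_zero Complex.I_ne_zero,
      Complex.log_ofReal_mul hτ Complex.I_ne_zero, ← Complex.exp_add, Complex.ofReal_log hτ.le]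
    congr 1
    ring
  have h3 : Complex.sqrt Complex.I ≠ 0 := by simp [Complex.sqrt]
  rw [h1, h2] at h
  rw [eta_eq_modularForm_eta, eta_eq_modularForm_eta, h]
  field_simp
end

section
/- For every real τ > 0, setting q = e^{-π/τ}, one has (1 - √(3/2) · η(6iτ)η((3/2)iτ)/(η(2iτ)η(3iτ))) · η(2iτ) = (1/√(2τ)) · q^{1/24} · ∑_{k∈ℤ} (-1)^k ( q^{(3k²-k)/2} - q^{(2k²+k)/3} ). -/
open scoped Real

namespace OneArm

open Filter Topology

/-- reciprocal `q`-factorial, extended by zero to negative integers -/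
noncomputable def rfac (Q : ℝ) (m : ℤ) : ℝ :=
  if m < 0 then 0 else (∏ i ∈ Finset.range m.toNat, (1 - Q ^ (i + 1)))⁻¹

lemma one_sub_pos {Q : ℝ} (h0 : 0 < Q) (h1 : Q < 1) (i : ℕ) : 0 < 1 - Q ^ (i + 1) :=
  sub_pos.2 (pow_lt_one₀ h0.le h1 (Nat.succ_ne_zero i))

lemma rfac_sub_one {Q : ℝ} (h0 : 0 < Q) (h1 : Q < 1) (m : ℤ) :
    rfac Q (m - 1) = (1 - Q ^ m) * rfac Q m := by
  rcases lt_trichotomy m 0 with h | h | h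
  · have h' : m - 1 < 0 := by omega
    simp [rfac, h, h']
  · subst h
    simp [rfac]
  · obtain ⟨n, rfl⟩ : ∃ n : ℕ, m = n + 1 := ⟨(m - 1).toNat, by omega⟩
    have h2 : ¬ ((n : ℤ) < 0) := by omega
    have h3 : ¬ ((n : ℤ) + 1 < 0) := by omega
    have h4 : ((n : ℤ) + 1).toNat = n + 1 := by omega
    have h5 : Q ^ ((n : ℤ) + 1) = Q ^ (n + 1) := by exact_mod_cast zpow_natCast Q (n + 1)
    have h6 := (one_sub_pos h0 h1 n).ne'
    simp only [rfac, add_sub_cancel_right, h2, h3, if_false, h4, Int.toNat_natCast, h5,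
      Finset.prod_range_succ, mul_inv]
    field_simp

noncomputable def coef (q z : ℝ) (n : ℕ) (k : ℤ) : ℝ :=
  (∏ i ∈ Finset.range (2 * n), (1 - (q ^ 2) ^ (i + 1))) * rfac (q ^ 2) (n + k) *
    rfac (q ^ 2) (n - k) * (q ^ (k ^ 2) * z ^ k)

lemma coef_succ {q z : ℝ} (h0 : 0 < q) (h1 : q < 1) (hz : z ≠ 0) (n : ℕ) (k : ℤ) :
    coef q z (n + 1) k = (1 + q ^ (4 * n + 2)) * coef q z n k +
      (q ^ (2 * n + 1) * z) * coef q z n (k - 1) +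
      (q ^ (2 * n + 1) * z⁻¹) * coef q z n (k + 1) := by
  have hQ0 : 0 < q ^ 2 := by positivity
  have hQ1 : q ^ 2 < 1 := pow_lt_one₀ h0.le h1 (by norm_num)
  have R := rfac_sub_one hQ0 hQ1
  have e1 : rfac (q ^ 2) (n + k) = (1 - (q ^ 2) ^ (n + 1 + k : ℤ)) * rfac (q ^ 2) (n + 1 + k) := by
    rw [← R]; congr 1; ring
  have e2 : rfac (q ^ 2) (n - k) = (1 - (q ^ 2) ^ (n + 1 - k : ℤ)) * rfac (q ^ 2) (n + 1 - k) := by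
    rw [← R]; congr 1; ring
  have e3 : rfac (q ^ 2) (n + (k - 1)) = (1 - (q ^ 2) ^ (n + k : ℤ)) * rfac (q ^ 2) (n + k) := by
    rw [← R]; congr 1; ring
  have e4 : rfac (q ^ 2) (n - (k + 1)) = (1 - (q ^ 2) ^ (n - k : ℤ)) * rfac (q ^ 2) (n - k) := by
    rw [← R]; congr 1; ring
  have e5 : rfac (q ^ 2) (n - (k - 1)) = rfac (q ^ 2) (n + 1 - k) := by congr 1; ring
  have e6 : rfac (q ^ 2) (n + (k + 1)) = rfac (q ^ 2) (n + 1 + k) := by congr 1; ring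
  have hq : q ≠ 0 := h0.ne'
  have f1 : q ^ ((k - 1) ^ 2 : ℤ) = q ^ (k ^ 2) * (q ^ k)⁻¹ ^ 2 * q := by
    rw [show ((k - 1) ^ 2 : ℤ) = k ^ 2 - k - k + 1 by ring, zpow_add₀ hq, zpow_sub₀ hq,
      zpow_sub₀ hq, zpow_one]
    field_simp
  have f2 : q ^ ((k + 1) ^ 2 : ℤ) = q ^ (k ^ 2) * (q ^ k) ^ 2 * q := by
    rw [show ((k + 1) ^ 2 : ℤ) = k ^ 2 + k + k + 1 by ring, zpow_add₀ hq, zpow_add₀ hq,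
      zpow_add₀ hq, zpow_one]
    ring
  have g1 : z ^ (k - 1) = z ^ k * z⁻¹ := by rw [zpow_sub₀ hz, zpow_one]; rfl
  have g2 : z ^ (k + 1) = z ^ k * z := by rw [zpow_add₀ hz, zpow_one]
  have w : ∀ j : ℤ, (q ^ 2) ^ j = (q ^ j) ^ 2 := fun j => by
    rw [← zpow_natCast, ← zpow_natCast, ← zpow_mul, ← zpow_mul, mul_comm]
  have hk : q ^ k ≠ 0 := zpow_ne_zero _ hq
  unfold coef
  push_cast
  rw [e5, e6, e3, e4, e1, e2, f1, f2, g1, g2, show 2 * (n + 1) = 2 * n + 1 + 1 by ring,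
    Finset.prod_range_succ, Finset.prod_range_succ]
  simp only [w]
  simp only [zpow_add₀ hq, zpow_sub₀ hq, zpow_one, zpow_natCast]
  generalize rfac (q ^ 2) (n + 1 + k) = r1
  generalize rfac (q ^ 2) (n + 1 - k) = r2
  generalize (∏ i ∈ Finset.range (2 * n), (1 - (q ^ 2) ^ (i + 1))) = p
  generalize q ^ (k ^ 2) = t
  generalize z ^ k = s
  generalize q ^ k = K at *
  rw [show (q ^ 2) ^ (2 * n + 1) = (q ^ n) ^ 4 * q ^ 2 by ring,
    show (q ^ 2) ^ (2 * n + 1 + 1) = (q ^ n) ^ 4 * q ^ 4 by ring,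
    show q ^ (4 * n + 2) = (q ^ n) ^ 4 * q ^ 2 by ring,
    show q ^ (2 * n + 1) = (q ^ n) ^ 2 * q by ring]
  generalize q ^ n = A
  field_simp
  ring

lemma hasSum_coef {q z : ℝ} (h0 : 0 < q) (h1 : q < 1) (hz : z ≠ 0) (n : ℕ) :
    HasSum (coef q z n)
      (∏ i ∈ Finset.range n, ((1 + z * q ^ (2 * i + 1)) * (1 + z⁻¹ * q ^ (2 * i + 1)))) := by
  induction n with
  | zero =>
    have : coef q z 0 0 = 1 := by simp [coef, rfac]
    rw [Finset.prod_range_zero, ← this]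
    apply hasSum_single
    intro k hk
    rcases lt_or_gt_of_ne hk with h | h
    · simp [coef, rfac, h]
    · simp [coef, rfac, h]
  | succ n ih =>
    have a := ih.mul_left (1 + q ^ (4 * n + 2))
    have b := (((Equiv.subRight (1 : ℤ)).hasSum_iff).2 ih).mul_left (q ^ (2 * n + 1) * z)
    have c := (((Equiv.addRight (1 : ℤ)).hasSum_iff).2 ih).mul_left (q ^ (2 * n + 1) * z⁻¹)
    have d := (a.add b).add c
    have e : coef q z (n + 1) = _ := funext fun k => coef_succ h0 h1 hz n k
    rw [e]
    convert! d using 1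
    · rw [Finset.prod_range_succ]
      have : z * z⁻¹ = 1 := mul_inv_cancel₀ hz
      linear_combination (q ^ (2 * n + 1)) ^ 2 *
        (∏ i ∈ Finset.range n, ((1 + z * q ^ (2 * i + 1)) * (1 + z⁻¹ * q ^ (2 * i + 1)))) * this

noncomputable def E (x : ℝ) : ℝ := ∏' n : ℕ, (1 - x ^ (n + 1))

lemma mult {x : ℝ} (h0 : 0 < x) (h1 : x < 1) : Multipliable fun n : ℕ => 1 - x ^ (n + 1) := by
  simp_rw [sub_eq_add_neg]
  apply multipliable_one_add_of_summable
  simpa [abs_of_pos h0] using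
    (summable_nat_add_iff 1).mpr (summable_geometric_of_lt_one h0.le h1)

lemma tendsto_E {x : ℝ} (h0 : 0 < x) (h1 : x < 1) :
    Tendsto (fun n => ∏ i ∈ Finset.range n, (1 - x ^ (i + 1))) atTop (𝓝 (E x)) :=
  (mult h0 h1).tendsto_prod_tprod_nat

lemma E_ne_zero {x : ℝ} (h0 : 0 < x) (h1 : x < 1) : E x ≠ 0 := by
  unfold E
  simp_rw [sub_eq_add_neg]
  apply tprod_one_add_ne_zero_of_summable
  · intro i
    simpa [sub_eq_add_neg] using (one_sub_pos h0 h1 i).ne'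
  · simpa [abs_of_pos h0] using
      (summable_nat_add_iff 1).mpr (summable_geometric_of_lt_one h0.le h1)

lemma E_le {x : ℝ} (h0 : 0 < x) (h1 : x < 1) (n : ℕ) :
    E x ≤ ∏ i ∈ Finset.range n, (1 - x ^ (i + 1)) := by
  refine Antitone.le_of_tendsto (antitone_nat_of_succ_le fun m => ?_) (tendsto_E h0 h1) n
  rw [Finset.prod_range_succ]
  apply mul_le_of_le_one_right
  · exact Finset.prod_nonneg fun i _ => (one_sub_pos h0 h1 i).le
  · have : 0 < x ^ (m + 1) := by positivity
    linarith

lemma E_pos {x : ℝ} (h0 : 0 < x) (h1 : x < 1) : 0 < E x := by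
  refine lt_of_le_of_ne ?_ (E_ne_zero h0 h1).symm
  exact ge_of_tendsto' (tendsto_E h0 h1) fun n =>
    Finset.prod_nonneg fun i _ => (one_sub_pos h0 h1 i).le

lemma rfac_nonneg {x : ℝ} (h0 : 0 < x) (h1 : x < 1) (m : ℤ) : 0 ≤ rfac x m := by
  unfold rfac
  split_ifs
  · exact le_rfl
  · exact inv_nonneg.2 (Finset.prod_nonneg fun i _ => (one_sub_pos h0 h1 i).le)

lemma rfac_le {x : ℝ} (h0 : 0 < x) (h1 : x < 1) (m : ℤ) : rfac x m ≤ (E x)⁻¹ := by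
  unfold rfac
  split_ifs
  · exact inv_nonneg.2 (E_pos h0 h1).le
  · exact inv_anti₀ (E_pos h0 h1) (E_le h0 h1 _)

lemma tendsto_rfac {x : ℝ} (h0 : 0 < x) (h1 : x < 1) :
    Tendsto (rfac x) atTop (𝓝 (E x)⁻¹) := by
  have t : Tendsto Int.toNat atTop atTop := by
    refine tendsto_atTop.2 fun b => ?_
    filter_upwards [eventually_ge_atTop (b : ℤ)] with m hm
    omega
  refine (((tendsto_E h0 h1).comp t).inv₀ (E_ne_zero h0 h1)).congr' ?_
  filter_upwards [eventually_ge_atTop (0 : ℤ)] with m hm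
  simp [rfac, not_lt.2 hm]

lemma summable_theta {q z : ℝ} (h0 : 0 < q) (h1 : q < 1) (hz : z ≠ 0) :
    Summable fun k : ℤ => q ^ (k ^ 2) * z ^ k := by
  have him : 0 < (Complex.I * ((-Real.log q / Real.pi : ℝ) : ℂ)).im := by
    have := Real.log_neg h0 h1
    simp only [Complex.mul_im, Complex.I_re, Complex.I_im, Complex.ofReal_re, Complex.ofReal_im]
    have : 0 < -Real.log q / Real.pi := div_pos (by linarith) Real.pi_pos
    linarith
  have := (summable_jacobiTheta₂_term_iff
    (Complex.I * ((-Real.log |z| / (2 * Real.pi) : ℝ) : ℂ))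
    (Complex.I * ((-Real.log q / Real.pi : ℝ) : ℂ))).2 him
  refine Summable.of_norm ?_
  refine this.norm.congr fun k => ?_
  rw [norm_jacobiTheta₂_term]
  simp only [Complex.mul_im, Complex.I_re, Complex.I_im, Complex.ofReal_re, Complex.ofReal_im]
  rw [norm_mul, norm_zpow, norm_zpow, Real.norm_eq_abs, Real.norm_eq_abs, abs_of_pos h0,
    ← Real.rpow_intCast, ← Real.rpow_intCast, Real.rpow_def_of_pos h0,
    Real.rpow_def_of_pos (abs_pos.2 hz), ← Real.exp_add]
  congr 1
  push_cast
  field_simp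
  ring

theorem triple {q z : ℝ} (h0 : 0 < q) (h1 : q < 1) (hz : z ≠ 0) :
    Tendsto (fun n => ∏ i ∈ Finset.range n, ((1 - (q ^ 2) ^ (i + 1)) *
      ((1 + z * q ^ (2 * i + 1)) * (1 + z⁻¹ * q ^ (2 * i + 1))))) atTop
      (𝓝 (∑' k : ℤ, q ^ (k ^ 2) * z ^ k)) := by
  have hQ0 : 0 < q ^ 2 := by positivity
  have hQ1 : q ^ 2 < 1 := pow_lt_one₀ h0.le h1 (by norm_num)
  have hE := E_ne_zero hQ0 hQ1
  have key : Tendsto (fun n => ∑' k : ℤ, coef q z n k) atTop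
      (𝓝 (∑' k : ℤ, (E (q ^ 2))⁻¹ * (q ^ (k ^ 2) * z ^ k))) := by
    refine tendsto_tsum_of_dominated_convergence
      (bound := fun k : ℤ => ((E (q ^ 2))⁻¹ * (E (q ^ 2))⁻¹) * ‖q ^ (k ^ 2) * z ^ k‖)
      ((summable_theta h0 h1 hz).norm.mul_left _) ?_ ?_
    · intro k
      have a : Tendsto (fun n : ℕ => ∏ i ∈ Finset.range (2 * n), (1 - (q ^ 2) ^ (i + 1))) atTop
          (𝓝 (E (q ^ 2))) :=
        (tendsto_E hQ0 hQ1).comp (tendsto_id.const_mul_atTop' (by norm_num : 0 < 2))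
      have b : Tendsto (fun n : ℕ => rfac (q ^ 2) (n + k)) atTop (𝓝 (E (q ^ 2))⁻¹) :=
        (tendsto_rfac hQ0 hQ1).comp
          (tendsto_atTop_add_const_right _ k tendsto_natCast_atTop_atTop)
      have c : Tendsto (fun n : ℕ => rfac (q ^ 2) (n - k)) atTop (𝓝 (E (q ^ 2))⁻¹) := by
        simp_rw [sub_eq_add_neg]
        exact (tendsto_rfac hQ0 hQ1).comp
          (tendsto_atTop_add_const_right _ (-k) tendsto_natCast_atTop_atTop)
      have := ((a.mul b).mul c).mul_const (q ^ (k ^ 2) * z ^ k)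
      rwa [mul_inv_cancel₀ hE, one_mul] at this
    · refine Eventually.of_forall fun n k => ?_
      unfold coef
      rw [norm_mul]
      refine mul_le_mul_of_nonneg_right ?_ (norm_nonneg _)
      have p0 : 0 ≤ ∏ i ∈ Finset.range (2 * n), (1 - (q ^ 2) ^ (i + 1)) :=
        Finset.prod_nonneg fun i _ => (one_sub_pos hQ0 hQ1 i).le
      have p1 : ∏ i ∈ Finset.range (2 * n), (1 - (q ^ 2) ^ (i + 1)) ≤ 1 := by
        refine Finset.prod_le_one (fun i _ => (one_sub_pos hQ0 hQ1 i).le) fun i _ => ?_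
        have : 0 < (q ^ 2) ^ (i + 1) := by positivity
        linarith
      have r1 := rfac_nonneg hQ0 hQ1 (n + k)
      have r2 := rfac_nonneg hQ0 hQ1 (n - k)
      rw [Real.norm_of_nonneg (mul_nonneg (mul_nonneg p0 r1) r2)]
      refine mul_le_mul ?_ (rfac_le hQ0 hQ1 _) r2 (inv_nonneg.2 (E_pos hQ0 hQ1).le)
      exact (mul_le_of_le_one_left r1 p1).trans (rfac_le hQ0 hQ1 _)
  have := (tendsto_E hQ0 hQ1).mul key
  rw [tsum_mul_left, mul_inv_cancel_left₀ hE] at this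
  refine this.congr fun n => ?_
  rw [(hasSum_coef h0 h1 hz n).tsum_eq, ← Finset.prod_mul_distrib]

lemma penta {y : ℝ} (h0 : 0 < y) (h1 : y < 1) :
    ∑' k : ℤ, (y ^ 3) ^ (k ^ 2) * (-y⁻¹) ^ k = E (y ^ 2) := by
  have t := triple (q := y ^ 3) (z := -y⁻¹) (by positivity) (pow_lt_one₀ h0.le h1 (by norm_num))
    (by simpa using h0.ne')
  have hx0 : 0 < y ^ 2 := by positivity
  have hx1 : y ^ 2 < 1 := pow_lt_one₀ h0.le h1 (by norm_num)
  have s := (tendsto_E hx0 hx1).comp (tendsto_id.const_mul_atTop' (by norm_num : 0 < 3))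
  refine tendsto_nhds_unique t (s.congr fun n => ?_)
  simp only [Function.comp, id]
  induction n with
  | zero => simp
  | succ n ih =>
    rw [Finset.prod_range_succ _ n, ← ih, show 3 * (n + 1) = 3 * n + 1 + 1 + 1 by ring,
      Finset.prod_range_succ, Finset.prod_range_succ, Finset.prod_range_succ]
    have a : -y⁻¹ * (y ^ 3) ^ (2 * n + 1) = - (y ^ 2) ^ (3 * n + 1) := by
      rw [show (y ^ 3) ^ (2 * n + 1) = y * (y ^ 2) ^ (3 * n + 1) by ring]
      field_simp
    have b : (-y⁻¹)⁻¹ * (y ^ 3) ^ (2 * n + 1) = - (y ^ 2) ^ (3 * n + 1 + 1) := by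
      rw [inv_neg, inv_inv]; ring
    rw [a, b]
    ring

lemma gauss {p : ℝ} (h0 : 0 < p) (h1 : p < 1) :
    (∑' k : ℤ, (p ^ 2) ^ (k ^ 2) * (-p) ^ k) * E (p ^ 2) = E p * E (p ^ 4) := by
  have t := triple (q := p ^ 2) (z := -p) (by positivity) (pow_lt_one₀ h0.le h1 (by norm_num))
    (by simpa using h0.ne')
  have hp2 : p ^ 2 < 1 := pow_lt_one₀ h0.le h1 (by norm_num)
  have hp4 : p ^ 4 < 1 := pow_lt_one₀ h0.le h1 (by norm_num)
  have s := (tendsto_E h0 h1).comp (tendsto_id.const_mul_atTop' (by norm_num : 0 < 4))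
  have s2 := (tendsto_E (x := p ^ 2) (by positivity) hp2).comp
    (tendsto_id.const_mul_atTop' (by norm_num : 0 < 2))
  have s4 := tendsto_E (x := p ^ 4) (by positivity) hp4
  refine tendsto_nhds_unique (t.mul s2) ((s.mul s4).congr fun n => ?_)
  simp only [Function.comp, id]
  induction n with
  | zero => simp
  | succ n ih =>
    rw [Finset.prod_range_succ _ n, Finset.prod_range_succ _ n,
      show 4 * (n + 1) = 4 * n + 1 + 1 + 1 + 1 by ring, show 2 * (n + 1) = 2 * n + 1 + 1 by ring,
      Finset.prod_range_succ, Finset.prod_range_succ, Finset.prod_range_succ,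
      Finset.prod_range_succ, Finset.prod_range_succ, Finset.prod_range_succ]
    have b : (-p)⁻¹ * (p ^ 2) ^ (2 * n + 1) = - p ^ (4 * n + 1) := by
      rw [show (p ^ 2) ^ (2 * n + 1) = p * p ^ (4 * n + 1) by ring]
      field_simp
    rw [b]
    linear_combination (1 - p ^ (4 * n + 1)) * (1 - p ^ (4 * n + 1 + 1)) *
      (1 - p ^ (4 * n + 1 + 1 + 1)) * (1 - p ^ (4 * n + 1 + 1 + 1 + 1)) *
      (1 - (p ^ 4) ^ (n + 1)) * ih

/-- eta on the imaginary axis -/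
noncomputable def etaR (t : ℝ) : ℝ := Real.exp (-Real.pi * t / 12) * E (Real.exp (-2 * Real.pi * t))

lemma exp_lt {t : ℝ} (ht : 0 < t) : Real.exp (-2 * Real.pi * t) < 1 := by
  rw [Real.exp_lt_one_iff]
  have := mul_pos Real.pi_pos ht
  linarith

lemma etaR_pos {t : ℝ} (ht : 0 < t) : 0 < etaR t :=
  mul_pos (Real.exp_pos _) (E_pos (Real.exp_pos _) (exp_lt ht))

lemma eta_eq (t : ℝ) (ht : 0 < t) : eta (t * Complex.I) = (etaR t : ℂ) := by
  unfold eta etaR E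
  have m := (mult (Real.exp_pos _) (exp_lt ht)).hasProd.map Complex.ofRealHom
    Complex.continuous_ofReal
  have e := m.tprod_eq
  rw [Complex.ofReal_mul]
  congr 1
  · rw [Complex.ofReal_exp]
    congr 1
    push_cast
    linear_combination (Real.pi * t / 12 : ℂ) * Complex.I_mul_I
  · refine Eq.trans (tprod_congr fun n => ?_) e
    simp only [Function.comp, Complex.ofRealHom_eq_coe]
    push_cast
    rw [← Complex.exp_nat_mul]
    congr 2
    push_cast
    linear_combination (2 * Real.pi * (n + 1) * t : ℂ) * Complex.I_mul_I

lemma eta_eq_mathlib (z : ℂ) : ModularForm.eta z = eta z := by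
  unfold ModularForm.eta eta
  simp_rw [ModularForm.eta_q_eq_cexp]
  congr 1
  rw [Function.Periodic.qParam]
  congr 1
  push_cast
  ring

lemma etaR_inv {t : ℝ} (ht : 0 < t) : etaR t⁻¹ = Real.sqrt t * etaR t := by
  have h := ModularForm.eta_comp_eq_csqrt_I_inv
    (show (t * Complex.I : ℂ) ∈ UpperHalfPlane.upperHalfPlaneSet by simpa using ht)
  simp only [Function.comp, Pi.smul_apply, Pi.mul_apply, eta_eq_mathlib, smul_eq_mul] at h
  have a : (-1 / (t * Complex.I) : ℂ) = ((t⁻¹ : ℝ) : ℂ) * Complex.I := by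
    have : (t : ℂ) ≠ 0 := by exact_mod_cast ht.ne'
    push_cast
    field_simp
    simp
  have b : Complex.sqrt (t * Complex.I) = (Real.sqrt t : ℂ) * Complex.sqrt Complex.I := by
    have ht' : (t : ℂ) ≠ 0 := by exact_mod_cast ht.ne'
    have hI := Complex.I_ne_zero
    have r : (Real.sqrt t : ℂ) = (t : ℂ) ^ (2⁻¹ : ℂ) := by
      rw [Real.sqrt_eq_rpow, Complex.ofReal_cpow ht.le]
      norm_num
    rw [r, Complex.sqrt, Complex.sqrt, Complex.cpow_def_of_ne_zero (mul_ne_zero ht' hI),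
      Complex.cpow_def_of_ne_zero hI, Complex.cpow_def_of_ne_zero ht', ← Complex.exp_add,
      Complex.log_ofReal_mul ht hI, Complex.ofReal_log ht.le, add_mul]
  have c : Complex.sqrt Complex.I ≠ 0 := by simp [Complex.sqrt]
  rw [a, b, eta_eq _ ht, eta_eq _ (inv_pos.2 ht)] at h
  have : (etaR t⁻¹ : ℂ) = ((Real.sqrt t * etaR t : ℝ) : ℂ) := by
    rw [h]
    push_cast
    field_simp
  exact_mod_cast this

lemma etaR_inv' {a b : ℝ} (ha : 0 < a) (hb : b = 1 / a) :
    Real.sqrt a * etaR a = Real.exp (-Real.pi * b / 12) * E (Real.exp (-2 * Real.pi * b)) := by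
  rw [← etaR_inv ha, hb, one_div]
  rfl

lemma main_real (τ : ℝ) (hτ : 0 < τ) :
    etaR (2 * τ) - Real.sqrt (3 / 2) * (etaR (6 * τ) * etaR (3 / 2 * τ)) / etaR (3 * τ) =
      1 / Real.sqrt (2 * τ) * Real.exp (-Real.pi / τ / 24) *
        ((∑' k : ℤ, (Real.exp (-Real.pi / (2 * τ)) ^ 3) ^ (k ^ 2) *
            (-(Real.exp (-Real.pi / (2 * τ)))⁻¹) ^ k) -
          ∑' k : ℤ, (Real.exp (-Real.pi / (3 * τ)) ^ 2) ^ (k ^ 2) *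
            (-Real.exp (-Real.pi / (3 * τ))) ^ k) := by
  have hneg : ∀ a : ℝ, 0 < a → Real.exp (-Real.pi / a) < 1 := fun a ha => by
    rw [Real.exp_lt_one_iff, neg_div]
    exact neg_lt_zero.2 (div_pos Real.pi_pos ha)
  have hp := gauss (Real.exp_pos (-Real.pi / (3 * τ))) (hneg _ (by positivity))
  rw [penta (Real.exp_pos _) (hneg _ (by positivity))]
  set S := ∑' k : ℤ, (Real.exp (-Real.pi / (3 * τ)) ^ 2) ^ (k ^ 2) *
            (-Real.exp (-Real.pi / (3 * τ))) ^ k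
  have y2 : Real.exp (-Real.pi / (2 * τ)) ^ 2 = Real.exp (-2 * Real.pi * (1 / (2 * τ))) := by
    rw [← Real.exp_nat_mul]; congr 1; push_cast; field_simp
  have p1 : Real.exp (-Real.pi / (3 * τ)) = Real.exp (-2 * Real.pi * (1 / (6 * τ))) := by
    congr 1; field_simp; norm_num
  have p2 : Real.exp (-Real.pi / (3 * τ)) ^ 2 = Real.exp (-2 * Real.pi * (1 / (3 * τ))) := by
    rw [← Real.exp_nat_mul]; congr 1; push_cast; field_simp
  have p4 : Real.exp (-Real.pi / (3 * τ)) ^ 4 = Real.exp (-2 * Real.pi * (1 / (3 / 2 * τ))) := by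
    rw [← Real.exp_nat_mul]; congr 1; push_cast; field_simp; norm_num
  rw [p2, p4, p1] at hp
  rw [y2]
  have h2 := etaR_inv' (a := 2 * τ) (by positivity) rfl
  have h6 := etaR_inv' (a := 6 * τ) (by positivity) rfl
  have h3 := etaR_inv' (a := 3 * τ) (by positivity) rfl
  have h32 := etaR_inv' (a := 3 / 2 * τ) (by positivity) rfl
  have n3 := (etaR_pos (t := 3 * τ) (by positivity)).ne'
  have q2 : Real.sqrt (2 * τ) ≠ 0 := (Real.sqrt_pos.2 (by positivity)).ne'
  have q3 : Real.sqrt (3 * τ) ≠ 0 := (Real.sqrt_pos.2 (by positivity)).ne'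
  have c1 : Real.exp (-Real.pi / τ / 24) = Real.exp (-Real.pi * (1 / (2 * τ)) / 12) := by
    congr 1; field_simp; norm_num
  have c2 : Real.exp (-Real.pi / τ / 24) * Real.exp (-Real.pi * (1 / (3 * τ)) / 12) =
      Real.exp (-Real.pi * (1 / (6 * τ)) / 12) * Real.exp (-Real.pi * (1 / (3 / 2 * τ)) / 12) := by
    rw [← Real.exp_add, ← Real.exp_add]; congr 1; field_simp; norm_num
  have r : Real.sqrt (3 / 2) * Real.sqrt (2 * τ) * Real.sqrt (3 * τ) =
      Real.sqrt (6 * τ) * Real.sqrt (3 / 2 * τ) := by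
    rw [← Real.sqrt_mul (by positivity), ← Real.sqrt_mul (by positivity),
      ← Real.sqrt_mul (by positivity)]
    congr 1; ring
  have B : Real.sqrt (3 / 2) * (etaR (6 * τ) * etaR (3 / 2 * τ)) * Real.sqrt (2 * τ) =
      Real.exp (-Real.pi / τ / 24) * S * etaR (3 * τ) := by
    apply mul_right_cancel₀ q3
    calc _ = (Real.sqrt (3 / 2) * Real.sqrt (2 * τ) * Real.sqrt (3 * τ)) *
          (etaR (6 * τ) * etaR (3 / 2 * τ)) := by ring
      _ = (Real.sqrt (6 * τ) * etaR (6 * τ)) * (Real.sqrt (3 / 2 * τ) * etaR (3 / 2 * τ)) := by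
          rw [r]; ring
      _ = (Real.exp (-Real.pi / τ / 24) * Real.exp (-Real.pi * (1 / (3 * τ)) / 12)) *
          (S * E (Real.exp (-2 * Real.pi * (1 / (3 * τ))))) := by
          rw [h6, h32, c2, hp]; ring
      _ = Real.exp (-Real.pi / τ / 24) * S * (Real.sqrt (3 * τ) * etaR (3 * τ)) := by
          rw [h3]; ring
      _ = _ := by ring
  rw [← c1] at h2
  generalize Real.exp (-Real.pi / τ / 24) = c at *
  generalize E (Real.exp (-2 * Real.pi * (1 / (2 * τ)))) = e2 at *
  generalize Real.sqrt (2 * τ) = s2 at *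
  generalize etaR (2 * τ) = x2 at *
  generalize etaR (6 * τ) = x6 at *
  generalize etaR (3 * τ) = x3 at *
  generalize etaR (3 / 2 * τ) = x32 at *
  generalize Real.sqrt (3 / 2) = w at *
  clear_value S
  field_simp
  linear_combination x3 * h2 - B

lemma main_tsum (τ : ℝ) (hτ : 0 < τ) :
    (∑' k : ℤ, ((-1 : ℝ) ^ k *
          (Real.exp (-Real.pi / τ) ^ ((3 * (k : ℝ) ^ 2 - (k : ℝ)) / 2) -
            Real.exp (-Real.pi / τ) ^ ((2 * (k : ℝ) ^ 2 + (k : ℝ)) / 3)) : ℝ)) =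
        ((∑' k : ℤ, (Real.exp (-Real.pi / (2 * τ)) ^ 3) ^ (k ^ 2) *
            (-(Real.exp (-Real.pi / (2 * τ)))⁻¹) ^ k) -
          ∑' k : ℤ, (Real.exp (-Real.pi / (3 * τ)) ^ 2) ^ (k ^ 2) *
            (-Real.exp (-Real.pi / (3 * τ))) ^ k) := by
  have hneg : ∀ a : ℝ, 0 < a → Real.exp (-Real.pi / a) < 1 := fun a ha => by
    rw [Real.exp_lt_one_iff, neg_div]
    exact neg_lt_zero.2 (div_pos Real.pi_pos ha)
  have e0 := fun a => Real.exp_pos (-Real.pi / a)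
  rw [← Summable.tsum_sub]
  · refine tsum_congr fun k => ?_
    rw [mul_sub]
    congr 1
    · rw [neg_eq_neg_one_mul (Real.exp _)⁻¹, mul_zpow, mul_left_comm]
      congr 1
      rw [← Real.exp_neg, ← Real.exp_nat_mul, ← Real.exp_mul, ← Real.rpow_intCast,
        ← Real.rpow_intCast, ← Real.exp_mul, ← Real.exp_mul, ← Real.exp_add]
      congr 1
      push_cast
      field_simp
      ring
    · rw [neg_eq_neg_one_mul (Real.exp _), mul_zpow, mul_left_comm]
      congr 1
      rw [← Real.exp_nat_mul, ← Real.exp_mul, ← Real.rpow_intCast,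
        ← Real.rpow_intCast, ← Real.exp_mul, ← Real.exp_mul, ← Real.exp_add]
      congr 1
      push_cast
      field_simp
      ring
  · exact summable_theta (pow_pos (e0 _) _)
      (pow_lt_one₀ (e0 _).le (hneg _ (by positivity)) (by norm_num))
      (neg_ne_zero.2 (inv_ne_zero (e0 _).ne'))
  · exact summable_theta (pow_pos (e0 _) _)
      (pow_lt_one₀ (e0 _).le (hneg _ (by positivity)) (by norm_num))
      (neg_ne_zero.2 (e0 _).ne')

end OneArm

theorem one_arm_eta_identity (τ : ℝ) (hτ : 0 < τ) :
    (1 - (Real.sqrt (3 / 2) : ℂ) *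
        (eta (6 * τ * Complex.I) * eta ((3 / 2) * τ * Complex.I)) /
        (eta (2 * τ * Complex.I) * eta (3 * τ * Complex.I))) * eta (2 * τ * Complex.I) =
      ((1 / Real.sqrt (2 * τ) : ℝ) : ℂ) *
        ((Real.exp (-Real.pi / τ) ^ ((1 : ℝ) / 24) : ℝ) : ℂ) *
        ∑' k : ℤ, ((-1 : ℝ) ^ k *
          (Real.exp (-Real.pi / τ) ^ ((3 * (k : ℝ) ^ 2 - (k : ℝ)) / 2) -
            Real.exp (-Real.pi / τ) ^ ((2 * (k : ℝ) ^ 2 + (k : ℝ)) / 3)) : ℝ) := by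
  have m := OneArm.main_real τ hτ
  rw [← OneArm.main_tsum τ hτ] at m
  have h2 : eta (2 * τ * Complex.I) = (OneArm.etaR (2 * τ) : ℂ) := by
    rw [← OneArm.eta_eq _ (by positivity)]; push_cast; rfl
  have h6 : eta (6 * τ * Complex.I) = (OneArm.etaR (6 * τ) : ℂ) := by
    rw [← OneArm.eta_eq _ (by positivity)]; push_cast; rfl
  have h3 : eta (3 * τ * Complex.I) = (OneArm.etaR (3 * τ) : ℂ) := by
    rw [← OneArm.eta_eq _ (by positivity)]; push_cast; rfl
  have h32 : eta (3 / 2 * τ * Complex.I) = (OneArm.etaR (3 / 2 * τ) : ℂ) := by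
    rw [← OneArm.eta_eq _ (by positivity)]; push_cast; rfl
  have c : Real.exp (-Real.pi / τ) ^ ((1 : ℝ) / 24) = Real.exp (-Real.pi / τ / 24) := by
    rw [← Real.exp_mul]; congr 1; ring
  have n2 := (OneArm.etaR_pos (t := 2 * τ) (by positivity)).ne'
  have n3 := (OneArm.etaR_pos (t := 3 * τ) (by positivity)).ne'
  have l : OneArm.etaR (2 * τ) - Real.sqrt (3 / 2) *
      (OneArm.etaR (6 * τ) * OneArm.etaR (3 / 2 * τ)) / OneArm.etaR (3 * τ) =
      (1 - Real.sqrt (3 / 2) * (OneArm.etaR (6 * τ) * OneArm.etaR (3 / 2 * τ)) /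
        (OneArm.etaR (2 * τ) * OneArm.etaR (3 * τ))) * OneArm.etaR (2 * τ) := by
    field_simp
  rw [h2, h6, h3, h32, c]
  rw [l] at m
  have m' := congrArg (fun x : ℝ => (x : ℂ)) m
  simp only [Complex.ofReal_mul, Complex.ofReal_sub, Complex.ofReal_div, Complex.ofReal_one,
    Complex.ofReal_tsum] at m' ⊢
  exact m'
end

section
/- For every real τ > 0, setting q = e^{-π/τ}, one has √3 · η(iτ)η(6iτ)²/(η(3iτ)η(2iτ)) = (1/√(2τ)) · q^{1/24} · ∑_{k∈ℤ} ( q^{6k²+k} + q^{6k²+5k+1} - 2 q^{6k²+3k+1/3} ). -/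
open scoped Real

open Filter Topology

namespace TwoArm

noncomputable def Phi (y : ℝ) (n : ℕ) : ℝ := ∏ j ∈ Finset.range n, (1 - y ^ (j + 1))

noncomputable def phi (y : ℝ) : ℝ := ∏' n : ℕ, (1 - y ^ (n + 1))

noncomputable def PP (x : ℝ) (n : ℕ) : ℝ :=
  ∏ j ∈ Finset.range n, ((1 - x ^ (6 * j + 1)) * (1 - x ^ (6 * j + 5)))

noncomputable def FF (y : ℝ) (m : ℤ) : ℝ := if m < 0 then 0 else (Phi y m.toNat)⁻¹

noncomputable def TT (x : ℝ) (k : ℤ) : ℝ := (-1) ^ k * x ^ (3 * k ^ 2 + 2 * k)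

lemma summable_aux {y : ℝ} (h0 : 0 < y) (h1 : y < 1) : Summable (fun n : ℕ => ‖-y ^ (n + 1)‖) := by
  simp only [norm_neg, norm_pow, Real.norm_eq_abs, abs_of_pos h0]
  exact (summable_nat_add_iff 1).2 (summable_geometric_of_lt_one h0.le h1)

lemma one_sub_pow_ne {y : ℝ} (h0 : 0 < y) (h1 : y < 1) (n : ℕ) : 1 - y ^ (n + 1) ≠ 0 := by
  have : y ^ (n + 1) < 1 := pow_lt_one₀ h0.le h1 (by simp)
  linarith

lemma multipliable_phi {y : ℝ} (h0 : 0 < y) (h1 : y < 1) :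
    Multipliable (fun n : ℕ => 1 - y ^ (n + 1)) := by
  simpa [sub_eq_add_neg] using multipliable_one_add_of_summable (summable_aux h0 h1)

lemma phi_ne_zero {y : ℝ} (h0 : 0 < y) (h1 : y < 1) : phi y ≠ 0 := by
  have := tprod_one_add_ne_zero_of_summable (f := fun n : ℕ => -y ^ (n + 1))
    (fun n => by simpa [sub_eq_add_neg] using one_sub_pow_ne h0 h1 n) (summable_aux h0 h1)
  simpa [phi, sub_eq_add_neg] using this

lemma tendsto_Phi {y : ℝ} (h0 : 0 < y) (h1 : y < 1) :
    Tendsto (Phi y) atTop (𝓝 (phi y)) :=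
  (multipliable_phi h0 h1).hasProd.tendsto_prod_nat

lemma Phi_ne_zero {y : ℝ} (h0 : 0 < y) (h1 : y < 1) (n : ℕ) : Phi y n ≠ 0 :=
  Finset.prod_ne_zero_iff.2 fun j _ => one_sub_pow_ne h0 h1 j

lemma FF_rec {y : ℝ} (h0 : 0 < y) (h1 : y < 1) (m : ℤ) : FF y (m - 1) = FF y m * (1 - y ^ m) := by
  rcases lt_trichotomy m 0 with h | h | h
  · simp [FF, h, show m - 1 < 0 by omega]
  · subst h; simp [FF]
  · obtain ⟨n, rfl⟩ : ∃ n : ℕ, m = n + 1 := ⟨(m - 1).toNat, by omega⟩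
    have e : ((n : ℤ) + 1).toNat = n + 1 := by omega
    have hn : ¬ ((n : ℤ) + 1 < 0) := by omega
    have h2 := Phi_ne_zero h0 h1 n
    have h3 := one_sub_pow_ne h0 h1 n
    have e2 : y ^ ((n : ℤ) + 1) = y ^ (n + 1) := by exact_mod_cast zpow_natCast y (n + 1)
    have e3 : Phi y (n + 1) = Phi y n * (1 - y ^ (n + 1)) := Finset.prod_range_succ _ _
    simp only [FF, e, hn, if_false, add_sub_cancel_right, e2, e3, Int.toNat_natCast,
      if_neg (show ¬ ((n : ℤ) < 0) by omega)]
    field_simp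

lemma FF_bdd {y : ℝ} (h0 : 0 < y) (h1 : y < 1) : ∃ C : ℝ, 0 ≤ C ∧ ∀ m, |FF y m| ≤ C := by
  have ht : Tendsto (fun n => |(Phi y n)⁻¹|) atTop (𝓝 |(phi y)⁻¹|) :=
    ((tendsto_Phi h0 h1).inv₀ (phi_ne_zero h0 h1)).abs
  obtain ⟨C, hC⟩ := ht.bddAbove_range
  have hC' : ∀ n, |(Phi y n)⁻¹| ≤ C := fun n => hC ⟨n, rfl⟩
  have hC0 : 0 ≤ C := (abs_nonneg _).trans (hC' 0)
  refine ⟨C, hC0, fun m => ?_⟩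
  unfold FF
  split_ifs
  · simpa using hC0
  · exact hC' _

lemma FF_tendsto {y : ℝ} (h0 : 0 < y) (h1 : y < 1) (k : ℤ) :
    Tendsto (fun n : ℕ => FF y (n + k)) atTop (𝓝 (phi y)⁻¹) := by
  have ht := (tendsto_Phi h0 h1).inv₀ (phi_ne_zero h0 h1)
  have h2 : Tendsto (fun n : ℕ => ((n : ℤ) + k).toNat) atTop atTop := by
    refine tendsto_atTop.2 fun b => ?_
    filter_upwards [eventually_ge_atTop (b + k.natAbs)] with n hn
    omega
  refine (ht.comp h2).congr' ?_
  filter_upwards [eventually_ge_atTop (k.natAbs)] with n hn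
  simp [FF, show ¬ ((n : ℤ) + k < 0) by omega]

lemma summable_natAbs {x : ℝ} (h0 : 0 < x) (h1 : x < 1) :
    Summable (fun k : ℤ => x ^ (k.natAbs)) := by
  apply Summable.of_nat_of_neg <;> simpa using summable_geometric_of_lt_one h0.le h1

lemma abs_TT_le {x : ℝ} (h0 : 0 < x) (h1 : x < 1) (k : ℤ) : |TT x k| ≤ x ^ k.natAbs := by
  have : |TT x k| = x ^ (3 * k ^ 2 + 2 * k) := by
    unfold TT
    rw [abs_mul, abs_zpow, abs_neg, abs_one, one_zpow, one_mul, abs_of_pos (zpow_pos h0 _)]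
  rw [this, ← zpow_natCast]
  apply zpow_le_zpow_right_of_le_one₀ h0 h1.le
  rw [Int.natCast_natAbs]
  rcases abs_cases k with ⟨h, h'⟩ | ⟨h, h'⟩ <;> rw [h] <;> nlinarith

lemma summable_TT {x : ℝ} (h0 : 0 < x) (h1 : x < 1) : Summable (TT x) :=
  Summable.of_norm_bounded (summable_natAbs h0 h1) (fun k => abs_TT_le h0 h1 k)

/-- finite form of the triple product -/
lemma finite_JTP {x : ℝ} (h0 : 0 < x) (h1 : x < 1) (n : ℕ) :
    HasSum (fun k : ℤ => TT x k * (FF (x ^ 6) (n - k) * FF (x ^ 6) (n + k)))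
      (PP x n / Phi (x ^ 6) (2 * n)) := by
  have y0 : 0 < x ^ 6 := by positivity
  have y1 : x ^ 6 < 1 := pow_lt_one₀ h0.le h1 (by simp)
  have hx : x ≠ 0 := h0.ne'
  induction n with
  | zero =>
    have : PP x 0 / Phi (x ^ 6) (2 * 0) =
      TT x 0 * (FF (x ^ 6) ((0 : ℕ) - 0) * FF (x ^ 6) ((0 : ℕ) + 0)) := by
      simp [PP, Phi, TT, FF]
    rw [this]
    apply hasSum_single (0 : ℤ)
    intro k hk
    rcases lt_or_gt_of_ne hk with h | h
    · simp [FF, h]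
    · simp [FF, h]
  | succ n ih =>
    have ihm := (Equiv.subRight (1 : ℤ)).hasSum_iff.2 ih
    have ihp := (Equiv.addRight (1 : ℤ)).hasSum_iff.2 ih
    have key := ((ih.mul_left (1 + x ^ (12 * n + 6))).sub (ihm.mul_left (x ^ (6 * n + 5)))).sub
      (ihp.mul_left (x ^ (6 * n + 1)))
    have c1 := one_sub_pow_ne y0 y1 (2 * n)
    have c2 := one_sub_pow_ne y0 y1 (2 * n + 1)
    have key2 := key.div_const ((1 - (x ^ 6) ^ (2 * n + 1)) * (1 - (x ^ 6) ^ (2 * n + 1 + 1)))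
    convert key2 using 1
    · rfl
    · funext k
      rw [eq_div_iff (mul_ne_zero c1 c2)]
      simp only [Function.comp, Equiv.subRight_apply, Equiv.coe_addRight]
      have r1 := FF_rec y0 y1 (n + 1 - k)
      have r2 := FF_rec y0 y1 (n + 1 + k)
      have r3 := FF_rec y0 y1 (n - k)
      have r4 := FF_rec y0 y1 (n + k)
      rw [show (n : ℤ) + 1 - k - 1 = n - k by ring] at r1
      rw [show (n : ℤ) + 1 + k - 1 = n + k by ring] at r2
      push_cast
      rw [show (n : ℤ) - (k - 1) = n + 1 - k by ring, show (n : ℤ) + (k - 1) = n + k - 1 by ring,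
        show (n : ℤ) - (k + 1) = n - k - 1 by ring, show (n : ℤ) + (k + 1) = n + 1 + k by ring,
        r3, r4, r1, r2]
      have t1 : TT x (k - 1) * x ^ (6 * n + 5) = - TT x k * (x ^ 6) ^ ((n : ℤ) + 1 - k) := by
        unfold TT
        rw [zpow_sub_one₀ (by norm_num), ← zpow_natCast x (6 * n + 5), ← zpow_natCast x 6,
          ← zpow_mul, mul_assoc, ← zpow_add₀ hx, ← neg_mul, mul_assoc (-(-1) ^ k), ← zpow_add₀ hx]
        push_cast
        rw [show 3 * (k - 1) ^ 2 + 2 * (k - 1) + (6 * (n : ℤ) + 5) =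
          3 * k ^ 2 + 2 * k + 6 * (n + 1 - k) by ring]
        norm_num
      have t2 : TT x (k + 1) * x ^ (6 * n + 1) = - TT x k * (x ^ 6) ^ ((n : ℤ) + 1 + k) := by
        unfold TT
        rw [zpow_add_one₀ (by norm_num), ← zpow_natCast x (6 * n + 1), ← zpow_natCast x 6,
          ← zpow_mul, mul_assoc, ← zpow_add₀ hx, ← neg_mul, mul_assoc (-(-1) ^ k), ← zpow_add₀ hx]
        push_cast
        rw [show 3 * (k + 1) ^ 2 + 2 * (k + 1) + (6 * (n : ℤ) + 1) =
          3 * k ^ 2 + 2 * k + 6 * (n + 1 + k) by ring]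
        norm_num
      have s1 : (x ^ 6) ^ ((n : ℤ) - k) = (x ^ 6) ^ ((n : ℤ) + 1 - k) / x ^ 6 := by
        rw [div_eq_mul_inv, ← zpow_sub_one₀ y0.ne']; congr 1; ring
      have s2 : (x ^ 6) ^ ((n : ℤ) + k) = (x ^ 6) ^ ((n : ℤ) + 1 + k) / x ^ 6 := by
        rw [div_eq_mul_inv, ← zpow_sub_one₀ y0.ne']; congr 1; ring
      have s3 : (x ^ 6) ^ (2 * n + 1 + 1) =
          (x ^ 6) ^ ((n : ℤ) + 1 - k) * (x ^ 6) ^ ((n : ℤ) + 1 + k) := by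
        rw [← zpow_add₀ y0.ne', ← zpow_natCast]; congr 1; push_cast; ring
      have s4 : (x ^ 6) ^ (2 * n + 1) =
          (x ^ 6) ^ ((n : ℤ) + 1 - k) * (x ^ 6) ^ ((n : ℤ) + 1 + k) / x ^ 6 := by
        rw [← s3, pow_succ (x ^ 6) (2 * n + 1)]; field_simp
      have s5 : x ^ (12 * n + 6) = (x ^ 6) ^ (2 * n + 1) := by
        rw [← pow_mul]; congr 1; ring
      rw [s5, s3, s4, s1, s2]
      generalize (x ^ 6) ^ ((n : ℤ) + 1 - k) = a at *
      generalize (x ^ 6) ^ ((n : ℤ) + 1 + k) = b at *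
      generalize FF (x ^ 6) ((n : ℤ) + 1 - k) = A at *
      generalize FF (x ^ 6) ((n : ℤ) + 1 + k) = B at *
      trans (1 + a * b / x ^ 6) * (TT x k * (A * (1 - a) * (B * (1 - b)))) -
        (TT x (k - 1) * x ^ (6 * n + 5)) * (A * (B * (1 - b) * (1 - b / x ^ 6))) -
        (TT x (k + 1) * x ^ (6 * n + 1)) * (A * (1 - a) * (1 - a / x ^ 6) * B)
      · rw [t1, t2]; ring
      · ring
    · have e1 : PP x (n + 1) = PP x n * ((1 - x ^ (6 * n + 1)) * (1 - x ^ (6 * n + 5))) :=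
        Finset.prod_range_succ _ _
      have e2 : Phi (x ^ 6) (2 * (n + 1)) = Phi (x ^ 6) (2 * n) * (1 - (x ^ 6) ^ (2 * n + 1)) *
          (1 - (x ^ 6) ^ (2 * n + 1 + 1)) := by
        rw [show 2 * (n + 1) = 2 * n + 1 + 1 by ring]
        simp only [Phi, Finset.prod_range_succ]
      have := Phi_ne_zero y0 y1 (2 * n)
      rw [e1, e2]
      field_simp
      ring

lemma prod_rel (x : ℝ) (n : ℕ) : Phi x (6 * n) * Phi (x ^ 6) n =
    PP x n * (Phi (x ^ 2) (3 * n) * Phi (x ^ 3) (2 * n)) := by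
  induction n with
  | zero => simp [Phi, PP]
  | succ n ih =>
    have e1 : PP x (n + 1) = PP x n * ((1 - x ^ (6 * n + 1)) * (1 - x ^ (6 * n + 5))) :=
        Finset.prod_range_succ _ _
    have e2 : Phi x (6 * (n + 1)) = Phi x (6 * n) * (1 - x ^ (6 * n + 1)) * (1 - x ^ (6 * n + 2)) *
        (1 - x ^ (6 * n + 3)) * (1 - x ^ (6 * n + 4)) * (1 - x ^ (6 * n + 5)) *
        (1 - x ^ (6 * n + 6)) := by
      rw [show 6 * (n + 1) = 6 * n + 1 + 1 + 1 + 1 + 1 + 1 by ring]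
      simp only [Phi, Finset.prod_range_succ]
    have e3 : Phi (x ^ 2) (3 * (n + 1)) = Phi (x ^ 2) (3 * n) * (1 - x ^ (6 * n + 2)) *
        (1 - x ^ (6 * n + 4)) * (1 - x ^ (6 * n + 6)) := by
      rw [show 3 * (n + 1) = 3 * n + 1 + 1 + 1 by ring]
      simp only [Phi, Finset.prod_range_succ]
      ring
    have e4 : Phi (x ^ 3) (2 * (n + 1)) = Phi (x ^ 3) (2 * n) * (1 - x ^ (6 * n + 3)) *
        (1 - x ^ (6 * n + 6)) := by
      rw [show 2 * (n + 1) = 2 * n + 1 + 1 by ring]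
      simp only [Phi, Finset.prod_range_succ]
      ring
    have e5 : Phi (x ^ 6) (n + 1) = Phi (x ^ 6) n * (1 - x ^ (6 * n + 6)) := by
      simp only [Phi, Finset.prod_range_succ]
      ring
    rw [e1, e2, e3, e4, e5]
    linear_combination ((1 - x ^ (6 * n + 1)) * (1 - x ^ (6 * n + 2)) *
        (1 - x ^ (6 * n + 3)) * (1 - x ^ (6 * n + 4)) * (1 - x ^ (6 * n + 5)) *
        (1 - x ^ (6 * n + 6)) ^ 2) * ih

lemma JTP {x : ℝ} (h0 : 0 < x) (h1 : x < 1) :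
    phi x * phi (x ^ 6) ^ 2 / (phi (x ^ 3) * phi (x ^ 2)) = ∑' k, TT x k := by
  have p0 : ∀ n, 0 < x ^ n := fun n => by positivity
  have p1 : ∀ n, n ≠ 0 → x ^ n < 1 := fun n hn => pow_lt_one₀ h0.le h1 hn
  have n2 := phi_ne_zero (p0 2) (p1 2 (by simp))
  have n3 := phi_ne_zero (p0 3) (p1 3 (by simp))
  have n6 := phi_ne_zero (p0 6) (p1 6 (by simp))
  have mt : ∀ m : ℕ, 0 < m → Tendsto (fun n : ℕ => m * n) atTop atTop := fun m hm =>
    tendsto_id.const_mul_atTop' hm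
  have hPP : Tendsto (PP x) atTop (𝓝 (phi x * phi (x ^ 6) / (phi (x ^ 2) * phi (x ^ 3)))) := by
    have := (((tendsto_Phi h0 h1).comp (mt 6 (by simp))).mul
      (tendsto_Phi (p0 6) (p1 6 (by simp)))).div
      (((tendsto_Phi (p0 2) (p1 2 (by simp))).comp (mt 3 (by simp))).mul
      ((tendsto_Phi (p0 3) (p1 3 (by simp))).comp (mt 2 (by simp)))) (mul_ne_zero n2 n3)
    refine this.congr fun n => ?_
    simp only [Pi.div_apply, Function.comp]
    rw [prod_rel, mul_div_assoc, div_self, mul_one]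
    exact mul_ne_zero (Phi_ne_zero (p0 2) (p1 2 (by simp)) _) (Phi_ne_zero (p0 3) (p1 3 (by simp)) _)
  have hL := hPP.div ((tendsto_Phi (p0 6) (p1 6 (by simp))).comp (mt 2 (by simp))) n6
  obtain ⟨C, hC0, hC⟩ := FF_bdd (p0 6) (p1 6 (by simp))
  have hR : Tendsto (fun n : ℕ => ∑' k : ℤ, TT x k * (FF (x ^ 6) (n - k) * FF (x ^ 6) (n + k)))
      atTop (𝓝 (∑' k : ℤ, TT x k * ((phi (x ^ 6))⁻¹ * (phi (x ^ 6))⁻¹))) := by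
    refine tendsto_tsum_of_dominated_convergence (bound := fun k => |TT x k| * (C * C))
      ((summable_TT h0 h1).abs.mul_right _) ?_ ?_
    · intro k
      have := FF_tendsto (p0 6) (p1 6 (by simp)) (-k)
      simp only [← sub_eq_add_neg] at this
      exact (this.mul (FF_tendsto (p0 6) (p1 6 (by simp)) k)).const_mul _
    · refine Eventually.of_forall fun n k => ?_
      rw [Real.norm_eq_abs, abs_mul, abs_mul]
      gcongr
      · exact hC _
      · exact hC _
  have hR' := hR.congr fun n => (finite_JTP h0 h1 n).tsum_eq
  have := tendsto_nhds_unique hL hR'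
  rw [tsum_mul_right] at this
  field_simp at this ⊢
  linear_combination this


lemma summable_exp {a : ℝ} (ha : 0 < a) (f : ℤ → ℝ) (hf : ∀ k : ℤ, |(k : ℝ)| ≤ f k) :
    Summable (fun k : ℤ => Real.exp (-a * f k)) := by
  have := summable_natAbs (Real.exp_pos (-a)) (by simpa using ha)
  refine Summable.of_nonneg_of_le (fun k => (Real.exp_pos _).le) (fun k => ?_) this
  rw [← Real.exp_nat_mul]
  apply Real.exp_le_exp.2
  have h := hf k
  rw [Nat.cast_natAbs, Int.cast_abs]
  nlinarith

lemma int_abs_le_sq (k : ℤ) : |(k : ℝ)| ≤ (k : ℝ) ^ 2 := by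
  have : |k| ≤ k ^ 2 := by
    rcases abs_cases k with ⟨h, h'⟩ | ⟨h, h'⟩ <;> rw [h] <;> nlinarith
  exact_mod_cast this

lemma summable_gauss_cos {τ : ℝ} (hτ : 0 < τ) (c : ℝ) :
    Summable (fun n : ℤ => Real.exp (-(π * τ / 6) * (n : ℝ) ^ 2) * Real.cos (2 * π * c * n)) := by
  refine Summable.of_norm_bounded (summable_exp (a := π * τ / 6) (by positivity) _ int_abs_le_sq)
    fun n => ?_
  rw [Real.norm_eq_abs, abs_mul, abs_of_pos (Real.exp_pos _)]
  exact mul_le_of_le_one_right (Real.exp_pos _).le (Real.abs_cos_le_one _)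

lemma poisson {τ : ℝ} (hτ : 0 < τ) (c : ℝ) :
    ∑' k : ℤ, Real.exp (-(π / τ) * (6 * ((k : ℝ) + c) ^ 2)) =
      Real.sqrt (τ / 6) *
        ∑' n : ℤ, Real.exp (-(π * τ / 6) * (n : ℝ) ^ 2) * Real.cos (2 * π * c * n) := by
  have ha : 0 < (((τ / 6 : ℝ) : ℂ)).re := by rw [Complex.ofReal_re]; positivity
  have ha' : 0 < τ / 6 := by positivity
  have P := Complex.tsum_exp_neg_quadratic ha (Complex.I * c)
  have e1 : ∀ n : ℤ, Complex.exp (-π * ((τ / 6 : ℝ) : ℂ) * n ^ 2 + 2 * π * (Complex.I * c) * n) =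
      Complex.exp (((-(π * τ / 6) * (n : ℝ) ^ 2 : ℝ) : ℂ) + ((2 * π * c * n : ℝ) : ℂ) * Complex.I) := by
    intro n; congr 1; push_cast; ring
  have e2 : ∀ n : ℤ, Complex.exp (-π / ((τ / 6 : ℝ) : ℂ) * (n + Complex.I * (Complex.I * c)) ^ 2) =
      ((Real.exp (-(π / τ) * (6 * ((n : ℝ) + -c) ^ 2)) : ℝ) : ℂ) := by
    intro n
    rw [Complex.ofReal_exp]; congr 1; push_cast
    rw [← mul_assoc Complex.I, Complex.I_mul_I]
    have : (τ : ℂ) ≠ 0 := by exact_mod_cast hτ.ne'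
    field_simp
  have e3 : (1 / ((τ / 6 : ℝ) : ℂ) ^ (1 / 2 : ℂ)) = ((1 / Real.sqrt (τ / 6) : ℝ) : ℂ) := by
    rw [Real.sqrt_eq_rpow, Complex.ofReal_div 1, Complex.ofReal_cpow ha'.le]; norm_num
  simp_rw [e1, e2] at P
  rw [e3, ← Complex.ofReal_tsum, ← Complex.ofReal_mul] at P
  have hs : Summable (fun n : ℤ => Complex.exp (((-(π * τ / 6) * (n : ℝ) ^ 2 : ℝ) : ℂ) +
      ((2 * π * c * n : ℝ) : ℂ) * Complex.I)) := by
    refine Summable.of_norm_bounded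
      (summable_exp (a := π * τ / 6) (by positivity) _ int_abs_le_sq) fun n => ?_
    rw [Complex.norm_exp, Complex.add_re, Complex.re_ofReal_mul, Complex.ofReal_re, Complex.I_re,
      mul_zero, add_zero]
  have R := congrArg Complex.re P
  rw [Complex.re_tsum hs, Complex.ofReal_re] at R
  have e4 : ∀ n : ℤ, (Complex.exp (((-(π * τ / 6) * (n : ℝ) ^ 2 : ℝ) : ℂ) +
      ((2 * π * c * n : ℝ) : ℂ) * Complex.I)).re =
      Real.exp (-(π * τ / 6) * (n : ℝ) ^ 2) * Real.cos (2 * π * c * n) := by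
    intro n
    rw [Complex.exp_re, Complex.add_re, Complex.add_im, Complex.re_ofReal_mul,
      Complex.im_ofReal_mul, Complex.ofReal_re, Complex.ofReal_im, Complex.I_re, Complex.I_im,
      mul_zero, add_zero, zero_add, mul_one]
  simp_rw [e4] at R
  rw [R, ← mul_assoc, mul_one_div_cancel (Real.sqrt_pos.2 ha').ne', one_mul,
    ← (Equiv.neg ℤ).tsum_eq]
  refine tsum_congr fun k => ?_
  congr 2
  simp
  ring

lemma cos_nat (k : ℤ) (θ : ℝ) : Real.cos (k * π + θ) = (-1) ^ k * Real.cos θ := by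
  rw [add_comm, Real.cos_add_int_mul_pi]

noncomputable def CC (n : ℤ) : ℝ :=
  Real.cos (2 * π * (1 / 12) * n) + Real.cos (2 * π * (5 / 12) * n) -
    2 * Real.cos (2 * π * (1 / 4) * n)

lemma CC_neg (n : ℤ) : CC (-n) = CC n := by
  unfold CC; push_cast; simp only [mul_neg, Real.cos_neg]

lemma CC_odd (k : ℤ) : CC (2 * k + 1) = 0 := by
  unfold CC
  push_cast
  have h1 : Real.cos (2 * π * (1 / 4) * (2 * k + 1)) = 0 := by
    rw [show 2 * π * (1 / 4) * (2 * (k : ℝ) + 1) = k * π + π / 2 by ring, cos_nat]; simp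
  have h2 : Real.cos (2 * π * (5 / 12) * (2 * k + 1)) =
      - Real.cos (2 * π * (1 / 12) * (2 * k + 1)) := by
    rw [show 2 * π * (5 / 12) * (2 * (k : ℝ) + 1) = ((2 * k + 1 : ℤ) : ℝ) * π +
      -(2 * π * (1 / 12) * (2 * k + 1)) by push_cast; ring, cos_nat, Real.cos_neg,
      Odd.neg_one_zpow ⟨k, rfl⟩]
    ring
  rw [h1, h2]; ring

lemma CC_six (k : ℤ) : CC (6 * k) = 0 := by
  unfold CC
  push_cast
  rw [show 2 * π * (1 / 12) * (6 * (k : ℝ)) = k * π + 0 by ring,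
    show 2 * π * (5 / 12) * (6 * (k : ℝ)) = ((2 * (2 * k) + k : ℤ) : ℝ) * π + 0 by push_cast; ring,
    show 2 * π * (1 / 4) * (6 * (k : ℝ)) = ((2 * k + k : ℤ) : ℝ) * π + 0 by push_cast; ring]
  simp only [cos_nat, zpow_add₀ (show (-1 : ℝ) ≠ 0 by norm_num), zpow_mul]
  norm_num
  ring

lemma CC_two (k : ℤ) : CC (6 * k + 2) = 3 * (-1) ^ k := by
  unfold CC
  push_cast
  rw [show 2 * π * (1 / 12) * (6 * (k : ℝ) + 2) = k * π + π / 3 by ring,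
    show 2 * π * (5 / 12) * (6 * (k : ℝ) + 2) =
      ((2 * (2 * k) + k + 2 : ℤ) : ℝ) * π + -(π / 3) by push_cast; ring,
    show 2 * π * (1 / 4) * (6 * (k : ℝ) + 2) = ((2 * k + k + 1 : ℤ) : ℝ) * π + 0 by push_cast; ring]
  simp only [cos_nat, zpow_add₀ (show (-1 : ℝ) ≠ 0 by norm_num), zpow_mul, Real.cos_neg,
    Real.cos_pi_div_three]
  norm_num
  ring

lemma dual_sum {τ : ℝ} (hτ : 0 < τ) :
    HasSum (fun n : ℤ => Real.exp (-(π * τ / 6) * (n : ℝ) ^ 2) * CC n)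
      (2 * (3 * Real.exp (-(2 * π * τ) / 3) * ∑' k, TT (Real.exp (-(2 * π * τ))) k)) := by
  set x := Real.exp (-(2 * π * τ)) with hx
  have x0 : 0 < x := Real.exp_pos _
  have x1 : x < 1 := by
    rw [hx, Real.exp_lt_one_iff]
    have : 0 < 2 * π * τ := by positivity
    linarith
  have h := ((summable_TT x0 x1).hasSum).mul_left (3 * Real.exp (-(2 * π * τ) / 3))
  set g : ℤ → ℝ := fun n : ℤ => Real.exp (-(π * τ / 6) * (n : ℝ) ^ 2) * CC n with hg
  have gneg : ∀ n, g (-n) = g n := by intro n; simp [hg, CC_neg]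
  set u : ℤ → ℝ := fun n => if n % 6 = 2 then g n else 0 with hu
  have inj : Function.Injective (fun k : ℤ => 6 * k + 2) := by intro a b hab; simp at hab; exact hab
  have hu1 : HasSum u (3 * Real.exp (-(2 * π * τ) / 3) * ∑' k, TT x k) := by
    rw [← inj.hasSum_iff]
    · convert h using 1
      · rfl
      funext k
      simp only [Function.comp, hu, if_pos (show (6 * k + 2) % 6 = 2 by omega), hg, CC_two, TT]
      rw [hx, ← Real.rpow_intCast (Real.exp _), ← Real.exp_mul, mul_comm (-(2 * π * τ))]
      have : Real.exp (-(π * τ / 6) * (((6 * k + 2 : ℤ) : ℝ)) ^ 2) =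
          Real.exp (-(2 * π * τ) / 3) *
            Real.exp (((3 * k ^ 2 + 2 * k : ℤ) : ℝ) * -(2 * π * τ)) := by
        rw [← Real.exp_add]; congr 1; push_cast; ring
      rw [this]; ring
    · intro n hn
      rw [hu]
      refine if_neg fun h6 => hn ⟨n / 6, ?_⟩
      simp only; omega
  have hu2 := (Equiv.neg ℤ).hasSum_iff.2 hu1
  have := hu1.add hu2
  rw [← two_mul] at this
  convert this using 1
  funext n
  simp only [Function.comp, Equiv.neg_apply, hu, gneg]
  have hcases : n % 2 = 1 ∨ n % 6 = 0 ∨ n % 6 = 2 ∨ n % 6 = 4 := by omega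
  rcases hcases with h' | h' | h' | h'
  · rw [if_neg (by omega), if_neg (by omega)]
    obtain ⟨k, rfl⟩ : ∃ k, n = 2 * k + 1 := ⟨n / 2, by omega⟩
    simp [hg, CC_odd]
  · rw [if_neg (by omega), if_neg (by omega)]
    obtain ⟨k, rfl⟩ : ∃ k, n = 6 * k := ⟨n / 6, by omega⟩
    simp [hg, CC_six]
  · rw [if_pos (by omega), if_neg (by omega), add_zero]
  · rw [if_neg (by omega), if_pos (by omega), zero_add]

lemma summable_shift {τ : ℝ} (hτ : 0 < τ) (c : ℝ) (h : ∀ k : ℤ, |(k : ℝ)| ≤ 6 * ((k : ℝ) + c) ^ 2) :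
    Summable (fun k : ℤ => Real.exp (-(π / τ) * (6 * ((k : ℝ) + c) ^ 2))) :=
  summable_exp (a := π / τ) (by positivity) _ h

lemma shift_bound (k : ℤ) (c : ℝ) (h0 : 1 / 12 ≤ c) (h1 : c ≤ 5 / 12) (hk : k ≠ 0) :
    |(k : ℝ)| ≤ 6 * ((k : ℝ) + c) ^ 2 := by
  rcases lt_or_gt_of_ne hk with h | h
  · have : (k : ℝ) ≤ -1 := by exact_mod_cast (show k ≤ -1 by omega)
    rw [abs_of_nonpos (by linarith)]
    nlinarith [mul_nonneg (show 0 ≤ -(k : ℝ) - c - 7 / 12 by linarith) (show 0 ≤ -(k : ℝ) - c - 7 / 12 by linarith)]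
  · have : (1 : ℝ) ≤ k := by exact_mod_cast (show 1 ≤ k by omega)
    rw [abs_of_nonneg (by linarith)]
    nlinarith

lemma shift_bound_all (k : ℤ) (c : ℝ) (h0 : 1 / 12 ≤ c) (h1 : c ≤ 5 / 12) :
    |(k : ℝ)| ≤ 6 * ((k : ℝ) + c) ^ 2 := by
  by_cases hk : k = 0
  · subst hk; simp; positivity
  · exact shift_bound k c h0 h1 hk

lemma rhs_eq {τ : ℝ} (hτ : 0 < τ) :
    (1 / Real.sqrt (2 * τ)) * (Real.exp (-Real.pi / τ) ^ ((1 : ℝ) / 24)) *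
        ∑' k : ℤ, (Real.exp (-Real.pi / τ) ^ (6 * (k : ℝ) ^ 2 + (k : ℝ)) +
            Real.exp (-Real.pi / τ) ^ (6 * (k : ℝ) ^ 2 + 5 * (k : ℝ) + 1) -
            2 * Real.exp (-Real.pi / τ) ^ (6 * (k : ℝ) ^ 2 + 3 * (k : ℝ) + 1 / 3)) =
    Real.sqrt 3 * (Real.exp (-(2 * π * τ) / 3) * ∑' k, TT (Real.exp (-(2 * π * τ))) k) := by
  have s1 := summable_shift hτ (1 / 12) (fun k => shift_bound_all k _ (by norm_num) (by norm_num))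
  have s2 := summable_shift hτ (5 / 12) (fun k => shift_bound_all k _ (by norm_num) (by norm_num))
  have s3 := summable_shift hτ (1 / 4) (fun k => shift_bound_all k _ (by norm_num) (by norm_num))
  rw [mul_assoc, ← tsum_mul_left]
  have e : ∀ k : ℤ, Real.exp (-Real.pi / τ) ^ ((1 : ℝ) / 24) *
      (Real.exp (-Real.pi / τ) ^ (6 * (k : ℝ) ^ 2 + (k : ℝ)) +
            Real.exp (-Real.pi / τ) ^ (6 * (k : ℝ) ^ 2 + 5 * (k : ℝ) + 1) -
            2 * Real.exp (-Real.pi / τ) ^ (6 * (k : ℝ) ^ 2 + 3 * (k : ℝ) + 1 / 3)) =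
      Real.exp (-(π / τ) * (6 * ((k : ℝ) + 1 / 12) ^ 2)) +
      Real.exp (-(π / τ) * (6 * ((k : ℝ) + 5 / 12) ^ 2)) -
      2 * Real.exp (-(π / τ) * (6 * ((k : ℝ) + 1 / 4) ^ 2)) := by
    intro k
    simp only [← Real.exp_mul]
    rw [mul_sub, mul_add, mul_left_comm, ← Real.exp_add, ← Real.exp_add, ← Real.exp_add]
    rw [show -π / τ * (1 / 24) + -π / τ * (6 * (k : ℝ) ^ 2 + k) =
        -(π / τ) * (6 * ((k : ℝ) + 1 / 12) ^ 2) by ring,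
      show -π / τ * (1 / 24) + -π / τ * (6 * (k : ℝ) ^ 2 + 5 * k + 1) =
        -(π / τ) * (6 * ((k : ℝ) + 5 / 12) ^ 2) by ring,
      show -π / τ * (1 / 24) + -π / τ * (6 * (k : ℝ) ^ 2 + 3 * k + 1 / 3) =
        -(π / τ) * (6 * ((k : ℝ) + 1 / 4) ^ 2) by ring]
  simp_rw [e]
  rw [(s1.add s2).tsum_sub (s3.mul_left 2), s1.tsum_add s2, tsum_mul_left, poisson hτ, poisson hτ,
    poisson hτ]
  have c1 := summable_gauss_cos hτ (1 / 12)
  have c2 := summable_gauss_cos hτ (5 / 12)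
  have c3 := summable_gauss_cos hτ (1 / 4)
  have D := (dual_sum hτ).tsum_eq
  have D' : ∑' n : ℤ, Real.exp (-(π * τ / 6) * (n : ℝ) ^ 2) * CC n =
      ∑' n : ℤ, Real.exp (-(π * τ / 6) * (n : ℝ) ^ 2) * Real.cos (2 * π * (1 / 12) * n) +
      ∑' n : ℤ, Real.exp (-(π * τ / 6) * (n : ℝ) ^ 2) * Real.cos (2 * π * (5 / 12) * n) -
      2 * ∑' n : ℤ, Real.exp (-(π * τ / 6) * (n : ℝ) ^ 2) * Real.cos (2 * π * (1 / 4) * n) := by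
    rw [← tsum_mul_left, ← c1.tsum_add c2, ← (c1.add c2).tsum_sub (c3.mul_left 2)]
    refine tsum_congr fun n => ?_
    unfold CC; ring
  rw [D] at D'
  have sq : Real.sqrt (τ / 6) * 6 = Real.sqrt 3 * Real.sqrt (2 * τ) := by
    rw [← Real.sqrt_mul (by norm_num), show 3 * (2 * τ) = τ / 6 * 6 ^ 2 by ring,
      Real.sqrt_mul (by positivity), Real.sqrt_sq (by norm_num)]
  have hs : Real.sqrt (2 * τ) ≠ 0 := (Real.sqrt_pos.2 (by positivity)).ne'
  rw [one_div_mul_eq_div, div_eq_iff hs]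
  linear_combination (-Real.sqrt (τ / 6)) * D' + (Real.exp (-(2 * π * τ) / 3) *
    ∑' k, TT (Real.exp (-(2 * π * τ))) k) * sq

lemma eta_eq (z : ℂ) (t : ℝ) (m : ℕ) (ht : 0 < t) (hm : 0 < m)
    (hz : z = m * t * Complex.I) :
    eta z = ((Real.exp (-(2 * π * t) * m / 24) * phi (Real.exp (-(2 * π * t)) ^ m) : ℝ) : ℂ) := by
  subst hz
  unfold eta phi
  have y1 : Real.exp (-(2 * π * t)) < 1 := by
    rw [Real.exp_lt_one_iff]
    have : 0 < 2 * π * t := by positivity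
    linarith
  have hmul := multipliable_phi (pow_pos (Real.exp_pos (-(2 * π * t))) m)
    (pow_lt_one₀ (Real.exp_pos _).le y1 hm.ne')
  have hmap := hmul.map_tprod Complex.ofRealHom Complex.continuous_ofReal
  simp only [Complex.ofRealHom_eq_coe] at hmap
  rw [Complex.ofReal_mul, Complex.ofReal_exp, hmap]
  congr 1
  · congr 1
    push_cast
    linear_combination (π * m * t / 12 : ℂ) * Complex.I_sq
  · refine tprod_congr fun n => ?_
    rw [← pow_mul, ← Real.exp_nat_mul]
    push_cast
    congr 2
    linear_combination (2 * π * (n + 1) * m * t : ℂ) * Complex.I_sq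

end TwoArm

open TwoArm

theorem two_arm_eta_identity (τ : ℝ) (hτ : 0 < τ) :
    (Real.sqrt 3 : ℂ) * (eta (τ * Complex.I) * eta (6 * τ * Complex.I) ^ 2) /
        (eta (3 * τ * Complex.I) * eta (2 * τ * Complex.I)) =
      ((1 / Real.sqrt (2 * τ) : ℝ) : ℂ) *
        ((Real.exp (-Real.pi / τ) ^ ((1 : ℝ) / 24) : ℝ) : ℂ) *
        ∑' k : ℤ, ((Real.exp (-Real.pi / τ) ^ (6 * (k : ℝ) ^ 2 + (k : ℝ)) +
            Real.exp (-Real.pi / τ) ^ (6 * (k : ℝ) ^ 2 + 5 * (k : ℝ) + 1) -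
            2 * Real.exp (-Real.pi / τ) ^ (6 * (k : ℝ) ^ 2 + 3 * (k : ℝ) + 1 / 3) : ℝ) : ℂ) := by
  rw [← Complex.ofReal_tsum, ← Complex.ofReal_mul, ← Complex.ofReal_mul, rhs_eq hτ,
    eta_eq (τ * Complex.I) τ 1 hτ (by simp) (by simp), eta_eq (6 * τ * Complex.I) τ 6 hτ (by simp) (by simp),
    eta_eq (3 * τ * Complex.I) τ 3 hτ (by simp) (by simp), eta_eq (2 * τ * Complex.I) τ 2 hτ (by simp) (by simp)]
  norm_cast
  have x0 : 0 < Real.exp (-(2 * π * τ)) := Real.exp_pos _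
  have x1 : Real.exp (-(2 * π * τ)) < 1 := by
    rw [Real.exp_lt_one_iff]
    have : 0 < 2 * π * τ := by positivity
    linarith
  rw [← JTP x0 x1]
  simp only [pow_one, mul_one]
  have p0 : ∀ n, 0 < Real.exp (-(2 * π * τ)) ^ n := fun n => by positivity
  have p1 : ∀ n, n ≠ 0 → Real.exp (-(2 * π * τ)) ^ n < 1 := fun n hn => pow_lt_one₀ x0.le x1 hn
  have n2 := phi_ne_zero (p0 2) (p1 2 (by simp))
  have n3 := phi_ne_zero (p0 3) (p1 3 (by simp))
  have E : Real.exp (-(2 * π * τ) / 24) * Real.exp (-(2 * π * τ) * (6 : ℕ) / 24) ^ 2 =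
      Real.exp (-(2 * π * τ) / 3) * (Real.exp (-(2 * π * τ) * (3 : ℕ) / 24) *
        Real.exp (-(2 * π * τ) * (2 : ℕ) / 24)) := by
    rw [← Real.exp_nat_mul, ← Real.exp_add, ← Real.exp_add, ← Real.exp_add]
    congr 1; push_cast; ring
  generalize Real.exp (-(2 * π * τ)) = x at *
  have q2 := Real.exp_pos (-(2 * π * τ) * (2 : ℕ) / 24)
  have q3 := Real.exp_pos (-(2 * π * τ) * (3 : ℕ) / 24)
  generalize Real.exp (-(2 * π * τ) / 24) = E1 at *
  generalize Real.exp (-(2 * π * τ) * (2 : ℕ) / 24) = E2 at *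
  generalize Real.exp (-(2 * π * τ) * (3 : ℕ) / 24) = E3 at *
  generalize Real.exp (-(2 * π * τ) * (6 : ℕ) / 24) = E6 at *
  generalize Real.exp (-(2 * π * τ) / 3) = E0 at *
  generalize phi (x ^ 2) = a2 at *
  generalize phi (x ^ 3) = a3 at *
  have q2' := q2.ne'
  have q3' := q3.ne'
  rw [mul_div_assoc]
  congr 1
  rw [← mul_div_assoc, div_eq_div_iff (by positivity) (by positivity)]
  linear_combination (phi x * phi (x ^ 6) ^ 2 * a2 * a3) * E
end

section
/- For every real x > 0, ∫₀^∞ e^{-2πx²τ/3} · (1 - √(3/2) · η(6iτ)η((3/2)iτ)/(η(2iτ)η(3iτ))) · η(2iτ) dτ = √3 · tanh(2πx/3) / (4x · cosh(πx)). -/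
open scoped Real
open MeasureTheory Filter Topology

lemma gsum_summable (a y : ℝ) (hy : 0 < y) :
    Summable (fun k : ℤ => 1 / (((k:ℝ) + a) ^ 2 + y ^ 2)) := by
  have h := EisensteinSeries.linear_right_summable ((a:ℂ) + y * Complex.I) 1 (k := 2) (by norm_num)
  have h2 := h.norm
  refine h2.congr fun k => ?_
  rw [← sq_abs y, one_div, norm_inv]
  congr 1
  have : ((((1:ℤ):ℂ)) * ((a:ℂ) + y * Complex.I) + k) = ((k + a : ℝ) : ℂ) + (y:ℝ) * Complex.I := by
    push_cast; ring
  rw [this, sq_abs, show ((2:ℤ)) = ((2:ℕ):ℤ) from rfl, zpow_natCast, norm_pow, ← Complex.normSq_eq_norm_sq,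
    Complex.normSq_add_mul_I]

lemma mem_compl (a y : ℝ) (hy : y ≠ 0) : ((a:ℂ) + y * Complex.I) ∈ Complex.integerComplement := by
  rintro ⟨n, hn⟩
  have := congrArg Complex.im hn
  simp at this
  exact hy this.symm

lemma gsum (a y : ℝ) (hy : 0 < y) :
    ∑' k : ℤ, 1 / (((k:ℝ) + a) ^ 2 + y ^ 2)
      = π / y * (Real.sinh (2 * π * y) / (Real.cosh (2 * π * y) - Real.cos (2 * π * a))) := by
  apply Complex.ofReal_injective
  set w : ℂ := (a:ℂ) + y * Complex.I with hw
  set v : ℂ := (a:ℂ) + (-y:ℝ) * Complex.I with hv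
  have hwm : w ∈ Complex.integerComplement := mem_compl a y hy.ne'
  have hvm : v ∈ Complex.integerComplement := mem_compl a (-y) (by linarith)
  have hyc : (y:ℂ) ≠ 0 := by exact_mod_cast hy.ne'
  have hIs : Complex.I ≠ 0 := Complex.I_ne_zero
  have key : ∀ k : ℤ, (((1 / (((k:ℝ) + a) ^ 2 + y ^ 2) : ℝ)) : ℂ)
      = 1 / (2 * Complex.I * y) * (1 / (v + k) - 1 / (w + k)) := by
    intro k
    have h1 : w + k ≠ 0 := Complex.integerComplement_add_ne_zero hwm k
    have h2 : v + k ≠ 0 := Complex.integerComplement_add_ne_zero hvm k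
    have h3 : ((k:ℂ) + a) ^ 2 + y ^ 2 = (v + k) * (w + k) := by
      rw [hw, hv]; push_cast; ring_nf; rw [Complex.I_sq]; ring
    push_cast
    rw [h3]
    field_simp
    rw [hw, hv]; push_cast; ring
  have hs := gsum_summable a y hy
  have hsc : Summable (fun k : ℤ => (((1 / (((k:ℝ) + a) ^ 2 + y ^ 2) : ℝ)) : ℂ)) :=
    by exact_mod_cast Complex.summable_ofReal.2 hs
  rw [Complex.ofReal_tsum]
  have H := hsc.hasSum.nat_add_neg
  have c1 := cot_series_rep' hwm
  have c2 := cot_series_rep' hvm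
  have s1 := summable_cotTerm hwm
  have s2 := summable_cotTerm hvm
  unfold cotTerm at s1 s2
  have H2 : HasSum (fun n : ℕ => (((1 / ((((n:ℤ):ℝ) + a) ^ 2 + y ^ 2) : ℝ)) : ℂ) +
      (((1 / ((((-(n:ℤ) : ℤ):ℝ) + a) ^ 2 + y ^ 2) : ℝ)) : ℂ))
      (1 / (2 * Complex.I * y) * (π * (Complex.cot (π * v) - Complex.cot (π * w))) +
        1 / (2 * Complex.I * y) * (1 / v - 1 / w)) := by
    rw [← hasSum_nat_add_iff' 1]
    have := ((s2.hasSum).sub s1.hasSum).mul_left (1 / (2 * Complex.I * y))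
    rw [← c1, ← c2] at this
    convert! this using 1
    · funext n
      rw [key, key]; push_cast; ring
    · simp only [Finset.sum_range_one]
      rw [key, key]; push_cast; ring
  have e := H.unique H2
  rw [key 0] at e
  simp only [Int.cast_zero, add_zero] at e
  rw [add_right_cancel e]
  have hsw := sin_pi_mul_ne_zero hwm
  have hsv := sin_pi_mul_ne_zero hvm
  have hd : Complex.cosh (2 * π * y) - Complex.cos (2 * π * a)
      = 2 * (Complex.sin (π * v) * Complex.sin (π * w)) := by
    have h1 : Complex.cosh (2 * π * y) = Complex.cos (π * w - π * v) := by
      rw [← Complex.cos_mul_I]; congr 1; rw [hw, hv]; push_cast; ring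
    have h2 : Complex.cos (2 * π * a) = Complex.cos (π * w + π * v) := by
      congr 1; rw [hw, hv]; push_cast; ring
    rw [h1, h2, Complex.cos_sub, Complex.cos_add]; ring
  have hn : Complex.cot (π * v) - Complex.cot (π * w)
      = 2 * Complex.I * Complex.sinh (2 * π * y) / (2 * (Complex.sin (π * v) * Complex.sin (π * w))) := by
    have : Complex.I * Complex.sinh (2 * π * y) = Complex.sin (π * w - π * v) := by
      rw [mul_comm, ← Complex.sin_mul_I]; congr 1; rw [hw, hv]; push_cast; ring
    rw [mul_assoc, this, Complex.sin_sub, Complex.cot, Complex.cot]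
    field_simp
    try ring
  push_cast
  rw [hd, hn]
  field_simp

noncomputable def theta (t a : ℝ) : ℝ := ∑' k : ℤ, Real.exp (-(t * ((k:ℝ) + a) ^ 2))

lemma theta_laplace (x a : ℝ) (hx : 0 < x) :
    IntegrableOn (fun τ : ℝ => Real.exp (-(2 * π * x ^ 2 * τ / 3)) * theta (24 * π * τ) a) (Set.Ioi 0) ∧
    ∫ τ in Set.Ioi (0:ℝ), Real.exp (-(2 * π * x ^ 2 * τ / 3)) * theta (24 * π * τ) a =
      1 / (24 * π) * ∑' k : ℤ, 1 / (((k:ℝ) + a) ^ 2 + (x / 6) ^ 2) := by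
  have hs := gsum_summable a (x / 6) (by positivity)
  have hpi := Real.pi_pos
  set b : ℤ → ℝ := fun k => 24 * π * (((k:ℝ) + a) ^ 2 + (x / 6) ^ 2) with hb
  have hbpos : ∀ k, 0 < b k := fun k => by simp only [hb]; positivity
  have hint : ∀ k, IntegrableOn (fun τ : ℝ => Real.exp (-(b k) * τ)) (Set.Ioi 0) := fun k =>
    integrableOn_exp_mul_Ioi (by linarith [hbpos k]) 0
  have hval : ∀ k, ∫ τ in Set.Ioi (0:ℝ), Real.exp (-(b k) * τ) =
      1 / (24 * π) * (1 / (((k:ℝ) + a) ^ 2 + (x / 6) ^ 2)) := fun k => by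
    rw [integral_exp_mul_Ioi (by linarith [hbpos k]) 0]
    have := hbpos k
    simp only [hb] at this ⊢
    rw [mul_zero, Real.exp_zero, neg_div_neg_eq]
    field_simp
  have hsum : Summable fun k => ∫ τ in Set.Ioi (0:ℝ), ‖Real.exp (-(b k) * τ)‖ := by
    simp only [Real.norm_eq_abs, Real.abs_exp, hval]
    exact hs.mul_left _
  have H := hasSum_integral_of_summable_integral_norm (μ := volume.restrict (Set.Ioi (0:ℝ))) hint hsum
  have hfun : ∀ τ : ℝ, ∑' k, Real.exp (-(b k) * τ) =
      Real.exp (-(2 * π * x ^ 2 * τ / 3)) * theta (24 * π * τ) a := fun τ => by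
    rw [theta, ← tsum_mul_left]
    refine tsum_congr fun k => ?_
    rw [← Real.exp_add]; congr 1; simp only [hb]; ring
  simp only [hfun, hval] at H
  have H2 := H.tsum_eq
  rw [tsum_mul_left] at H2
  refine ⟨?_, H2.symm⟩
  by_contra hcon
  rw [IntegrableOn] at hcon
  rw [integral_undef hcon] at H2
  have : 0 < ∑' k : ℤ, 1 / (((k:ℝ) + a) ^ 2 + (x / 6) ^ 2) :=
    hs.tsum_pos (fun k => by positivity) 0 (by positivity)
  have : 0 < 1 / (24 * π) * ∑' k : ℤ, 1 / (((k:ℝ) + a) ^ 2 + (x / 6) ^ 2) := by positivity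
  linarith

lemma theta_summable (t a : ℝ) (ht : 0 < t) :
    Summable (fun k : ℤ => Real.exp (-(t * ((k:ℝ) + a) ^ 2))) := by
  have h := (gsum_summable a 1 one_pos).mul_left (1 / t + 1)
  refine Summable.of_nonneg_of_le (fun k => (Real.exp_pos _).le) (fun k => ?_) h
  rw [Real.exp_neg, mul_one_div, inv_eq_one_div, div_le_div_iff₀ (Real.exp_pos _) (by positivity)]
  have := Real.add_one_le_exp (t * ((k:ℝ) + a) ^ 2)
  calc 1 * (((k:ℝ) + a) ^ 2 + 1 ^ 2) ≤ (1 / t + 1) * (t * ((k:ℝ) + a) ^ 2 + 1) := by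
        have h1 : 0 < 1 / t := by positivity
        have h2 : 0 ≤ t * ((k:ℝ) + a) ^ 2 := by positivity
        have : 1 / t * (t * ((k:ℝ) + a) ^ 2) = ((k:ℝ) + a) ^ 2 := by field_simp
        nlinarith
    _ ≤ _ := by gcongr

lemma theta_tendsto (t a : ℝ) (ht : 0 < t) :
    Filter.Tendsto (fun N : ℕ => ∑ j ∈ Finset.range N, (Real.exp (-(t * ((j:ℝ) + a) ^ 2)) +
      Real.exp (-(t * ((j:ℝ) + 1 - a) ^ 2)))) Filter.atTop (nhds (theta t a)) := by
  have h := (theta_summable t a ht).hasSum.nat_add_neg_add_one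
  convert h.tendsto_sum_nat using 6 with N j
  all_goals first | rfl | (push_cast; ring)

noncomputable def PP (q : ℝ) (n : ℕ) : ℝ :=
  ∏ k ∈ Finset.range n, ((1 - q ^ (2 * k + 2)) / (1 - q ^ (2 * k + 1)))

lemma PP_succ (q : ℝ) (n : ℕ) :
    PP q (n + 1) = PP q n * ((1 - q ^ (2 * n + 2)) / (1 - q ^ (2 * n + 1))) := by
  rw [PP, Finset.prod_range_succ, ← PP]

lemma shanks (q : ℝ) (h1 : ∀ n : ℕ, 1 - q ^ (2 * n + 1) ≠ 0)
    (h2 : ∀ n : ℕ, 1 - q ^ (2 * n + 2) ≠ 0) (n : ℕ) :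
    ∑ m ∈ Finset.range n, (q ^ (m * (2 * m + 1)) + q ^ ((m + 1) * (2 * m + 1))) =
      ∑ s ∈ Finset.range n, PP q n / PP q s * q ^ (s * (2 * n + 1)) := by
  have hP : ∀ s, PP q s ≠ 0 := fun s => by
    rw [PP]; exact Finset.prod_ne_zero_iff.2 fun k _ => div_ne_zero (h2 k) (h1 k)
  induction n with
  | zero => simp
  | succ n ih =>
    rw [Finset.sum_range_succ, ih, Finset.sum_range_succ _ n]
    have tel : ∀ N : ℕ, ∑ s ∈ Finset.range N, (PP q (n + 1) / PP q s * q ^ (s * (2 * (n + 1) + 1)) -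
        PP q n / PP q s * q ^ (s * (2 * n + 1))) =
        PP q n / PP q N * q ^ (N * (2 * n + 1)) * ((1 - q ^ (2 * N)) / (1 - q ^ (2 * n + 1))) := by
      intro N
      induction N with
      | zero => simp
      | succ N ihN =>
        rw [Finset.sum_range_succ, ihN, PP_succ, PP_succ q N]
        have a1 := h1 n
        have a2 := h1 N
        have a3 := h2 N
        have a4 := hP n
        have a5 := hP N
        have e1 : q ^ (N * (2 * (n + 1) + 1)) = q ^ (N * (2 * n + 1)) * q ^ (2 * N) := by ring
        have e2 : q ^ ((N + 1) * (2 * n + 1)) = q ^ (N * (2 * n + 1)) * q ^ (2 * n + 1) := by ring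
        have e3 : q ^ (2 * (N + 1)) = q ^ (2 * N + 2) := by ring
        rw [e1, e2, e3]
        field_simp
        ring
    have t := tel n
    rw [Finset.sum_sub_distrib, sub_eq_iff_eq_add] at t
    rw [t, PP_succ]
    have a1 := h1 n
    have a4 := hP n
    field_simp
    ring

lemma gauss_tendsto (r : ℝ) (h0 : 0 < r) (h1 : r < 1) :
    Tendsto (fun N : ℕ => ∑ j ∈ Finset.range N, (r ^ (2 * j * (4 * j + 1)) - r ^ ((2 * j + 1) * (4 * j + 1))
      - r ^ ((2 * j + 1) * (4 * j + 3)) + r ^ ((2 * j + 2) * (4 * j + 3)))) atTop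
      (𝓝 ((∏' k : ℕ, (1 - r ^ (2 * k + 2))) / (∏' k : ℕ, (1 + r ^ (2 * k + 1))))) := by
  have hf : ∀ k : ℕ, (1 - (-r) ^ (2 * k + 2)) / (1 - (-r) ^ (2 * k + 1)) =
      (1 - r ^ (2 * k + 2)) / (1 + r ^ (2 * k + 1)) := fun k => by
    rw [Even.neg_pow ⟨k + 1, by ring⟩, Odd.neg_pow ⟨k, rfl⟩, sub_neg_eq_add]
  have hlt : ∀ k : ℕ, k ≠ 0 → r ^ k < 1 := fun k hk => pow_lt_one₀ h0.le h1 hk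
  have hP : ∀ n, PP (-r) n = ∏ k ∈ Finset.range n, ((1 - r ^ (2 * k + 2)) / (1 + r ^ (2 * k + 1))) :=
    fun n => by rw [PP]; exact Finset.prod_congr rfl fun k _ => hf k
  have fpos : ∀ k : ℕ, 0 < (1 - r ^ (2 * k + 2)) / (1 + r ^ (2 * k + 1)) := fun k =>
    div_pos (by linarith [hlt (2 * k + 2) (by omega)]) (by positivity)
  have fle : ∀ k : ℕ, (1 - r ^ (2 * k + 2)) / (1 + r ^ (2 * k + 1)) ≤ 1 := fun k => by
    rw [div_le_one (by positivity)]
    have : 0 < r ^ (2 * k + 2) := by positivity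
    have : 0 < r ^ (2 * k + 1) := by positivity
    linarith
  have Ppos : ∀ n, 0 < PP (-r) n := fun n => by
    rw [hP]; exact Finset.prod_pos fun k _ => fpos k
  have Panti : Antitone (PP (-r)) := antitone_nat_of_succ_le fun n => by
    rw [PP_succ, hf]; exact mul_le_of_le_one_right (Ppos n).le (fle n)
  have S := shanks (-r) (fun n => by
      rw [Odd.neg_pow ⟨n, rfl⟩]; have : 0 < r ^ (2 * n + 1) := by positivity
      linarith) (fun n => by
      rw [Even.neg_pow ⟨n + 1, by ring⟩]; linarith [hlt (2 * n + 2) (by omega)])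
  have sr : ∀ c : ℕ, Summable fun k : ℕ => r ^ (2 * k + c) := fun c => by
    have := (summable_geometric_of_lt_one (sq_nonneg r) (by nlinarith : r ^ 2 < 1)).mul_right (r ^ c)
    refine this.congr fun k => by rw [← pow_mul, ← pow_add]
  have m1 : Multipliable fun k : ℕ => 1 - r ^ (2 * k + 2) := by
    simp only [sub_eq_add_neg]
    exact Real.multipliable_one_add_of_summable (sr 2).neg
  have m2 : Multipliable fun k : ℕ => 1 + r ^ (2 * k + 1) :=
    Real.multipliable_one_add_of_summable (sr 1)
  have hB : (∏' k : ℕ, (1 + r ^ (2 * k + 1))) ≠ 0 := by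
    refine tprod_one_add_ne_zero_of_summable (fun k => ?_) (sr 1).norm
    have : 0 < r ^ (2 * k + 1) := by positivity
    linarith
  have PT : Tendsto (PP (-r)) atTop
      (𝓝 ((∏' k : ℕ, (1 - r ^ (2 * k + 2))) / (∏' k : ℕ, (1 + r ^ (2 * k + 1))))) := by
    have := m1.hasProd.tendsto_prod_nat.div m2.hasProd.tendsto_prod_nat hB
    refine this.congr fun n => ?_
    rw [hP, Finset.prod_div_distrib]; rfl
  have FT : Tendsto (fun n : ℕ => ∑ s ∈ Finset.range (n + 1), PP (-r) (n + 1) / PP (-r) s *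
      (-r) ^ (s * (2 * (n + 1) + 1))) atTop
      (𝓝 ((∏' k : ℕ, (1 - r ^ (2 * k + 2))) / (∏' k : ℕ, (1 + r ^ (2 * k + 1))))) := by
    have small : Tendsto (fun n : ℕ => ∑ s ∈ Finset.range n, PP (-r) (n + 1) / PP (-r) (s + 1) *
      (-r) ^ ((s + 1) * (2 * (n + 1) + 1))) atTop (𝓝 0) := by
      refine squeeze_zero_norm (a := fun n : ℕ => n * r ^ n) (fun n => ?_)
        (tendsto_self_mul_const_pow_of_lt_one h0.le h1)
      have : (n : ℝ) * r ^ n = ∑ s ∈ Finset.range n, r ^ n := by simp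
      rw [this]
      refine norm_sum_le_of_le _ fun s hs => ?_
      rw [norm_mul, norm_pow, norm_neg, Real.norm_of_nonneg h0.le, Real.norm_of_nonneg
        (div_pos (Ppos _) (Ppos _)).le]
      have : PP (-r) (n + 1) / PP (-r) (s + 1) ≤ 1 := by
        rw [div_le_one (Ppos _)]
        exact Panti (by have := Finset.mem_range.1 hs; omega)
      calc _ ≤ 1 * r ^ ((s + 1) * (2 * (n + 1) + 1)) := by gcongr
        _ ≤ r ^ n := by
          rw [one_mul]
          exact pow_le_pow_of_le_one h0.le h1.le (by nlinarith)
    have := (small.add (PT.comp (tendsto_add_atTop_nat 1)))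
    rw [zero_add] at this
    refine this.congr fun n => ?_
    rw [Finset.sum_range_succ']
    simp [PP]
  have T : Tendsto (fun n : ℕ => n * 2 + 1) atTop atTop :=
    tendsto_atTop_mono (fun n => by omega : ∀ n : ℕ, n ≤ n * 2 + 1) tendsto_id
  have := FT.comp T
  rw [← tendsto_add_atTop_iff_nat 1]
  refine this.congr fun n => ?_
  simp only [Function.comp]
  rw [← S, show n * 2 + 1 + 1 = (n + 1) * 2 by ring]
  generalize n + 1 = N
  induction N with
  | zero => simp
  | succ N ih =>
    rw [add_mul, one_mul, Finset.sum_range_succ, Finset.sum_range_succ, ih, Finset.sum_range_succ]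
    rw [Even.neg_pow (n := N * 2 * _) ⟨N * (2 * (N * 2) + 1), by ring⟩,
      Odd.neg_pow (n := (N * 2 + 1) * (2 * (N * 2) + 1)) ⟨4 * N * N + 3 * N, by ring⟩,
      Odd.neg_pow (n := (N * 2 + 1) * (2 * (N * 2 + 1) + 1)) ⟨4 * N * N + 5 * N + 1, by ring⟩,
      Even.neg_pow (n := (N * 2 + 1 + 1) * (2 * (N * 2 + 1) + 1)) ⟨(N + 1) * (4 * N + 3), by ring⟩]
    ring

lemma pent_tendsto (r : ℝ) (h0 : 0 < r) (h1 : r < 1) :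
    Tendsto (fun N : ℕ => ∑ j ∈ Finset.range N, (r ^ (j * (6 * j + 1)) - r ^ ((2 * j + 1) * (3 * j + 1))
      - r ^ ((2 * j + 1) * (3 * j + 2)) + r ^ ((j + 1) * (6 * j + 5)))) atTop
      (𝓝 (∏' k : ℕ, (1 - r ^ (k + 1)))) := by
  have hle : ∀ k : ℕ, r ^ k ≤ 1 := fun k => pow_le_one₀ h0.le h1.le
  have p1 : ∀ k : ℕ, pentagonal (k + 1) = ((k + 1) * (3 * k + 2) / 2) := by grind [pentagonal_def]
  have p2 : ∀ k : ℕ, pentagonal (-k) = (k * (3 * k + 1) / 2) := by grind [pentagonal_neg]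
  have hg := summable_geometric_of_lt_one h0.le h1
  have prodle : ∀ k n : ℕ, ‖∏ i ∈ Finset.range (n + 1), (1 - r ^ (k + i + 1))‖ ≤ 1 := fun k n => by
    rw [Real.norm_of_nonneg (Finset.prod_nonneg fun i _ => by linarith [hle (k + i + 1)])]
    refine Finset.prod_le_one (fun i _ => by linarith [hle (k + i + 1)]) fun i _ => ?_
    have : 0 < r ^ (k + i + 1) := by positivity
    linarith
  have tb : ∀ k n : ℕ, ‖r ^ ((k + 1) * n) * ∏ i ∈ Finset.range (n + 1), (1 - r ^ (k + i + 1))‖ ≤ r ^ n :=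
    fun k n => by
    rw [norm_mul, norm_pow, Real.norm_of_nonneg h0.le]
    calc _ ≤ r ^ ((k + 1) * n) * 1 := by gcongr; exact prodle k n
      _ ≤ _ := by rw [mul_one]; exact pow_le_pow_of_le_one h0.le h1.le (by nlinarith)
  have hrhs : Summable fun k : ℕ ↦ (-1) ^ k * (r ^ pentagonal (-k) - r ^ pentagonal (k + 1)) := by
    refine Summable.of_norm_bounded (g := fun k => r ^ k + r ^ k) (hg.add hg) fun k => ?_
    rw [norm_mul, norm_pow, norm_neg, norm_one, one_pow, one_mul]
    refine (norm_sub_le _ _).trans ?_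
    rw [norm_pow, norm_pow, Real.norm_of_nonneg h0.le, p1, p2]
    gcongr ?_ + ?_
    · exact pow_le_pow_of_le_one h0.le h1.le (by rw [Nat.le_div_iff_mul_le two_pos]; nlinarith [sq_nonneg k, Nat.le_mul_self k])
    · exact pow_le_pow_of_le_one h0.le h1.le (by rw [Nat.le_div_iff_mul_le two_pos]; nlinarith)
  have H := Pentagonal.tprod_one_sub_pow (x := r) (tendsto_pow_atTop_nhds_zero_of_lt_one h0.le h1)
    (fun k => Summable.of_norm_bounded hg (tb k))
    (fun k => by
      simp only [sub_eq_add_neg]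
      refine Real.multipliable_one_add_of_summable (Summable.neg ?_)
      refine (hg.mul_right (r ^ (k + 1))).congr fun n => by rw [← pow_add, add_assoc])
    hrhs
    (by
      refine squeeze_zero_norm (a := fun n : ℕ => r ^ n * ∑' k : ℕ, r ^ k) (fun n => ?_) (by
        simpa using (tendsto_pow_atTop_nhds_zero_of_lt_one h0.le h1).mul_const (∑' k : ℕ, r ^ k))
      rw [norm_mul, norm_mul, norm_pow, norm_neg, norm_one, one_pow, one_mul, norm_pow,
        Real.norm_of_nonneg h0.le]
      refine mul_le_mul ?_ ?_ (norm_nonneg _) (by positivity)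
      · refine pow_le_pow_of_le_one h0.le h1.le (by rw [Nat.le_div_iff_mul_le two_pos]; nlinarith)
      · exact tsum_of_norm_bounded hg.hasSum (tb n))
  rw [H]
  have T : Tendsto (fun n : ℕ => n * 2) atTop atTop :=
    tendsto_atTop_mono (fun n => by omega : ∀ n : ℕ, n ≤ n * 2) tendsto_id
  refine (hrhs.hasSum.tendsto_sum_nat.comp T).congr fun N => ?_
  simp only [Function.comp]
  induction N with
  | zero => simp
  | succ N ih =>
    rw [add_mul, one_mul, Finset.sum_range_succ, Finset.sum_range_succ, ih, Finset.sum_range_succ]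
    rw [p1, p1, p2, p2, Even.neg_one_pow (n := N * 2) ⟨N, by ring⟩, Odd.neg_one_pow (n := N * 2 + 1) ⟨N, by ring⟩]
    rw [show N * 2 * (3 * (N * 2) + 1) / 2 = N * (6 * N + 1) by
        apply Nat.div_eq_of_eq_mul_left two_pos; ring,
      show (N * 2 + 1) * (3 * (N * 2) + 2) / 2 = (2 * N + 1) * (3 * N + 1) by
        apply Nat.div_eq_of_eq_mul_left two_pos; ring,
      show (N * 2 + 1) * (3 * (N * 2 + 1) + 1) / 2 = (2 * N + 1) * (3 * N + 2) by
        apply Nat.div_eq_of_eq_mul_left two_pos; ring,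
      show (N * 2 + 1 + 1) * (3 * (N * 2 + 1) + 2) / 2 = (N + 1) * (6 * N + 5) by
        apply Nat.div_eq_of_eq_mul_left two_pos; ring]
    ring

lemma prod_identity (r : ℝ) (h0 : 0 < r) (h1 : r < 1) :
    (∏' k : ℕ, (1 - r ^ (k + 1))) * (∏' k : ℕ, (1 - (r ^ 4) ^ (k + 1))) / (∏' k : ℕ, (1 - (r ^ 2) ^ (k + 1)))
     = (∏' k : ℕ, (1 - r ^ (2 * k + 2))) / (∏' k : ℕ, (1 + r ^ (2 * k + 1))) := by
  have hlt : ∀ k : ℕ, k ≠ 0 → r ^ k < 1 := fun k hk => pow_lt_one₀ h0.le h1 hk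
  have sr : ∀ d c : ℕ, d ≠ 0 → Summable fun k : ℕ => r ^ (d * k + c) := fun d c hd => by
    have := (summable_geometric_of_lt_one (pow_nonneg h0.le d) (hlt d hd)).mul_right (r ^ c)
    refine this.congr fun k => by rw [← pow_mul, ← pow_add]
  have m : ∀ d c : ℕ, d ≠ 0 → Multipliable fun k : ℕ => 1 - r ^ (d * k + c) := fun d c hd => by
    simp only [sub_eq_add_neg]
    exact Real.multipliable_one_add_of_summable (sr d c hd).neg
  have m2 : Multipliable fun k : ℕ => 1 + r ^ (2 * k + 1) :=
    Real.multipliable_one_add_of_summable (sr 2 1 two_ne_zero)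
  have hB : (∏' k : ℕ, (1 + r ^ (2 * k + 1))) ≠ 0 := by
    refine tprod_one_add_ne_zero_of_summable (fun k => ?_) (sr 2 1 two_ne_zero).norm
    have : 0 < r ^ (2 * k + 1) := by positivity
    linarith
  have hF : (∏' k : ℕ, (1 - r ^ (2 * k + 2))) ≠ 0 := by
    simp only [sub_eq_add_neg]
    refine tprod_one_add_ne_zero_of_summable (fun k => ?_) (sr 2 2 two_ne_zero).neg.norm
    linarith [hlt (2 * k + 2) (by omega)]
  have e2 : (∏' k : ℕ, (1 - (r ^ 2) ^ (k + 1))) = ∏' k : ℕ, (1 - r ^ (2 * k + 2)) :=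
    tprod_congr fun k => by rw [← pow_mul]; ring_nf
  have e4 : (∏' k : ℕ, (1 - (r ^ 4) ^ (k + 1))) = ∏' k : ℕ, (1 - r ^ (4 * k + 4)) :=
    tprod_congr fun k => by rw [← pow_mul]; ring_nf
  have s1 : (∏' k : ℕ, (1 - r ^ (2 * k + 1))) * (∏' k : ℕ, (1 - r ^ (2 * k + 2))) =
      ∏' k : ℕ, (1 - r ^ (k + 1)) :=
    tprod_even_mul_odd (f := fun k => 1 - r ^ (k + 1)) (m 2 1 two_ne_zero) (m 2 2 two_ne_zero)
  have s2 : (∏' k : ℕ, (1 - r ^ (4 * k + 2))) * (∏' k : ℕ, (1 - r ^ (4 * k + 4))) =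
      ∏' k : ℕ, (1 - r ^ (2 * k + 2)) := by
    have a1 : ∀ k : ℕ, 1 - r ^ (2 * (2 * k) + 2) = 1 - r ^ (4 * k + 2) := fun k => by ring_nf
    have a2 : ∀ k : ℕ, 1 - r ^ (2 * (2 * k + 1) + 2) = 1 - r ^ (4 * k + 4) := fun k => by ring_nf
    have := tprod_even_mul_odd (f := fun k => 1 - r ^ (2 * k + 2))
      (by simp only [a1]; exact m 4 2 four_ne_zero) (by simp only [a2]; exact m 4 4 four_ne_zero)
    simpa only [a1, a2] using this
  have s3 : (∏' k : ℕ, (1 - r ^ (2 * k + 1))) * (∏' k : ℕ, (1 + r ^ (2 * k + 1))) =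
      ∏' k : ℕ, (1 - r ^ (4 * k + 2)) := by
    rw [← (m 2 1 two_ne_zero).tprod_mul m2]
    exact tprod_congr fun k => by ring
  rw [e2, e4, div_eq_div_iff hF hB, ← s1]
  calc _ = ((∏' k : ℕ, (1 - r ^ (2 * k + 1))) * (∏' k : ℕ, (1 + r ^ (2 * k + 1)))) *
        (∏' k : ℕ, (1 - r ^ (4 * k + 4))) * (∏' k : ℕ, (1 - r ^ (2 * k + 2))) := by ring
    _ = _ := by rw [s3, s2]

noncomputable def etaR (s : ℝ) : ℝ :=
  Real.exp (-(π * s / 12)) * ∏' n : ℕ, (1 - Real.exp (-(2 * π * s)) ^ (n + 1))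

lemma eta_real (z : ℂ) (s : ℝ) (hs : 0 < s) (h : z = s * Complex.I) : eta z = (etaR s : ℂ) := by
  have hpi := Real.pi_pos
  have h1 : Real.exp (-(2 * π * s)) < 1 := by
    rw [Real.exp_lt_one_iff]
    have : 0 < 2 * π * s := by positivity
    linarith
  have hm : Multipliable fun n : ℕ => (1 - Real.exp (-(2 * π * s)) ^ (n + 1)) := by
    simp only [sub_eq_add_neg]
    exact Real.multipliable_one_add_of_summable
      ((summable_nat_add_iff 1).2 (summable_geometric_of_lt_one (Real.exp_pos _).le h1)).neg
  have hc : ((∏' n : ℕ, (1 - Real.exp (-(2 * π * s)) ^ (n + 1)) : ℝ) : ℂ) =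
      ∏' n : ℕ, ((1 - Real.exp (-(2 * π * s)) ^ (n + 1) : ℝ) : ℂ) :=
    hm.map_tprod Complex.ofRealHom Complex.continuous_ofReal
  rw [eta, etaR, Complex.ofReal_mul, hc, h]
  congr 1
  · rw [Complex.ofReal_exp]; congr 1; push_cast; ring_nf; rw [Complex.I_sq]; ring
  · refine tprod_congr fun n => ?_
    push_cast
    rw [← Complex.exp_nat_mul]
    congr 2; push_cast; ring_nf; rw [Complex.I_sq]; ring

lemma integral_four (f₁ f₂ f₃ f₄ : ℝ → ℝ) (c : ℝ) (h₁ : IntegrableOn f₁ (Set.Ioi 0))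
    (h₂ : IntegrableOn f₂ (Set.Ioi 0)) (h₃ : IntegrableOn f₃ (Set.Ioi 0))
    (h₄ : IntegrableOn f₄ (Set.Ioi 0)) :
    ∫ τ in Set.Ioi (0:ℝ), ((f₁ τ - f₂ τ) - c * (f₃ τ - f₄ τ)) =
      ((∫ τ in Set.Ioi (0:ℝ), f₁ τ) - ∫ τ in Set.Ioi (0:ℝ), f₂ τ) -
        c * ((∫ τ in Set.Ioi (0:ℝ), f₃ τ) - ∫ τ in Set.Ioi (0:ℝ), f₄ τ) := by
  rw [← integral_sub h₁ h₂, ← integral_sub h₃ h₄, ← integral_const_mul,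
    ← integral_sub]
  · exact h₁.sub h₂
  · exact (h₃.sub h₄).const_mul c

lemma etaR_ne_zero (s : ℝ) (hs : 0 < s) : etaR s ≠ 0 := by
  have hpi := Real.pi_pos
  have h1 : Real.exp (-(2 * π * s)) < 1 := by
    rw [Real.exp_lt_one_iff]
    have : 0 < 2 * π * s := by positivity
    linarith
  set r := Real.exp (-(2 * π * s)) with hr
  have h0 : 0 < r := Real.exp_pos _
  refine mul_ne_zero (Real.exp_ne_zero _) ?_
  simp only [sub_eq_add_neg]
  refine tprod_one_add_ne_zero_of_summable (fun k => ?_) ?_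
  · have : r ^ (k + 1) < 1 := pow_lt_one₀ h0.le h1 (by omega)
    linarith
  · exact ((summable_nat_add_iff 1).2 (summable_geometric_of_lt_one h0.le h1)).neg.norm

lemma exp_pow_eq (u v w : ℝ) (n : ℕ) (h : v + n * u = w) :
    Real.exp v * Real.exp u ^ n = Real.exp w := by
  rw [← Real.exp_nat_mul, ← Real.exp_add, h]

lemma etaR_two (τ : ℝ) (hτ : 0 < τ) :
    etaR (2 * τ) = theta (24 * π * τ) (1 / 12) - theta (24 * π * τ) (7 / 12) := by
  have hpi := Real.pi_pos
  have ht : 0 < 24 * π * τ := by positivity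
  have h1 : Real.exp (-(2 * π * (2 * τ))) < 1 := by
    rw [Real.exp_lt_one_iff]
    have : 0 < 2 * π * (2 * τ) := by positivity
    linarith
  have H := (pent_tendsto _ (Real.exp_pos _) h1).const_mul (Real.exp (-(π * (2 * τ) / 12)))
  have K := (theta_tendsto _ (1 / 12) ht).sub (theta_tendsto _ (7 / 12) ht)
  refine tendsto_nhds_unique H (K.congr fun N => ?_)
  rw [← Finset.sum_sub_distrib, Finset.mul_sum]
  refine Finset.sum_congr rfl fun j _ => ?_
  rw [mul_add, mul_sub, mul_sub,
    exp_pow_eq _ _ (-(24 * π * τ * ((j:ℝ) + 1 / 12) ^ 2)) _ (by push_cast; ring),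
    exp_pow_eq _ _ (-(24 * π * τ * ((j:ℝ) + 1 - 7 / 12) ^ 2)) _ (by push_cast; ring),
    exp_pow_eq _ _ (-(24 * π * τ * ((j:ℝ) + 7 / 12) ^ 2)) _ (by push_cast; ring),
    exp_pow_eq _ _ (-(24 * π * τ * ((j:ℝ) + 1 - 1 / 12) ^ 2)) _ (by push_cast; ring)]
  ring

lemma etaR_quot (τ : ℝ) (hτ : 0 < τ) :
    etaR (3 / 2 * τ) * etaR (6 * τ) / etaR (3 * τ) =
      theta (24 * π * τ) (1 / 8) - theta (24 * π * τ) (3 / 8) := by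
  have hpi := Real.pi_pos
  have ht : 0 < 24 * π * τ := by positivity
  have h1 : Real.exp (-(2 * π * (3 / 2 * τ))) < 1 := by
    rw [Real.exp_lt_one_iff]
    have : 0 < 2 * π * (3 / 2 * τ) := by positivity
    linarith
  have H := (gauss_tendsto _ (Real.exp_pos _) h1).const_mul (Real.exp (-(3 * π * τ / 8)))
  rw [← prod_identity _ (Real.exp_pos _) h1] at H
  have e2 : Real.exp (-(2 * π * (3 / 2 * τ))) ^ 2 = Real.exp (-(2 * π * (3 * τ))) := by
    rw [← Real.exp_nat_mul]; congr 1; push_cast; ring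
  have e4 : Real.exp (-(2 * π * (3 / 2 * τ))) ^ 4 = Real.exp (-(2 * π * (6 * τ))) := by
    rw [← Real.exp_nat_mul]; congr 1; push_cast; ring
  have e : Real.exp (-(3 * π * τ / 8)) = Real.exp (-(π * (3 / 2 * τ) / 12)) *
      Real.exp (-(π * (6 * τ) / 12)) / Real.exp (-(π * (3 * τ) / 12)) := by
    rw [← Real.exp_add, ← Real.exp_sub]; congr 1; ring
  have L : etaR (3 / 2 * τ) * etaR (6 * τ) / etaR (3 * τ) = Real.exp (-(3 * π * τ / 8)) *
      ((∏' k : ℕ, (1 - Real.exp (-(2 * π * (3 / 2 * τ))) ^ (k + 1))) *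
        (∏' k : ℕ, (1 - (Real.exp (-(2 * π * (3 / 2 * τ))) ^ 4) ^ (k + 1))) /
        (∏' k : ℕ, (1 - (Real.exp (-(2 * π * (3 / 2 * τ))) ^ 2) ^ (k + 1)))) := by
    rw [e, e2, e4, etaR, etaR, etaR, div_mul_div_comm]
    congr 1
    ring
  rw [L]
  have K := (theta_tendsto _ (1 / 8) ht).sub (theta_tendsto _ (3 / 8) ht)
  refine tendsto_nhds_unique H (K.congr fun N => ?_)
  rw [← Finset.sum_sub_distrib, Finset.mul_sum]
  refine Finset.sum_congr rfl fun j _ => ?_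
  rw [mul_add, mul_sub, mul_sub,
    exp_pow_eq _ _ (-(24 * π * τ * ((j:ℝ) + 1 / 8) ^ 2)) _ (by push_cast; ring),
    exp_pow_eq _ _ (-(24 * π * τ * ((j:ℝ) + 3 / 8) ^ 2)) _ (by push_cast; ring),
    exp_pow_eq _ _ (-(24 * π * τ * ((j:ℝ) + 1 - 3 / 8) ^ 2)) _ (by push_cast; ring),
    exp_pow_eq _ _ (-(24 * π * τ * ((j:ℝ) + 1 - 1 / 8) ^ 2)) _ (by push_cast; ring)]
  ring

lemma final_identity (x : ℝ) (hx : 0 < x) (g : ℝ → ℝ)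
    (hg : ∀ a, g a = π / (x / 6) * (Real.sinh (2 * π * (x / 6)) /
      (Real.cosh (2 * π * (x / 6)) - Real.cos (2 * π * a)))) :
    1 / (24 * π) * g (1 / 12) - 1 / (24 * π) * g (7 / 12) -
      Real.sqrt (3 / 2) * (1 / (24 * π) * g (1 / 8) - 1 / (24 * π) * g (3 / 8)) =
    Real.sqrt 3 * Real.tanh (2 * π * x / 3) / (4 * x * Real.cosh (π * x)) := by
  have hpi := Real.pi_pos
  have c1 : Real.cos (2 * π * (1 / 12)) = Real.sqrt 3 / 2 := by
    rw [← Real.cos_pi_div_six]; congr 1; ring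
  have c2 : Real.cos (2 * π * (7 / 12)) = -(Real.sqrt 3 / 2) := by
    rw [← Real.cos_pi_div_six, ← Real.cos_add_pi]; congr 1; ring
  have c3 : Real.cos (2 * π * (1 / 8)) = Real.sqrt 2 / 2 := by
    rw [← Real.cos_pi_div_four]; congr 1; ring
  have c4 : Real.cos (2 * π * (3 / 8)) = -(Real.sqrt 2 / 2) := by
    rw [← Real.cos_pi_div_four, ← Real.cos_pi_sub]; congr 1; ring
  rw [hg, hg, hg, hg, c1, c2, c3, c4]
  set u := π * x / 3 with hu
  have a1 : 2 * π * (x / 6) = u := by rw [hu]; ring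
  have a2 : 2 * π * x / 3 = 2 * u := by rw [hu]; ring
  have a3 : π * x = 3 * u := by rw [hu]; ring
  have upos : 0 < u := by positivity
  rw [a1, a2, a3, Real.tanh_eq_sinh_div_cosh, Real.cosh_three_mul, Real.sinh_two_mul,
    Real.cosh_two_mul]
  have hc := Real.cosh_sq u
  have hC : 1 ≤ Real.cosh u := Real.one_le_cosh u
  have hS : 0 < Real.sinh u := Real.sinh_pos_iff.2 upos
  set C := Real.cosh u
  set S := Real.sinh u
  have h3 : Real.sqrt 3 ^ 2 = 3 := Real.sq_sqrt (by norm_num)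
  have h2 : Real.sqrt 2 ^ 2 = 2 := Real.sq_sqrt (by norm_num)
  have p3 : 0 < Real.sqrt 3 := Real.sqrt_pos.2 (by norm_num)
  have p2 : 0 < Real.sqrt 2 := Real.sqrt_pos.2 (by norm_num)
  have h32 : Real.sqrt (3 / 2) = Real.sqrt 3 / Real.sqrt 2 := Real.sqrt_div (by norm_num) _
  rw [h32]
  set s3 := Real.sqrt 3
  set s2 := Real.sqrt 2
  have hs3 : s3 < 2 := by nlinarith
  have hs2 : s2 < 2 := by nlinarith
  have n1 : C - s3 / 2 ≠ 0 := by linarith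
  have n2 : C - -(s3 / 2) ≠ 0 := by linarith
  have n3 : C - s2 / 2 ≠ 0 := by linarith
  have n4 : C - -(s2 / 2) ≠ 0 := by linarith
  have n5 : 4 * C ^ 2 - 3 ≠ 0 := by nlinarith
  have n6 : 2 * C ^ 2 - 1 ≠ 0 := by nlinarith
  have d1 : S / (C - s3 / 2) - S / (C - -(s3 / 2)) = 4 * s3 * S / (4 * C ^ 2 - 3) := by
    rw [div_sub_div _ _ n1 n2, div_eq_div_iff (mul_ne_zero n1 n2) n5]
    linear_combination (S * s3) * h3
  have d2 : S / (C - s2 / 2) - S / (C - -(s2 / 2)) = 2 * s2 * S / (2 * C ^ 2 - 1) := by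
    rw [div_sub_div _ _ n3 n4, div_eq_div_iff (mul_ne_zero n3 n4) n6]
    linear_combination (S * s2 / 2) * h2
  have hS2 : S ^ 2 = C ^ 2 - 1 := by linarith
  calc _ = 1 / (4 * x) * (S / (C - s3 / 2) - S / (C - -(s3 / 2))) -
        s3 / s2 * (1 / (4 * x) * (S / (C - s2 / 2) - S / (C - -(s2 / 2)))) := by
        field_simp
        ring
    _ = _ := by
      rw [d1, d2, hS2, show C ^ 2 + (C ^ 2 - 1) = 2 * C ^ 2 - 1 by ring,
        show 4 * C ^ 3 - 3 * C = C * (4 * C ^ 2 - 3) by ring]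
      have hC0 : C ≠ 0 := by linarith
      have hE : 4 * C ^ 2 - 3 = 2 * (2 * C ^ 2 - 1) - 1 := by ring
      rw [hE] at n5 ⊢
      generalize 2 * C ^ 2 - 1 = D at n5 n6 ⊢
      field_simp
      ring

theorem one_arm_laplace (x : ℝ) (hx : 0 < x) :
    ∫ τ in Set.Ioi (0 : ℝ),
        ((Real.exp (-(2 * Real.pi * x ^ 2 * τ / 3)) : ℝ) : ℂ) *
          ((1 - (Real.sqrt (3 / 2) : ℂ) *
              (eta (6 * τ * Complex.I) * eta ((3 / 2) * τ * Complex.I)) /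
              (eta (2 * τ * Complex.I) * eta (3 * τ * Complex.I))) *
            eta (2 * τ * Complex.I)) =
      ((Real.sqrt 3 * Real.tanh (2 * Real.pi * x / 3) /
          (4 * x * Real.cosh (Real.pi * x)) : ℝ) : ℂ) := by
  have I1 := theta_laplace x (1 / 12) hx
  have I2 := theta_laplace x (7 / 12) hx
  have I3 := theta_laplace x (1 / 8) hx
  have I4 := theta_laplace x (3 / 8) hx
  have key : ∀ τ ∈ Set.Ioi (0:ℝ), ((Real.exp (-(2 * Real.pi * x ^ 2 * τ / 3)) : ℝ) : ℂ) *
          ((1 - (Real.sqrt (3 / 2) : ℂ) *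
              (eta (6 * τ * Complex.I) * eta ((3 / 2) * τ * Complex.I)) /
              (eta (2 * τ * Complex.I) * eta (3 * τ * Complex.I))) *
            eta (2 * τ * Complex.I)) =
      (((Real.exp (-(2 * π * x ^ 2 * τ / 3)) * theta (24 * π * τ) (1 / 12) -
        Real.exp (-(2 * π * x ^ 2 * τ / 3)) * theta (24 * π * τ) (7 / 12)) -
        Real.sqrt (3 / 2) * (Real.exp (-(2 * π * x ^ 2 * τ / 3)) * theta (24 * π * τ) (1 / 8) -
        Real.exp (-(2 * π * x ^ 2 * τ / 3)) * theta (24 * π * τ) (3 / 8)) : ℝ) : ℂ) := by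
    intro τ hτ
    have hτ' : 0 < τ := hτ
    rw [eta_real (6 * τ * Complex.I) (6 * τ) (by positivity) (by push_cast; ring),
      eta_real ((3 / 2) * τ * Complex.I) (3 / 2 * τ) (by positivity) (by push_cast; ring),
      eta_real (2 * τ * Complex.I) (2 * τ) (by positivity) (by push_cast; ring),
      eta_real (3 * τ * Complex.I) (3 * τ) (by positivity) (by push_cast; ring)]
    rw [← mul_sub, ← mul_sub, ← etaR_two τ hτ', ← etaR_quot τ hτ']
    have n2 := etaR_ne_zero (2 * τ) (by positivity)
    have n3 := etaR_ne_zero (3 * τ) (by positivity)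
    norm_cast
    field_simp
  rw [setIntegral_congr_fun measurableSet_Ioi key, integral_complex_ofReal,
    integral_four _ _ _ _ _ I1.1 I2.1 I3.1 I4.1, I1.2, I2.2, I3.2, I4.2]
  congr 1
  exact final_identity x hx (fun a => ∑' k : ℤ, 1 / (((k:ℝ) + a) ^ 2 + (x / 6) ^ 2))
    fun a => gsum a (x / 6) (by positivity)
end

section
/- For every real x > 0, ∫₀^∞ e^{-2πx²τ/3} · √3 · η(iτ)η(6iτ)²/(η(3iτ)η(2iτ)) dτ = √3 · sinh(πx/3)² / (x · sinh(πx)). -/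
open scoped Real

noncomputable def tlqp (P : ℝ) (n : ℕ) : ℝ := ∏ k ∈ Finset.range n, (1 - P ^ (k + 1))

noncomputable def tlG (P : ℝ) (M j : ℕ) : ℝ := tlqp P M / (tlqp P j * tlqp P (M - j))

lemma tlqp_pos {P : ℝ} (h0 : 0 < P) (h1 : P < 1) (n : ℕ) : 0 < tlqp P n := by
  unfold tlqp
  exact Finset.prod_pos fun k _ => by
    have := pow_lt_one₀ h0.le h1 (Nat.succ_ne_zero k)
    simpa using this

lemma tlqp_succ (P : ℝ) (n : ℕ) : tlqp P (n + 1) = tlqp P n * (1 - P ^ (n + 1)) := by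
  unfold tlqp; rw [Finset.prod_range_succ]

/-- Pascal-type recursion. -/
lemma tlG_pascal {P : ℝ} (h0 : 0 < P) (h1 : P < 1) (M j : ℕ) (hj : j + 1 ≤ M) :
    tlG P (M + 1) (j + 1) = tlG P M (j + 1) + P ^ (M - j) * tlG P M j := by
  obtain ⟨d, rfl⟩ := Nat.exists_eq_add_of_le hj
  have e1 : j + 1 + d + 1 - (j + 1) = d + 1 := by omega
  have e2 : j + 1 + d - (j + 1) = d := by omega
  have e3 : j + 1 + d - j = d + 1 := by omega
  unfold tlG
  rw [e1, e2, e3, tlqp_succ P (j + 1 + d), tlqp_succ P j, tlqp_succ P d]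
  have a1 := (tlqp_pos h0 h1 j).ne'
  have a2 := (tlqp_pos h0 h1 d).ne'
  have b (n : ℕ) : (1 - P ^ (n + 1)) ≠ 0 := by
    have := pow_lt_one₀ h0.le h1 (Nat.succ_ne_zero n)
    simp only [Nat.succ_eq_add_one] at this
    linarith
  have b1 := b j
  have b2 := b d
  field_simp
  ring

lemma tlG_zero {P : ℝ} (h0 : 0 < P) (h1 : P < 1) (M : ℕ) : tlG P M 0 = 1 := by
  have := (tlqp_pos h0 h1 M).ne'
  have q0 : tlqp P 0 = 1 := by simp [tlqp]
  simp [tlG, this, q0]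

lemma tlG_self {P : ℝ} (h0 : 0 < P) (h1 : P < 1) (M : ℕ) : tlG P M M = 1 := by
  have := (tlqp_pos h0 h1 M).ne'
  have q0 : tlqp P 0 = 1 := by simp [tlqp]
  simp [tlG, this, q0]

/-- Rothe's identity. -/
lemma tl_rothe {Q : ℝ} (h0 : 0 < Q) (h1 : Q < 1) (w : ℝ) (M : ℕ) :
    ∏ k ∈ Finset.range M, (1 - w * (Q ^ 2) ^ k) =
      ∑ j ∈ Finset.range (M + 1), (-w) ^ j * Q ^ (j * (j - 1)) * tlG (Q ^ 2) M j := by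
  have hP0 : 0 < Q ^ 2 := by positivity
  have hP1 : Q ^ 2 < 1 := pow_lt_one₀ h0.le h1 two_ne_zero
  induction M with
  | zero => simp [tlG, tlqp]
  | succ M ih =>
    rw [Finset.prod_range_succ, ih, Finset.sum_range_succ' _ (M + 1), Finset.sum_range_succ _ M,
      Finset.sum_range_succ _ M]
    have : ∑ j ∈ Finset.range M, (-w) ^ (j + 1) * Q ^ ((j + 1) * (j + 1 - 1)) * tlG (Q ^ 2) (M + 1) (j + 1)
      = ∑ j ∈ Finset.range M, (-w) ^ (j + 1) * Q ^ ((j + 1) * (j + 1 - 1)) * tlG (Q ^ 2) M (j + 1)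
      + ∑ j ∈ Finset.range M, (- w * (Q ^ 2) ^ M) * ((-w) ^ j * Q ^ (j * (j - 1)) * tlG (Q ^ 2) M j) := by
      rw [← Finset.sum_add_distrib]
      refine Finset.sum_congr rfl fun j hj => ?_
      rw [Finset.mem_range] at hj
      rw [tlG_pascal hP0 hP1 M j hj]
      obtain ⟨d, rfl⟩ := Nat.exists_eq_add_of_le (Nat.succ_le_of_lt hj)
      have e3 : j.succ + d - j = d + 1 := by omega
      rw [e3]
      have : Q ^ ((j + 1) * (j + 1 - 1)) = Q ^ (j * (j - 1)) * (Q ^ 2) ^ j := by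
        rw [← pow_mul, ← pow_add]
        congr 1
        cases j with
        | zero => simp
        | succ j => simp; ring
      rw [this, Nat.succ_eq_add_one]
      ring
    rw [this, ← Finset.mul_sum]
    have h3 := Finset.sum_range_succ' (fun j => (-w) ^ j * Q ^ (j * (j - 1)) * tlG (Q ^ 2) M j) M
    have h4 := Finset.sum_range_succ (fun j => (-w) ^ j * Q ^ (j * (j - 1)) * tlG (Q ^ 2) M j) M
    simp only [tlG_self hP0 hP1, tlG_zero hP0 hP1] at h3 h4 ⊢
    set A := ∑ j ∈ Finset.range M, (-w) ^ j * Q ^ (j * (j - 1)) * tlG (Q ^ 2) M j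
    set B := ∑ j ∈ Finset.range M, (-w) ^ (j + 1) * Q ^ ((j + 1) * (j + 1 - 1)) * tlG (Q ^ 2) M (j + 1)
    have : Q ^ ((M + 1) * (M + 1 - 1)) = Q ^ (M * (M - 1)) * (Q ^ 2) ^ M := by
        rw [← pow_mul, ← pow_add]
        congr 1
        cases M with
        | zero => simp
        | succ j => simp; ring
    rw [this]
    linear_combination h3 - h4

/-- Finite Jacobi triple product. -/
lemma tl_finite {Q : ℝ} (h0 : 0 < Q) (h1 : Q < 1) (b : ℕ) : ∀ (a : ℕ) (w : ℝ), w ≠ 0 →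
    (∏ k ∈ Finset.range a, (1 - w * (Q ^ 2) ^ k)) * (∏ k ∈ Finset.range b, (1 - w⁻¹ * (Q ^ 2) ^ (k + 1))) =
      ∑ j ∈ Finset.range (a + b + 1), (-w) ^ ((j : ℤ) - b) * Q ^ (((j : ℤ) - b) * ((j : ℤ) - b - 1)) * tlG (Q ^ 2) (a + b) j := by
  induction b with
  | zero =>
    intro a w hw
    simp only [Finset.range_zero, Finset.prod_empty, mul_one, Nat.cast_zero, sub_zero, add_zero]
    rw [tl_rothe h0 h1]
    refine Finset.sum_congr rfl fun j _ => ?_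
    rw [zpow_natCast]
    congr 2
    rw [← zpow_natCast]
    congr 1
    cases j <;> simp
  | succ b ih =>
    intro a w hw
    have hQ : Q ≠ 0 := h0.ne'
    have key := ih (a + 1) (w / Q ^ 2) (by positivity)
    have hL : (∏ k ∈ Finset.range a, (1 - w * (Q ^ 2) ^ k)) * (∏ k ∈ Finset.range (b + 1), (1 - w⁻¹ * (Q ^ 2) ^ (k + 1)))
       = (- Q ^ 2 / w) * ((∏ k ∈ Finset.range (a + 1), (1 - (w / Q ^ 2) * (Q ^ 2) ^ k)) * (∏ k ∈ Finset.range b, (1 - (w / Q ^ 2)⁻¹ * (Q ^ 2) ^ (k + 1)))) := by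
      rw [Finset.prod_range_succ' _ a, Finset.prod_range_succ' _ b]
      have e1 : ∀ k, 1 - w / Q ^ 2 * (Q ^ 2) ^ (k + 1) = 1 - w * (Q ^ 2) ^ k := by
        intro k; field_simp; ring
      have e2 : ∀ k, 1 - (w / Q ^ 2)⁻¹ * (Q ^ 2) ^ (k + 1) = 1 - w⁻¹ * (Q ^ 2) ^ (k + 1 + 1) := by
        intro k; field_simp; ring
      simp only [e1, e2]
      field_simp
      ring
    rw [hL, key, Finset.mul_sum]
    have e : a + 1 + b = a + (b + 1) := by ring
    rw [e]
    refine Finset.sum_congr rfl fun j _ => ?_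
    rw [← mul_assoc]
    congr 1
    push_cast
    obtain ⟨m, hm⟩ : ∃ m : ℤ, (j : ℤ) - (b + 1) = m := ⟨_, rfl⟩
    have hm' : (j : ℤ) - b = m + 1 := by omega
    rw [hm, hm', ← neg_div, div_zpow, zpow_add₀ (neg_ne_zero.mpr hw)]
    have : Q ^ ((m + 1) * (m + 1 - 1)) = Q ^ (m * (m - 1)) * (Q ^ 2) ^ m := by
      rw [← zpow_natCast Q 2, ← zpow_mul, ← zpow_add₀ hQ]
      congr 1; push_cast; ring
    rw [this, zpow_add₀ (by positivity : Q ^ 2 ≠ 0)]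
    have : (Q ^ 2) ^ m ≠ 0 := by positivity
    field_simp

open Filter Topology in
lemma tlqp_tendsto {P : ℝ} (h0 : 0 < P) (h1 : P < 1) :
    Tendsto (tlqp P) atTop (𝓝 (∏' k : ℕ, (1 - P ^ (k + 1)))) := by
  have hm : Multipliable fun n : ℕ ↦ 1 - P ^ (n + 1) := by
    simp only [sub_eq_add_neg]
    apply multipliable_one_add_of_summable (f := fun n ↦ -P ^ (n + 1))
    simpa [abs_of_pos h0] using (summable_nat_add_iff 1).mpr (summable_geometric_of_lt_one h0.le h1)
  exact hm.hasProd.tendsto_prod_nat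

open Filter Topology in
lemma tlE_pos {P : ℝ} (h0 : 0 < P) (h1 : P < 1) :
    0 < (∏' k : ℕ, (1 - P ^ (k + 1))) := by
  have hne : (∏' k : ℕ, (1 - P ^ (k + 1))) ≠ 0 := by
    simp only [sub_eq_add_neg]
    refine tprod_one_add_ne_zero_of_summable (f := fun n ↦ -P ^ (n + 1)) ?_ ?_
    · intro k
      have := pow_lt_one₀ h0.le h1 (Nat.succ_ne_zero k)
      simp only [Nat.succ_eq_add_one] at this
      linarith
    · simpa [abs_of_pos h0] using (summable_nat_add_iff 1).mpr (summable_geometric_of_lt_one h0.le h1)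
  exact lt_of_le_of_ne (ge_of_tendsto' (tlqp_tendsto h0 h1) fun n => (tlqp_pos h0 h1 n).le) hne.symm

lemma tlqp_anti {P : ℝ} (h0 : 0 < P) (h1 : P < 1) : Antitone (tlqp P) := by
  refine antitone_nat_of_succ_le fun n => ?_
  rw [tlqp_succ]
  have := tlqp_pos h0 h1 n
  have : 0 < P ^ (n + 1) := by positivity
  nlinarith

lemma tlE_le {P : ℝ} (h0 : 0 < P) (h1 : P < 1) (n : ℕ) :
    (∏' k : ℕ, (1 - P ^ (k + 1))) ≤ tlqp P n :=
  (tlqp_anti h0 h1).le_of_tendsto (tlqp_tendsto h0 h1) n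

lemma tlqp_le_one {P : ℝ} (h0 : 0 < P) (h1 : P < 1) (n : ℕ) : tlqp P n ≤ 1 := by
  simpa [tlqp] using tlqp_anti h0 h1 (Nat.zero_le n)

noncomputable def tlc (P : ℝ) (N : ℕ) (n : ℤ) : ℝ :=
  if 0 ≤ (N : ℤ) + n ∧ (N : ℤ) + n ≤ 2 * N then tlG P (N + N) ((N : ℤ) + n).toNat else 0

open Filter Topology in
lemma tlc_tendsto {P : ℝ} (h0 : 0 < P) (h1 : P < 1) (n : ℤ) :
    Tendsto (fun N => tlc P N n) atTop (𝓝 (1 / ∏' k : ℕ, (1 - P ^ (k + 1)))) := by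
  have hE := tlE_pos h0 h1
  have hT := tlqp_tendsto h0 h1
  have t1 : Tendsto (fun N : ℕ => N + N) atTop atTop := tendsto_atTop_mono (fun N => Nat.le_add_left N N) tendsto_id
  have t2 : Tendsto (fun N : ℕ => ((N : ℤ) + n).toNat) atTop atTop := by
    refine tendsto_atTop.mpr fun b => ?_
    filter_upwards [eventually_ge_atTop (b + n.natAbs)] with N hN
    omega
  have t3 : Tendsto (fun N : ℕ => N + N - ((N : ℤ) + n).toNat) atTop atTop := by
    refine tendsto_atTop.mpr fun b => ?_
    filter_upwards [eventually_ge_atTop (b + n.natAbs)] with N hN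
    omega
  have h := (hT.comp t1).div ((hT.comp t2).mul (hT.comp t3)) (by positivity)
  have e : (∏' k : ℕ, (1 - P ^ (k + 1))) / ((∏' k : ℕ, (1 - P ^ (k + 1))) * ∏' k : ℕ, (1 - P ^ (k + 1)))
    = 1 / ∏' k : ℕ, (1 - P ^ (k + 1)) := by field_simp
  rw [e] at h
  refine h.congr' ?_
  filter_upwards [eventually_ge_atTop (n.natAbs)] with N hN
  rw [tlc, if_pos (by omega)]
  rfl

lemma tlc_bound {P : ℝ} (h0 : 0 < P) (h1 : P < 1) (N : ℕ) (n : ℤ) :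
    |tlc P N n| ≤ 1 / (∏' k : ℕ, (1 - P ^ (k + 1))) ^ 2 := by
  have hE := tlE_pos h0 h1
  unfold tlc
  split_ifs with h
  · unfold tlG
    have p1 := tlqp_pos h0 h1 (N + N)
    have p2 := tlqp_pos h0 h1 ((N : ℤ) + n).toNat
    have p3 := tlqp_pos h0 h1 (N + N - ((N : ℤ) + n).toNat)
    rw [abs_of_pos (by positivity), sq]
    have := tlE_le h0 h1 ((N : ℤ) + n).toNat
    have := tlE_le h0 h1 (N + N - ((N : ℤ) + n).toNat)
    have := tlqp_le_one h0 h1 (N + N)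
    gcongr
  · simp; positivity

lemma tl_fin_tsum {Q : ℝ} (h0 : 0 < Q) (h1 : Q < 1) (w : ℝ) (hw : w ≠ 0) (N : ℕ) :
    (∏ k ∈ Finset.range N, (1 - w * (Q ^ 2) ^ k)) *
        (∏ k ∈ Finset.range N, (1 - w⁻¹ * (Q ^ 2) ^ (k + 1)))
      = ∑' n : ℤ, (-w) ^ n * Q ^ (n * (n - 1)) * tlc (Q ^ 2) N n := by
  rw [tl_finite h0 h1 N N w hw]
  rw [tsum_eq_sum (s := (Finset.range (N + N + 1)).image fun j : ℕ => (j : ℤ) - N)]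
  · rw [Finset.sum_image (by intro a _ b _ h; simpa using h)]
    refine Finset.sum_congr rfl fun j hj => ?_
    rw [Finset.mem_range] at hj
    have e : ((N : ℤ) + ((j : ℤ) - N)).toNat = j := by omega
    rw [tlc, if_pos (by omega), e]
  · intro n hn
    rw [tlc, if_neg, mul_zero]
    intro h
    apply hn
    rw [Finset.mem_image]
    exact ⟨((N : ℤ) + n).toNat, by rw [Finset.mem_range]; omega, by omega⟩

open Filter Topology in
lemma tl_jacobi {Q : ℝ} (h0 : 0 < Q) (h1 : Q < 1) (w : ℝ) (hw : w ≠ 0)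
    (hs : Summable fun n : ℤ => |(-w) ^ n * Q ^ (n * (n - 1))|) :
    Tendsto (fun N => (∏ k ∈ Finset.range N, (1 - w * (Q ^ 2) ^ k)) *
        (∏ k ∈ Finset.range N, (1 - w⁻¹ * (Q ^ 2) ^ (k + 1)))) atTop
      (𝓝 ((∑' n : ℤ, (-w) ^ n * Q ^ (n * (n - 1))) / ∏' k : ℕ, (1 - (Q ^ 2) ^ (k + 1)))) := by
  have hP0 : 0 < Q ^ 2 := by positivity
  have hP1 : Q ^ 2 < 1 := pow_lt_one₀ h0.le h1 two_ne_zero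
  rw [funext (tl_fin_tsum h0 h1 w hw)]
  have t := tlc_tendsto hP0 hP1
  have b := tlc_bound hP0 hP1
  generalize (∏' k : ℕ, (1 - (Q ^ 2) ^ (k + 1))) = E at t b ⊢
  rw [div_eq_mul_one_div, ← tsum_mul_right]
  generalize Q ^ 2 = P at t b ⊢
  refine tendsto_tsum_of_dominated_convergence
    (bound := fun n : ℤ => |(-w) ^ n * Q ^ (n * (n - 1))| * (1 / E ^ 2))
    (hs.mul_right _) (fun n => (t n).const_mul _) ?_
  refine Eventually.of_forall fun N n => ?_
  rw [Real.norm_eq_abs, abs_mul]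
  exact mul_le_mul_of_nonneg_left (b N n) (abs_nonneg _)

lemma tl_term {q : ℝ} (h0 : 0 < q) (n : ℤ) : (-q) ^ n * (q ^ 3) ^ (n * (n - 1)) =
    (-1) ^ n * q ^ (3 * n ^ 2 - 2 * n) := by
  rw [neg_eq_neg_one_mul, mul_zpow, mul_assoc, ← zpow_natCast q 3, ← zpow_mul, ← zpow_add₀ h0.ne']
  congr 2
  push_cast
  ring

lemma tl_summable {q : ℝ} (h0 : 0 < q) (h1 : q < 1) :
    Summable fun n : ℤ => q ^ (3 * n ^ 2 - 2 * n) := by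
  have hg : Summable fun n : ℤ => q ^ n.natAbs := by
    rw [summable_int_iff_summable_nat_and_neg]
    simp [summable_geometric_of_lt_one h0.le h1]
  refine hg.of_nonneg_of_le (fun n => by positivity) fun n => ?_
  rw [← zpow_natCast]
  refine zpow_le_zpow_right_of_le_one₀ h0 h1.le ?_
  rw [Int.natCast_natAbs]
  rcases abs_cases n with ⟨h, h'⟩ | ⟨h, h'⟩ <;> rw [h]
  · rcases h'.eq_or_lt with h | h
    · simp [← h]
    · nlinarith
  · nlinarith

open Filter Topology in
/-- The eta quotient as a theta series. -/
lemma tl_product {q : ℝ} (h0 : 0 < q) (h1 : q < 1) :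
    (∏' k : ℕ, (1 - q ^ (k + 1))) * (∏' k : ℕ, (1 - (q ^ 6) ^ (k + 1))) ^ 2 /
      ((∏' k : ℕ, (1 - (q ^ 3) ^ (k + 1))) * (∏' k : ℕ, (1 - (q ^ 2) ^ (k + 1)))) =
    ∑' n : ℤ, (-1) ^ n * q ^ (3 * n ^ 2 - 2 * n) := by
  have hp (m : ℕ) (hm : m ≠ 0) : 0 < q ^ m ∧ q ^ m < 1 := ⟨by positivity, pow_lt_one₀ h0.le h1 hm⟩
  have hJ := tl_jacobi (hp 3 (by norm_num)).1 (hp 3 (by norm_num)).2 q h0.ne' (by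
    simp only [tl_term h0]
    refine (tl_summable h0 h1).congr fun n => ?_
    rw [abs_mul, abs_zpow]
    simp [abs_of_pos h0])
  simp only [tl_term h0] at hJ
  have e6 : (q ^ 3) ^ 2 = q ^ 6 := by ring
  rw [e6] at hJ
  have hfin : ∀ N : ℕ, tlqp q (6 * N) * tlqp (q ^ 6) N =
      ((∏ k ∈ Finset.range N, (1 - q * (q ^ 6) ^ k)) *
        (∏ k ∈ Finset.range N, (1 - q⁻¹ * (q ^ 6) ^ (k + 1)))) * (tlqp (q ^ 3) (2 * N) * tlqp (q ^ 2) (3 * N)) := by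
    intro N
    induction N with
    | zero => simp [tlqp]
    | succ N ih =>
      have a6 : 6 * (N + 1) = 6 * N + 1 + 1 + 1 + 1 + 1 + 1 := by ring
      have a3 : 3 * (N + 1) = 3 * N + 1 + 1 + 1 := by ring
      have a2 : 2 * (N + 1) = 2 * N + 1 + 1 := by ring
      rw [a6, a3, a2, Finset.prod_range_succ, Finset.prod_range_succ]
      simp only [tlqp_succ]
      have e5 : q⁻¹ * (q ^ 6) ^ (N + 1) = q ^ (6 * N + 5) := by
        rw [pow_succ]; field_simp; ring
      rw [e5]
      linear_combination ((1 - q ^ (6 * N + 1)) * (1 - q ^ (6 * N + 2)) * (1 - q ^ (6 * N + 3)) *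
        (1 - q ^ (6 * N + 4)) * (1 - q ^ (6 * N + 5)) * (1 - q ^ (6 * N + 6)) * (1 - q ^ (6 * N + 6))) * ih
  have tm (m : ℕ) (hm : m ≠ 0) : Tendsto (fun N : ℕ => m * N) atTop atTop :=
    tendsto_id.const_mul_atTop' (Nat.pos_of_ne_zero hm)
  have l1 := ((tlqp_tendsto h0 h1).comp (tm 6 (by norm_num))).mul
    (tlqp_tendsto (hp 6 (by norm_num)).1 (hp 6 (by norm_num)).2)
  have l2 := hJ.mul (((tlqp_tendsto (hp 3 (by norm_num)).1 (hp 3 (by norm_num)).2).comp (tm 2 (by norm_num))).mul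
    ((tlqp_tendsto (hp 2 (by norm_num)).1 (hp 2 (by norm_num)).2).comp (tm 3 (by norm_num))))
  have l3 := tendsto_nhds_unique (l1.congr hfin) l2
  have p6 := tlE_pos (hp 6 (by norm_num)).1 (hp 6 (by norm_num)).2
  have p3 := tlE_pos (hp 3 (by norm_num)).1 (hp 3 (by norm_num)).2
  have p2 := tlE_pos (hp 2 (by norm_num)).1 (hp 2 (by norm_num)).2
  rw [div_eq_iff (by positivity)]
  rw [div_mul_eq_mul_div, eq_div_iff p6.ne'] at l3
  linear_combination l3

lemma tl_summable_sq (a b : ℝ) (ha : ∀ n : ℤ, (n : ℝ) + a ≠ 0) :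
    Summable fun k : ℤ => 1 / (((k : ℝ) + a) ^ 2 + b ^ 2) := by
  have h := (Real.summable_one_div_int_add_rpow a 2).mpr one_lt_two
  refine h.of_nonneg_of_le (fun n => by positivity) fun n => ?_
  have h1 : 0 < ((n : ℝ) + a) ^ 2 := by have := ha n; positivity
  have h2 : |(n : ℝ) + a| ^ (2 : ℝ) = ((n : ℝ) + a) ^ 2 := by
    rw [Real.rpow_two, sq_abs]
  rw [h2]
  refine one_div_le_one_div_of_le h1 ?_
  nlinarith [sq_nonneg b]

lemma tl_cot (a b : ℝ) (hb : 0 < b) (ha : ∀ n : ℤ, (n : ℝ) + a ≠ 0) :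
    HasSum (fun k : ℤ => 1 / (((k : ℝ) + a) ^ 2 + b ^ 2))
      (π / b * Real.sinh (2 * π * b) / (Real.cosh (2 * π * b) - Real.cos (2 * π * a))) := by
  have hs := tl_summable_sq a b ha
  have hI : ∀ (c : ℝ), c ≠ 0 → ((a : ℂ) + c * Complex.I) ∈ Complex.integerComplement := by
    intro c hc
    rw [Complex.mem_integerComplement_iff]
    rintro ⟨n, hn⟩
    have := congrArg Complex.im hn
    simp at this
    exact hc this.symm
  set z : ℂ := (a : ℂ) + b * Complex.I with hz
  set w : ℂ := (a : ℂ) + (-b : ℝ) * Complex.I with hw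
  have hz' : z ∈ Complex.integerComplement := hI b hb.ne'
  have hw' : w ∈ Complex.integerComplement := hI (-b) (by simpa using hb.ne')
  have hbC : (b : ℂ) ≠ 0 := by exact_mod_cast hb.ne'
  have hzw : w - z = -2 * b * Complex.I := by rw [hz, hw]; push_cast; ring
  have hterm : ∀ k : ℤ, ((1 / (((k : ℝ) + a) ^ 2 + b ^ 2) : ℝ) : ℂ) =
      (1 / (z + k) - 1 / (w + k)) / (w - z) := by
    intro k
    have h1 := Complex.integerComplement_add_ne_zero hz' k
    have h2 := Complex.integerComplement_add_ne_zero hw' k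
    have h3 : w - z ≠ 0 := by rw [hzw]; simp [hbC]
    have e : ((k : ℂ) + a) ^ 2 + b ^ 2 = (z + k) * (w + k) := by
      rw [hz, hw]; push_cast; ring_nf; simp
    push_cast
    rw [e]
    field_simp
    ring
  have hsC : Summable fun k : ℤ => (1 / (z + k) - 1 / (w + k)) := by
    have := (Complex.summable_ofReal.mpr hs).mul_right (w - z)
    refine this.congr fun k => ?_
    rw [hterm, div_mul_cancel₀]
    rw [hzw]; simp [hbC]
  have htsum : ∑' k : ℤ, (1 / (z + k) - 1 / (w + k)) = π * Complex.cot (π * z) - π * Complex.cot (π * w) := by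
    have s1 : Summable fun n : ℕ+ => (1 / (z + ((n : ℕ) : ℤ)) - 1 / (w + ((n : ℕ) : ℤ))) :=
      hsC.comp_injective (i := fun n : ℕ+ => (((n : ℕ) : ℤ))) (fun a b h => by simpa using h)
    have s2 : Summable fun n : ℕ+ => (1 / (z + ((-((n : ℕ) : ℤ) : ℤ) : ℂ)) - 1 / (w + ((-((n : ℕ) : ℤ) : ℤ) : ℂ))) :=
      hsC.comp_injective (i := fun n : ℕ+ => (-((n : ℕ) : ℤ))) (fun a b h => by simpa using h)
    have c1 : Summable fun n : ℕ+ => (1 / (z - ((n : ℕ) : ℂ)) + 1 / (z + ((n : ℕ) : ℂ))) := by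
      rw [summable_pnat_iff_summable_succ (f := fun n : ℕ => (1 / (z - (n : ℂ)) + 1 / (z + (n : ℂ))))]
      simpa [cotTerm] using summable_cotTerm hz'
    have c2 : Summable fun n : ℕ+ => (1 / (w - ((n : ℕ) : ℂ)) + 1 / (w + ((n : ℕ) : ℂ))) := by
      rw [summable_pnat_iff_summable_succ (f := fun n : ℕ => (1 / (w - (n : ℂ)) + 1 / (w + (n : ℂ))))]
      simpa [cotTerm] using summable_cotTerm hw'
    rw [tsum_int_eq_zero_add_tsum_pnat hsC, cot_series_rep hz', cot_series_rep hw', add_assoc,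
      ← s1.tsum_add s2, add_sub_add_comm, ← c1.tsum_sub c2]
    congr 1
    · simp
    · refine tsum_congr fun n => ?_
      push_cast
      ring
  have hval : (π * Complex.cot (π * z) - π * Complex.cot (π * w)) / (w - z) =
      ((π / b * Real.sinh (2 * π * b) / (Real.cosh (2 * π * b) - Real.cos (2 * π * a)) : ℝ) : ℂ) := by
    have sz := sin_pi_mul_ne_zero hz'
    have sw := sin_pi_mul_ne_zero hw'
    have d : 2 * (Complex.sin (π * z) * Complex.sin (π * w)) =
        Complex.cosh (2 * π * b) - Complex.cos (2 * π * a) := by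
      have e1 : (2 * π * a : ℂ) = π * z + π * w := by rw [hz, hw]; push_cast; ring
      have e2 : Complex.cosh (2 * π * b) = Complex.cos (π * z - π * w) := by
        rw [← Complex.cos_mul_I]; congr 1; rw [hz, hw]; push_cast; ring
      rw [e2, e1, Complex.cos_sub, Complex.cos_add]; ring
    have n : Complex.sinh (2 * π * b) * Complex.I = Complex.sin (π * z) * Complex.cos (π * w) -
        Complex.cos (π * z) * Complex.sin (π * w) := by
      rw [← Complex.sin_mul_I, ← Complex.sin_sub]; congr 1; rw [hz, hw]; push_cast; ring
    push_cast
    rw [← d, Complex.cot, Complex.cot, hzw]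
    have n' : Complex.sinh (2 * π * b) = -(Complex.sin (π * z) * Complex.cos (π * w) -
        Complex.cos (π * z) * Complex.sin (π * w)) * Complex.I := by
      rw [← n]; linear_combination (Complex.sinh (2 * π * b)) * Complex.I_sq
    rw [n']
    have hI0 := Complex.I_ne_zero
    field_simp
    rw [Complex.I_sq]
    ring
  have hfin := hsC.hasSum.div_const (w - z)
  rw [htsum, hval] at hfin
  rw [← Complex.hasSum_ofReal]
  refine hfin.congr_fun fun k => ?_
  rw [hterm]

lemma tl_even_odd {f : ℤ → ℝ} {s t : ℝ} (he : HasSum (fun k : ℤ => f (2 * k)) s)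
    (ho : HasSum (fun k : ℤ => f (2 * k + 1)) t) : HasSum f (s + t) := by
  have i1 : Function.Injective (fun k : ℤ => 2 * k) := fun a b h => by
    simp only at h; omega
  have i2 : Function.Injective (fun k : ℤ => 2 * k + 1) := fun a b h => by
    simp only at h; omega
  refine HasSum.add_isCompl (s := Set.range (fun k : ℤ => 2 * k)) (t := Set.range (fun k : ℤ => 2 * k + 1)) ?_
    ((i1.hasSum_range_iff).mpr he) ((i2.hasSum_range_iff).mpr ho)
  have r1 : Set.range (fun k : ℤ => 2 * k) = {n | Even n} := by
    ext n
    rw [Set.mem_range, Set.mem_ofPred_eq, even_iff_exists_two_mul]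
    exact exists_congr fun k => eq_comm
  have r2 : Set.range (fun k : ℤ => 2 * k + 1) = {n | Odd n} := by
    ext n
    rw [Set.mem_range, Set.mem_ofPred_eq, Odd]
    exact exists_congr fun k => eq_comm
  rw [r1, r2]
  exact Int.isCompl_even_odd

lemma tl_series (x : ℝ) (hx : 0 < x) :
    HasSum (fun n : ℤ => (-1 : ℝ) ^ n / (x ^ 2 + (3 * (n : ℝ) - 1) ^ 2))
      (2 * π / 3 * (Real.sinh (π * x / 3) ^ 2 / (x * Real.sinh (π * x)))) := by
  have h1 := (tl_cot (-1 / 6) (x / 6) (by positivity) (by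
    intro n h
    have : ((6 * n - 1 : ℤ) : ℝ) = 0 := by push_cast; linarith
    have : (6 * n - 1 : ℤ) = 0 := by exact_mod_cast this
    omega)).mul_left (1 / 36)
  have h2 := (tl_cot (1 / 3) (x / 6) (by positivity) (by
    intro n h
    have : ((3 * n + 1 : ℤ) : ℝ) = 0 := by push_cast; linarith
    have : (3 * n + 1 : ℤ) = 0 := by exact_mod_cast this
    omega)).mul_left (-1 / 36)
  have c1 : Real.cos (2 * π * (-1 / 6)) = 1 / 2 := by
    rw [← Real.cos_pi_div_three, ← Real.cos_neg (π / 3)]; congr 1; ring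
  have c2 : Real.cos (2 * π * (1 / 3)) = -(1 / 2) := by
    rw [← Real.cos_pi_div_three, ← Real.cos_pi_sub]; congr 1; ring
  have a : 2 * π * (x / 6) = π * x / 3 := by ring
  rw [c1, a] at h1
  rw [c2, a] at h2
  have h3 : Real.sinh (π * x) = 4 * Real.sinh (π * x / 3) ^ 3 + 3 * Real.sinh (π * x / 3) := by
    rw [← Real.sinh_three_mul]; congr 1; ring
  have hS : 0 < Real.sinh (π * x / 3) := Real.sinh_pos_iff.mpr (by positivity)
  have hC : 1 ≤ Real.cosh (π * x / 3) := Real.one_le_cosh _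
  have hCS := Real.cosh_sq (π * x / 3)
  have H := tl_even_odd (f := fun n : ℤ => (-1 : ℝ) ^ n / (x ^ 2 + (3 * (n : ℝ) - 1) ^ 2)) (h1.congr_fun fun k => ?_)
    (h2.congr_fun fun k => ?_)
  · convert H using 1
    rw [h3]
    set S := Real.sinh (π * x / 3)
    set C := Real.cosh (π * x / 3)
    have d1 : C - 1 / 2 ≠ 0 := by linarith
    have d2 : C - -(1 / 2) ≠ 0 := by linarith
    have d3 : 4 * S ^ 3 + 3 * S = 4 * S * ((C - 1 / 2) * (C - -(1 / 2))) := by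
      linear_combination -4 * S * hCS
    rw [d3]
    have d4 : C - -(1 / 2) = (C - 1 / 2) + 1 := by ring
    rw [d4] at d2 ⊢
    generalize C - 1 / 2 = u at d1 d2 ⊢
    field_simp
    ring
  · have e : ((-1 : ℝ)) ^ (2 * k) = 1 := by rw [zpow_mul]; simp
    rw [e]
    push_cast
    have : (x ^ 2 + (3 * (2 * (k : ℝ)) - 1) ^ 2) = 36 * (((k : ℝ) + -1 / 6) ^ 2 + (x / 6) ^ 2) := by ring
    rw [this]
    field_simp
  · have e : ((-1 : ℝ)) ^ (2 * k + 1) = -1 := by rw [zpow_add₀ (by norm_num), zpow_mul]; simp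
    rw [e]
    push_cast
    have : (x ^ 2 + (3 * (2 * (k : ℝ) + 1) - 1) ^ 2) = 36 * (((k : ℝ) + 1 / 3) ^ 2 + (x / 6) ^ 2) := by ring
    rw [this]
    field_simp

lemma tl_real_integral (x : ℝ) (hx : 0 < x) :
    ∫ τ in Set.Ioi (0 : ℝ), ∑' n : ℤ, (-1 : ℝ) ^ n * Real.exp (-(2 * π / 3 * (x ^ 2 + (3 * (n : ℝ) - 1) ^ 2)) * τ)
     = Real.sinh (π * x / 3) ^ 2 / (x * Real.sinh (π * x)) := by
  have hneg : ∀ n : ℤ, -(2 * π / 3 * (x ^ 2 + (3 * (n : ℝ) - 1) ^ 2)) < 0 := by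
    intro n; rw [neg_lt_zero]; positivity
  have hI : ∀ n : ℤ, ∫ τ in Set.Ioi (0 : ℝ), Real.exp (-(2 * π / 3 * (x ^ 2 + (3 * (n : ℝ) - 1) ^ 2)) * τ)
      = 3 / (2 * π) * (1 / (x ^ 2 + (3 * (n : ℝ) - 1) ^ 2)) := by
    intro n
    rw [integral_exp_mul_Ioi (hneg n)]
    simp
    field_simp
  have hser := tl_series x hx
  have := MeasureTheory.hasSum_integral_of_summable_integral_norm (μ := MeasureTheory.volume.restrict (Set.Ioi (0 : ℝ)))
    (F := fun (n : ℤ) (τ : ℝ) => (-1 : ℝ) ^ n * Real.exp (-(2 * π / 3 * (x ^ 2 + (3 * (n : ℝ) - 1) ^ 2)) * τ))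
    (fun n => (integrableOn_exp_mul_Ioi (hneg n) 0).const_mul _) (by
      have : ∀ (n : ℤ) (τ : ℝ), ‖(-1 : ℝ) ^ n * Real.exp (-(2 * π / 3 * (x ^ 2 + (3 * (n : ℝ) - 1) ^ 2)) * τ)‖
        = Real.exp (-(2 * π / 3 * (x ^ 2 + (3 * (n : ℝ) - 1) ^ 2)) * τ) := by
        intro n τ
        rw [norm_mul, norm_zpow, Real.norm_of_nonneg (Real.exp_pos _).le]; simp
      simp only [this, hI]
      refine Summable.mul_left _ (hser.summable.abs.congr fun n => ?_)
      rw [abs_div, abs_zpow]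
      simp
      positivity)
  refine this.unique ?_
  have h2 := hser.mul_left (3 / (2 * π))
  have e : ∀ X : ℝ, 3 / (2 * π) * (2 * π / 3 * X) = X := by intro X; field_simp
  rw [e] at h2
  refine h2.congr_fun fun n => ?_
  rw [MeasureTheory.integral_const_mul, hI]
  ring

lemma tl_eta (τ : ℝ) (hτ : 0 < τ) (m : ℕ) (hm : m ≠ 0) :
    eta (m * τ * Complex.I) = ((Real.exp (-(π * m * τ / 12)) *
      ∏' k : ℕ, (1 - (Real.exp (-(2 * π * τ)) ^ m) ^ (k + 1)) : ℝ) : ℂ) := by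
  have h0 : 0 < Real.exp (-(2 * π * τ)) := Real.exp_pos _
  have h1 : Real.exp (-(2 * π * τ)) < 1 := by
    rw [Real.exp_lt_one_iff, neg_lt_zero]; positivity
  have hP0 : 0 < Real.exp (-(2 * π * τ)) ^ m := by positivity
  have hP1 : Real.exp (-(2 * π * τ)) ^ m < 1 := pow_lt_one₀ h0.le h1 hm
  have hmul : Multipliable fun n : ℕ ↦ 1 - (Real.exp (-(2 * π * τ)) ^ m) ^ (n + 1) := by
    simp only [sub_eq_add_neg]
    apply multipliable_one_add_of_summable (f := fun n ↦ -(Real.exp (-(2 * π * τ)) ^ m) ^ (n + 1))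
    simpa [abs_of_pos hP0] using (summable_nat_add_iff 1).mpr (summable_geometric_of_lt_one hP0.le hP1)
  have hmap := (hmul.hasProd.map Complex.ofRealHom Complex.continuous_ofReal).tprod_eq
  unfold eta
  push_cast
  congr 1
  · congr 1
    linear_combination (π * m * τ / 12) * Complex.I_sq
  · rw [Complex.ofRealHom_eq_coe] at hmap
    rw [← hmap]
    refine tprod_congr fun n => ?_
    simp only [Function.comp, Complex.ofRealHom_eq_coe]
    push_cast
    rw [← Complex.exp_nat_mul, ← Complex.exp_nat_mul]
    congr 2
    push_cast
    linear_combination (2 * π * (n + 1) * m * τ) * Complex.I_sq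

theorem two_arm_laplace (x : ℝ) (hx : 0 < x) :
    ∫ τ in Set.Ioi (0 : ℝ),
        ((Real.exp (-(2 * Real.pi * x ^ 2 * τ / 3)) : ℝ) : ℂ) *
          ((Real.sqrt 3 : ℂ) * (eta (τ * Complex.I) * eta (6 * τ * Complex.I) ^ 2) /
            (eta (3 * τ * Complex.I) * eta (2 * τ * Complex.I))) =
      ((Real.sqrt 3 * Real.sinh (Real.pi * x / 3) ^ 2 /
          (x * Real.sinh (Real.pi * x)) : ℝ) : ℂ) := by
  have key : ∀ τ ∈ Set.Ioi (0 : ℝ), ((Real.exp (-(2 * Real.pi * x ^ 2 * τ / 3)) : ℝ) : ℂ) *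
          ((Real.sqrt 3 : ℂ) * (eta (τ * Complex.I) * eta (6 * τ * Complex.I) ^ 2) /
            (eta (3 * τ * Complex.I) * eta (2 * τ * Complex.I))) =
      ((Real.sqrt 3 * ∑' n : ℤ, (-1 : ℝ) ^ n * Real.exp (-(2 * π / 3 * (x ^ 2 + (3 * (n : ℝ) - 1) ^ 2)) * τ) : ℝ) : ℂ) := by
    intro τ hτ
    have hτ : 0 < τ := hτ
    have e1 := tl_eta τ hτ 1 (by norm_num)
    have e2 := tl_eta τ hτ 2 (by norm_num)
    have e3 := tl_eta τ hτ 3 (by norm_num)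
    have e6 := tl_eta τ hτ 6 (by norm_num)
    rw [Nat.cast_one, one_mul, pow_one] at e1
    rw [Nat.cast_ofNat] at e2 e3 e6
    rw [e1, e2, e3, e6]
    rw [← Complex.ofReal_pow, ← Complex.ofReal_mul, ← Complex.ofReal_mul, ← Complex.ofReal_mul,
      ← Complex.ofReal_div, ← Complex.ofReal_mul]
    congr 1
    have h0 : 0 < Real.exp (-(2 * π * τ)) := Real.exp_pos _
    have h1 : Real.exp (-(2 * π * τ)) < 1 := by
      rw [Real.exp_lt_one_iff, neg_lt_zero]; positivity
    have hp := tl_product h0 h1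
    have hsum : ∑' n : ℤ, (-1 : ℝ) ^ n * Real.exp (-(2 * π / 3 * (x ^ 2 + (3 * (n : ℝ) - 1) ^ 2)) * τ)
      = Real.exp (-(2 * π * x ^ 2 * τ / 3)) * Real.exp (-(2 * π * τ / 3)) *
        ∑' n : ℤ, (-1) ^ n * Real.exp (-(2 * π * τ)) ^ (3 * n ^ 2 - 2 * n) := by
      rw [← tsum_mul_left]
      refine tsum_congr fun n => ?_
      rw [← Real.rpow_intCast (Real.exp _), ← Real.exp_mul, mul_left_comm, ← Real.exp_add, ← Real.exp_add]
      congr 2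
      push_cast
      ring
    have p3 := tlE_pos (pow_pos h0 3) (pow_lt_one₀ h0.le h1 (by norm_num : (3 : ℕ) ≠ 0))
    have p2 := tlE_pos (pow_pos h0 2) (pow_lt_one₀ h0.le h1 (by norm_num : (2 : ℕ) ≠ 0))
    have hexp : Real.exp (-(π * (1 : ℕ) * τ / 12)) * Real.exp (-(π * (6 : ℕ) * τ / 12)) ^ 2 =
        Real.exp (-(2 * π * τ / 3)) * (Real.exp (-(π * (3 : ℕ) * τ / 12)) * Real.exp (-(π * (2 : ℕ) * τ / 12))) := by
      rw [← Real.exp_nat_mul, ← Real.exp_add, ← Real.exp_add, ← Real.exp_add]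
      congr 1; push_cast; ring
    rw [hsum, ← hp]
    generalize Real.exp (-(2 * π * τ)) = q at p2 p3 ⊢
    push_cast at hexp ⊢
    generalize (∏' k : ℕ, (1 - (q ^ 3) ^ (k + 1))) = E3 at p3 ⊢
    generalize (∏' k : ℕ, (1 - (q ^ 2) ^ (k + 1))) = E2 at p2 ⊢
    generalize (∏' k : ℕ, (1 - (q ^ 6) ^ (k + 1))) = E6
    generalize (∏' k : ℕ, (1 - q ^ (k + 1))) = E1
    have x3 := Real.exp_pos (-(π * 3 * τ / 12))
    have x2 := Real.exp_pos (-(π * 2 * τ / 12))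
    generalize Real.exp (-(π * 3 * τ / 12)) = X3 at hexp x3 ⊢
    generalize Real.exp (-(π * 2 * τ / 12)) = X2 at hexp x2 ⊢
    generalize Real.exp (-(π * 6 * τ / 12)) = X6 at hexp ⊢
    generalize Real.exp (-(π * 1 * τ / 12)) = X1 at hexp ⊢
    generalize Real.exp (-(2 * π * τ / 3)) = Y at hexp ⊢
    generalize Real.exp (-(2 * π * x ^ 2 * τ / 3)) = Z
    field_simp
    linear_combination (Z * E1 * E6 ^ 2) * hexp
  rw [MeasureTheory.setIntegral_congr_fun measurableSet_Ioi key, integral_complex_ofReal,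
    MeasureTheory.integral_const_mul, tl_real_integral x hx, ← mul_div_assoc]
end

section
/- For every real q with 0 < q < 1, ∏_{n=1}^∞ (1 - q^{n/3})·(1 - q^{n/3} + q^{2n/3}) = ∑_{k∈ℤ} ( q^{6k²+k} + q^{6k²+5k+1} - 2 q^{6k²+3k+1/3} ). -/
open scoped Real

namespace TwoArm
open Filter Topology Finset

/-- `(x;x)_n`. -/
noncomputable def P (x : ℝ) (n : ℕ) : ℝ := ∏ i ∈ range n, (1 - x ^ (i + 1))

/-- The reciprocal of `(x;x)_k`, zero for negative `k`. -/
noncomputable def iP (x : ℝ) : ℤ → ℝ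
  | Int.ofNat n => (P x n)⁻¹
  | Int.negSucc _ => 0

/-- The coefficients `1, -2, 1, 1, -2, 1, ...`. -/
noncomputable def c (m : ℕ) : ℝ := if m % 3 = 1 then -2 else 1

noncomputable def b (x : ℝ) (m : ℤ) : ℝ := x ^ (m * (m + 1) / 2)

noncomputable def a (x : ℝ) (N : ℕ) (m : ℤ) : ℝ := b x m * iP x (N - m) * iP x (N + 1 + m)

noncomputable def g (x : ℝ) (m : ℕ) : ℝ := c m * b x m

lemma c_rec (m : ℕ) : c (m + 2) = - c (m + 1) - c m := by
  have h : m % 3 = 0 ∨ m % 3 = 1 ∨ m % 3 = 2 := by omega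
  unfold c
  rcases h with h | h | h
  · rw [if_neg (by omega), if_pos (by omega), if_neg (by omega)]; norm_num
  · rw [if_neg (by omega), if_neg (by omega), if_pos (by omega)]; norm_num
  · rw [if_pos (by omega), if_neg (by omega), if_neg (by omega)]; norm_num

lemma b_succ {x : ℝ} (hx : 0 < x) (m : ℤ) : b x (m + 1) = b x m * (x ^ m * x) := by
  unfold b
  rw [← zpow_add_one₀ hx.ne', ← zpow_add₀ hx.ne']
  congr 1
  have : (m + 1) * (m + 1 + 1) = m * (m + 1) + (m + 1) * 2 := by ring
  rw [this, Int.add_mul_ediv_right _ _ (by norm_num)]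

lemma pow_lt {x : ℝ} (hx : 0 < x) (h1 : x < 1) (i : ℕ) : x ^ (i + 1) < 1 :=
  pow_lt_one₀ hx.le h1 (by omega)

lemma P_pos {x : ℝ} (hx : 0 < x) (h1 : x < 1) (n : ℕ) : 0 < P x n :=
  prod_pos fun i _ => sub_pos.2 (pow_lt hx h1 i)

lemma P_succ (x : ℝ) (n : ℕ) : P x (n + 1) = P x n * (1 - x ^ (n + 1)) := prod_range_succ _ _

lemma P_anti {x : ℝ} (hx : 0 < x) (h1 : x < 1) : Antitone (P x) := by
  refine antitone_nat_of_succ_le fun n => ?_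
  rw [P_succ]
  have := P_pos hx h1 n
  have : 0 < x ^ (n + 1) := by positivity
  nlinarith

lemma iP_rec {x : ℝ} (hx : 0 < x) (h1 : x < 1) (k : ℤ) :
    iP x k = (1 - x ^ k * x) * iP x (k + 1) := by
  rcases k with n | n
  · have e : (Int.ofNat n + 1 : ℤ) = Int.ofNat (n + 1) := rfl
    rw [e]
    simp only [iP, P_succ]
    have := P_pos hx h1 n
    have h2 := sub_pos.2 (pow_lt hx h1 n)
    have e2 : x ^ (Int.ofNat n) * x = x ^ (n + 1) := by
      rw [pow_succ]; simp
    rw [e2]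
    field_simp
  · rcases n with _ | n
    · have e : (Int.negSucc 0 + 1 : ℤ) = Int.ofNat 0 := rfl
      rw [e]
      simp [iP, hx.ne']
    · have e : (Int.negSucc (n + 1) + 1 : ℤ) = Int.negSucc n := by omega
      rw [e]
      simp [iP]

lemma a_rec {x : ℝ} (hx : 0 < x) (h1 : x < 1) (N : ℕ) (m : ℤ) :
    (1 - x ^ (2 * N + 2)) * (1 - x ^ (2 * N + 3)) * a x (N + 1) m =
      (1 + (x ^ (N + 1)) ^ 2) * a x N m + x ^ (N + 1) * (a x N (m - 1) + a x N (m + 1)) := by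
  unfold a
  have u1 := iP_rec hx h1 (N - m)
  have u2 := iP_rec hx h1 (N - (m + 1))
  have v1 := iP_rec hx h1 (N + 1 + m)
  have v2 := iP_rec hx h1 (N + 1 + (m - 1))
  have b1 := b_succ hx m
  have b2 := b_succ hx (m - 1)
  rw [show (N : ℤ) - (m + 1) + 1 = N - m by ring, u1] at u2
  rw [show (N : ℤ) + 1 + (m - 1) + 1 = N + 1 + m by ring, v1] at v2
  rw [sub_add_cancel] at b2
  rw [show ((N + 1 : ℕ) : ℤ) - m = N - m + 1 by push_cast; ring,
    show ((N + 1 : ℕ) : ℤ) + 1 + m = N + 1 + m + 1 by push_cast; ring,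
    show (N : ℤ) - (m - 1) = N - m + 1 by ring,
    show (N : ℤ) + 1 + (m + 1) = N + 1 + m + 1 by ring,
    u2, v2, u1, v1, b1, b2]
  have hx' := hx.ne'
  generalize iP x (N - m + 1) = u
  generalize iP x (N + 1 + m + 1) = v
  generalize b x (m - 1) = B
  have e1 : x ^ ((N : ℤ) - m) = x ^ N / x ^ m := by rw [zpow_sub₀ hx']; simp
  have e2 : x ^ ((N : ℤ) - (m + 1)) = x ^ N / (x ^ m * x) := by
    rw [zpow_sub₀ hx', zpow_add_one₀ hx']; simp
  have e3 : x ^ ((N : ℤ) + 1 + m) = x ^ N * x * x ^ m := by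
    rw [zpow_add₀ hx', zpow_add_one₀ hx']; simp
  have e4 : x ^ ((N : ℤ) + 1 + (m - 1)) = x ^ N * x ^ m := by
    rw [show (N : ℤ) + 1 + (m - 1) = N + m by ring, zpow_add₀ hx']; simp
  have e5 : x ^ (m - 1) = x ^ m / x := by rw [zpow_sub_one₀ hx']; rfl
  rw [e1, e2, e3, e4, e5, show x ^ (2 * N + 2) = (x ^ N) ^ 2 * x ^ 2 by ring,
    show x ^ (2 * N + 3) = (x ^ N) ^ 2 * x ^ 3 by ring, pow_succ x N]
  have hy : x ^ m ≠ 0 := zpow_ne_zero _ hx'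
  generalize x ^ m = y at *
  generalize x ^ N = A
  field_simp
  ring

lemma a_neg_one (x : ℝ) (N : ℕ) : a x N (-1) = a x N 0 := by
  simp [a, b, mul_comm]

lemma iP_neg (x : ℝ) {k : ℤ} (hk : k < 0) : iP x k = 0 := by
  rcases k with n | n
  · have : (0 : ℤ) ≤ Int.ofNat n := Int.natCast_nonneg n
    omega
  · rfl

lemma a_zero (x : ℝ) (N m : ℕ) (h : N < m) : a x N m = 0 := by
  simp [a, iP_neg x (show (N : ℤ) - m < 0 by omega)]

lemma tele (x X : ℝ) (N M : ℕ) :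
    ∑ m ∈ range (M + 1), c m * ((1 + X ^ 2) * a x N m + X * (a x N (m - 1) + a x N (m + 1))) =
      (1 - X + X ^ 2) * ∑ m ∈ range (M + 1), c m * a x N m
        + X * (c M * a x N (M + 1) - c (M + 1) * a x N M) := by
  induction M with
  | zero => simp [a_neg_one]; simp [c]; ring
  | succ M ih =>
    rw [sum_range_succ, ih, sum_range_succ _ (M + 1), c_rec M]
    push_cast
    rw [add_sub_cancel_right]
    ring

lemma finite_id {x : ℝ} (hx : 0 < x) (h1 : x < 1) (N : ℕ) :
    ∏ n ∈ range N, (1 - x ^ (n + 1) + (x ^ (n + 1)) ^ 2) =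
      P x (2 * N + 1) * ∑ m ∈ range (N + 1), c m * a x N m := by
  induction N with
  | zero =>
    have := P_pos hx h1 1
    have e : iP x 1 = (P x 1)⁻¹ := rfl
    have e0 : iP x 0 = (P x 0)⁻¹ := rfl
    have e1 : P x 0 = 1 := by simp [P]
    simp [c, a, b, e, e0, e1]
    field_simp
  | succ N ih =>
    rw [prod_range_succ, ih, show 2 * (N + 1) + 1 = 2 * N + 1 + 1 + 1 by ring,
      P_succ x (2 * N + 1 + 1), P_succ x (2 * N + 1)]
    have t := tele x (x ^ (N + 1)) N (N + 1)
    have z1 := a_zero x N (N + 1) (by omega)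
    have z2 := a_zero x N (N + 2) (by omega)
    rw [sum_range_succ (fun m : ℕ => c m * a x N m)] at t
    push_cast at z1 z2 t
    rw [show (N : ℤ) + 1 + 1 = N + 2 by ring, z1, z2] at t
    simp only [← a_rec hx h1] at t
    have : ∑ m ∈ range (N + 1 + 1), c m *
        ((1 - x ^ (2 * N + 2)) * (1 - x ^ (2 * N + 3)) * a x (N + 1) m) =
        (1 - x ^ (2 * N + 2)) * (1 - x ^ (2 * N + 3)) *
          ∑ m ∈ range (N + 1 + 1), c m * a x (N + 1) m := by
      rw [mul_sum]
      exact sum_congr rfl fun _ _ => by ring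
    rw [this] at t
    rw [show 2 * N + 1 + 1 + 1 = 2 * N + 3 by ring, show 2 * N + 1 + 1 = 2 * N + 2 by ring]
    linear_combination (-P x (2 * N + 1)) * t

lemma b_nat_pos {x : ℝ} (hx : 0 < x) (m : ℤ) : 0 < b x m := zpow_pos hx _

lemma b_le {x : ℝ} (hx : 0 < x) (h1 : x < 1) (m : ℕ) : b x m ≤ x ^ m := by
  induction m with
  | zero => simp [b]
  | succ m ih =>
    push_cast
    rw [b_succ hx, pow_succ, zpow_natCast]
    have h0 : 0 < b x m := b_nat_pos hx _
    have hm : x ^ m ≤ 1 := pow_le_one₀ hx.le h1.le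
    have hm0 : 0 < x ^ m := by positivity
    calc b x m * (x ^ m * x) ≤ 1 * (x ^ m * x) := by
          gcongr
          exact ih.trans hm
      _ = _ := by ring

lemma c_abs (m : ℕ) : |c m| ≤ 2 := by
  unfold c; split_ifs <;> norm_num

lemma g_abs {x : ℝ} (hx : 0 < x) (h1 : x < 1) (m : ℕ) : |g x m| ≤ 2 * x ^ m := by
  rw [g, abs_mul, abs_of_pos (b_nat_pos hx _)]
  have := c_abs m
  have := b_le hx h1 m
  have := b_nat_pos hx m
  gcongr

lemma bound_summable {x : ℝ} (hx : 0 < x) (h1 : x < 1) : Summable fun m : ℕ => 2 * x ^ m :=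
  (summable_geometric_of_lt_one hx.le h1).mul_left 2

lemma g_summable {x : ℝ} (hx : 0 < x) (h1 : x < 1) : Summable (g x) :=
  (bound_summable hx h1).of_norm_bounded (g_abs hx h1)

lemma summ1 {x : ℝ} (hx : 0 < x) (h1 : x < 1) : Summable fun n : ℕ => x ^ (n + 1) :=
  (summable_nat_add_iff 1).2 (summable_geometric_of_lt_one hx.le h1)

lemma mult1 {x : ℝ} (hx : 0 < x) (h1 : x < 1) : Multipliable fun n : ℕ => 1 - x ^ (n + 1) := by
  simpa [sub_eq_add_neg] using Real.multipliable_one_add_of_summable (summ1 hx h1).neg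

lemma mult2 {x : ℝ} (hx : 0 < x) (h1 : x < 1) :
    Multipliable fun n : ℕ => 1 - x ^ (n + 1) + (x ^ (n + 1)) ^ 2 := by
  have h2 : Summable fun n : ℕ => (x ^ (n + 1)) ^ 2 := by
    refine (summ1 hx h1).of_nonneg_of_le (fun n => by positivity) fun n => ?_
    have := pow_lt hx h1 n
    have : 0 < x ^ (n + 1) := by positivity
    nlinarith
  have := Real.multipliable_one_add_of_summable ((summ1 hx h1).neg.add h2)
  refine this.congr fun n => ?_
  ring

lemma P_lim {x : ℝ} (hx : 0 < x) (h1 : x < 1) :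
    ∃ L : ℝ, L ≠ 0 ∧ Tendsto (P x) atTop (𝓝 L) := by
  refine ⟨_, ?_, (mult1 hx h1).hasProd.tendsto_prod_nat⟩
  have := tprod_one_add_ne_zero_of_summable (f := fun n : ℕ => - x ^ (n + 1)) (fun i => by
    have := pow_lt hx h1 i
    have : 0 < 1 + - x ^ (i + 1) := by linarith
    exact this.ne') ((summ1 hx h1).neg.norm)
  simpa [sub_eq_add_neg] using this

lemma prod_lim {x : ℝ} (hx : 0 < x) (h1 : x < 1) :
    ∏' n : ℕ, ((1 - x ^ (n + 1)) * (1 - x ^ (n + 1) + (x ^ (n + 1)) ^ 2)) = ∑' m, g x m := by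
  have hl := ((mult1 hx h1).mul (mult2 hx h1)).hasProd.tendsto_prod_nat
  refine tendsto_nhds_unique hl ?_
  obtain ⟨L, hL, hP⟩ := P_lim hx h1
  let f : ℕ → ℕ → ℝ := fun N m => if m ≤ N then
    g x m * ((P x N / P x (N - m)) * (P x (2 * N + 1) / P x (N + 1 + m))) else 0
  have key : ∀ N : ℕ, ∏ n ∈ range N,
      ((1 - x ^ (n + 1)) * (1 - x ^ (n + 1) + (x ^ (n + 1)) ^ 2)) = ∑' m, f N m := by
    intro N
    rw [prod_mul_distrib, finite_id hx h1, tsum_eq_sum (s := range (N + 1))]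
    · rw [← mul_assoc, mul_sum]
      refine sum_congr rfl fun m hm => ?_
      have hm' : m ≤ N := by simpa [Nat.lt_succ_iff] using hm
      simp only [f, if_pos hm', a, g]
      have e1 : ((N : ℤ) - m) = Int.ofNat (N - m) := by
        simp [Nat.cast_sub hm']
      have e2 : ((N : ℤ) + 1 + m) = Int.ofNat (N + 1 + m) := by simp
      rw [e1, e2]
      simp only [iP]
      change P x N * _ * _ = _
      ring
    · intro m hm
      have : ¬ m ≤ N := by simpa [Nat.lt_succ_iff] using hm
      simp [f, this]
  simp only [key]
  refine tendsto_tsum_of_dominated_convergence (bound_summable hx h1) ?_ ?_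
  · intro m
    have t1 : Tendsto (fun N => P x N / P x (N - m)) atTop (𝓝 1) := by
      have := hP.div (hP.comp (tendsto_sub_atTop_nat m)) hL
      rwa [div_self hL] at this
    have t2 : Tendsto (fun N => P x (2 * N + 1) / P x (N + 1 + m)) atTop (𝓝 1) := by
      have s1 : Tendsto (fun N : ℕ => 2 * N + 1) atTop atTop :=
        tendsto_atTop_mono (fun n => by simp only [id]; omega) tendsto_id
      have s2 : Tendsto (fun N : ℕ => N + 1 + m) atTop atTop :=
        tendsto_atTop_mono (fun n => by simp only [id]; omega) tendsto_id
      have := (hP.comp s1).div (hP.comp s2) hL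
      rwa [div_self hL] at this
    have t3 := (t1.mul t2).const_mul (g x m)
    rw [mul_one, mul_one] at t3
    refine t3.congr' ?_
    filter_upwards [eventually_ge_atTop m] with N hN
    simp [f, hN]
  · refine Eventually.of_forall fun N m => ?_
    by_cases h : m ≤ N
    · simp only [f, if_pos h, Real.norm_eq_abs]
      rw [abs_mul]
      have p := P_pos hx h1
      have q1 : P x N / P x (N - m) ≤ 1 := (div_le_one (p _)).2 (P_anti hx h1 (by omega))
      have q2 : P x (2 * N + 1) / P x (N + 1 + m) ≤ 1 :=
        (div_le_one (p _)).2 (P_anti hx h1 (by omega))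
      have r1 : 0 < P x N / P x (N - m) := div_pos (p _) (p _)
      have r2 : 0 < P x (2 * N + 1) / P x (N + 1 + m) := div_pos (p _) (p _)
      rw [abs_of_pos (mul_pos r1 r2)]
      have := mul_le_one₀ q1 r2.le q2
      calc _ ≤ |g x m| * 1 := by gcongr
        _ ≤ _ := by rw [mul_one]; exact g_abs hx h1 m
    · simp only [f, if_neg h, norm_zero]
      positivity

noncomputable def B (x : ℝ) (j : ℕ) : ℝ := g x (3 * j) + g x (3 * j + 1) + g x (3 * j + 2)

lemma B_summable {x : ℝ} (hx : 0 < x) (h1 : x < 1) : Summable (B x) := by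
  have h := g_summable hx h1
  exact ((h.comp_injective (i := fun j => 3 * j) fun _ _ h => by simpa using h).add
    (h.comp_injective (i := fun j => 3 * j + 1) fun _ _ h => by simpa using h)).add
    (h.comp_injective (i := fun j => 3 * j + 2) fun _ _ h => by simpa using h)

lemma B_tsum {x : ℝ} (hx : 0 < x) (h1 : x < 1) : ∑' j, B x j = ∑' m, g x m := by
  have l1 := (B_summable hx h1).hasSum.tendsto_sum_nat
  have l2 := (g_summable hx h1).hasSum.tendsto_sum_nat
  have s : Tendsto (fun N : ℕ => 3 * N) atTop atTop :=
    tendsto_atTop_mono (fun n => by simp only [id]; omega) tendsto_id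
  refine tendsto_nhds_unique l1 ((l2.comp s).congr fun N => ?_)
  simp only [Function.comp]
  induction N with
  | zero => simp
  | succ N ih =>
    rw [show 3 * (N + 1) = 3 * N + 1 + 1 + 1 by ring, sum_range_succ, sum_range_succ,
      sum_range_succ, ih, sum_range_succ, B]
    ring

lemma b_rpow {q : ℝ} (hq : 0 < q) (m : ℕ) :
    b (q ^ (1 / 3 : ℝ)) m = q ^ ((m : ℝ) * (m + 1) / 6) := by
  unfold b
  rw [← Real.rpow_intCast, ← Real.rpow_mul hq.le]
  congr 1
  have h : (2 : ℤ) ∣ (m : ℤ) * (m + 1) := (Int.even_mul_succ_self m).two_dvd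
  rw [Int.cast_div h (by norm_num)]
  push_cast
  ring

lemma B_eq {q : ℝ} (hq : 0 < q) (j : ℕ) : B (q ^ (1 / 3 : ℝ)) j =
    q ^ ((3 * j : ℝ) * (3 * j + 1) / 6) - 2 * q ^ ((3 * j + 1 : ℝ) * (3 * j + 2) / 6)
      + q ^ ((3 * j + 2 : ℝ) * (3 * j + 3) / 6) := by
  unfold B g
  rw [b_rpow hq, b_rpow hq, b_rpow hq]
  unfold c
  rw [if_neg (by omega), if_pos (by omega), if_neg (by omega)]
  push_cast
  rw [show (3 * j + 1 + 1 : ℝ) = 3 * j + 2 by ring, show (3 * j + 2 + 1 : ℝ) = 3 * j + 3 by ring]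
  ring

end TwoArm

open TwoArm in
theorem prod_eq_sum_two_arm (q : ℝ) (hq0 : 0 < q) (hq1 : q < 1) :
    (∏' n : ℕ, ((1 - q ^ (((n : ℝ) + 1) / 3)) *
        (1 - q ^ (((n : ℝ) + 1) / 3) + q ^ (2 * ((n : ℝ) + 1) / 3)))) =
      ∑' k : ℤ, (q ^ (6 * (k : ℝ) ^ 2 + (k : ℝ)) +
        q ^ (6 * (k : ℝ) ^ 2 + 5 * (k : ℝ) + 1) -
        2 * q ^ (6 * (k : ℝ) ^ 2 + 3 * (k : ℝ) + 1 / 3)) := by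
  have hx : 0 < q ^ (1 / 3 : ℝ) := Real.rpow_pos_of_pos hq0 _
  have h1 : q ^ (1 / 3 : ℝ) < 1 := Real.rpow_lt_one hq0.le hq1 (by norm_num)
  have hB := B_summable hx h1
  have he : Summable fun n : ℕ => B (q ^ (1 / 3 : ℝ)) (2 * n) :=
    hB.comp_injective (i := fun n => 2 * n) fun _ _ h => by simpa using h
  have ho : Summable fun n : ℕ => B (q ^ (1 / 3 : ℝ)) (2 * n + 1) :=
    hB.comp_injective (i := fun n => 2 * n + 1) fun _ _ h => by simpa using h
  have lhs : ∀ n : ℕ, ((1 - q ^ (((n : ℝ) + 1) / 3)) *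
        (1 - q ^ (((n : ℝ) + 1) / 3) + q ^ (2 * ((n : ℝ) + 1) / 3))) =
      ((1 - (q ^ (1 / 3 : ℝ)) ^ (n + 1)) *
        (1 - (q ^ (1 / 3 : ℝ)) ^ (n + 1) + ((q ^ (1 / 3 : ℝ)) ^ (n + 1)) ^ 2)) := by
    intro n
    have e1 : q ^ (((n : ℝ) + 1) / 3) = (q ^ (1 / 3 : ℝ)) ^ (n + 1) := by
      rw [← Real.rpow_mul_natCast hq0.le]
      congr 1
      push_cast
      ring
    have e2 : q ^ (2 * ((n : ℝ) + 1) / 3) = ((q ^ (1 / 3 : ℝ)) ^ (n + 1)) ^ 2 := by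
      rw [← e1, ← Real.rpow_mul_natCast hq0.le]
      congr 1
      push_cast
      ring
    rw [e1, e2]
  rw [tprod_congr lhs, prod_lim hx h1, ← B_tsum hx h1, ← tsum_even_add_odd he ho]
  symm
  have r1 : ∀ n : ℕ, B (q ^ (1 / 3 : ℝ)) (2 * n) = (q ^ (6 * ((n : ℤ) : ℝ) ^ 2 + ((n : ℤ) : ℝ)) +
        q ^ (6 * ((n : ℤ) : ℝ) ^ 2 + 5 * ((n : ℤ) : ℝ) + 1) -
        2 * q ^ (6 * ((n : ℤ) : ℝ) ^ 2 + 3 * ((n : ℤ) : ℝ) + 1 / 3)) := by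
    intro n
    rw [B_eq hq0, sub_add_eq_add_sub]
    push_cast
    congr 3 <;> (try congr 1) <;> ring
  have r2 : ∀ n : ℕ, B (q ^ (1 / 3 : ℝ)) (2 * n + 1) =
        (q ^ (6 * ((-(n + 1) : ℤ) : ℝ) ^ 2 + ((-(n + 1) : ℤ) : ℝ)) +
        q ^ (6 * ((-(n + 1) : ℤ) : ℝ) ^ 2 + 5 * ((-(n + 1) : ℤ) : ℝ) + 1) -
        2 * q ^ (6 * ((-(n + 1) : ℤ) : ℝ) ^ 2 + 3 * ((-(n + 1) : ℤ) : ℝ) + 1 / 3)) := by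
    intro n
    rw [B_eq hq0, sub_add_eq_add_sub, add_comm (q ^ _) (q ^ _)]
    push_cast
    congr 3 <;> (try congr 1) <;> ring
  rw [tsum_congr r1, tsum_congr r2]
  exact tsum_of_nat_of_neg_add_one (he.congr r1) (ho.congr r2)
end
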